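/- Let Ω be a bounded C² domain, let F satisfy (F1)–(F4) and let b, c be continuous on Ω̄. If λ < λ̄ and u ∈ USC(Ω̄) is a viscosity subsolution of G(x,u,Du,D²u) + λ|u|^α u = 0 in Ω with the Neumann condition ⟨Du, n(x)⟩ = 0 on ∂Ω, then u ≤ 0 in Ω̄. -/

import Mathlib

/-!
The proof is the touching argument of Berestycki, Nirenberg and Varadhan. Suppose `u` is positive
somewhere, pick `λ' > λ` with a positive bounded supersolution `v`, and let `τ` be the smallest
number with `u ≤ τ v`; then `u` and `τ v` touch (`exists_touching_multiple`). With `u₁ = u` and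
`u₂ = -τ v`, the doubling lemma `doubling` produces a contact point `z` at which the zeroth order
terms satisfy `(c + λ) (τ v)^(α+1) - (c + λ') (τ v)^(α+1) ≥ 0`, contradicting `λ < λ'`. The set
defining `λ̄` is nonempty because constants are supersolutions for very negative `λ`.

The doubling lemma maximises `u₁ x + u₂ y - (1 + σ x + σ y) k |x - y|^(2n)`, where `σ` is built from
the defining function of `Ω` so that the gradients of the penalty point strictly outwards at
boundary points (`IsBarrier`); the boundary condition then never interferes, and both equations are
available. Three ingredients are needed.

* `theorem_on_sums`: the maximum principle for semicontinuous functions, proved from scratch. The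
  two functions are regularised by a sup-convolution followed by an inf-convolution, which gives
  `C^{1,1}` functions; Rademacher's theorem and the nullity of Lipschitz images of null sets replace
  Alexandrov's theorem and Jensen's lemma.
* `key_ineq`: uniform ellipticity and the Hölder conditions with exponents larger than `1/2` bound
  the second order terms by `r^β g₁ |p|^α` with `β > 1`, where `r = |x - y|`, minus a multiple of the
  concavity of the profile `g` of the penalty. Applied to a strictly concave profile this gives the
  Lipschitz estimate `u₁ x + u₂ y ≤ L |x - y|` (`lipschitz_est`); the latter bounds the gradients in
  the doubling argument, so that the error terms vanish as `k → ∞`.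
* `diagonal_ineq`: if the maximum is attained on the diagonal, the gradient of the penalty vanishes
  and the definition of viscosity solutions gives no information directly. Then either the penalty
  can be shifted so as to touch off the diagonal, with errors of order `r^((2n-1)(α+1)-1)`, or the
  function is locally constant; both give the sign of the zeroth order term.
-/

open Filter Set Metric
open scoped RealInnerProductSpace Topology NNReal

noncomputable section

/-- Euclidean space `ℝ^N`. -/
abbrev EN (N : ℕ) := EuclideanSpace ℝ (Fin N)

/-- The space of `N × N` real matrices. -/
abbrev Mat (N : ℕ) := Matrix (Fin N) (Fin N) ℝ

/-- Operator (spectral) norm of a matrix, viewed as a linear map on Euclidean space. -/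
noncomputable def matNorm {N : ℕ} (X : Mat N) : ℝ :=
  ‖LinearMap.toContinuousLinearMap (Matrix.toEuclideanLin X)‖

/-- The Hessian matrix of `φ : ℝ^N → ℝ` at `x`. -/
noncomputable def hess {N : ℕ} (φ : EN N → ℝ) (x : EN N) : Mat N :=
  Matrix.of fun i j =>
    iteratedFDeriv ℝ 2 φ x ![EuclideanSpace.single i 1, EuclideanSpace.single j 1]

/-- `ρ` is a `C²` defining function for the domain `Ω` with exterior unit normal `nv`. -/
def IsC2DefiningFun {N : ℕ} (Ω : Set (EN N)) (nv : EN N → EN N) (ρ : EN N → ℝ) : Prop :=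
  ContDiff ℝ 2 ρ ∧ Ω = {x | ρ x < 0} ∧ frontier Ω = {x | ρ x = 0} ∧
    ∀ x ∈ frontier Ω, gradient ρ x ≠ 0 ∧ nv x = ‖gradient ρ x‖⁻¹ • gradient ρ x

/-- `Ω` is a bounded domain of class `C²` with exterior unit normal `nv` on `∂Ω`. -/
def IsC2Domain {N : ℕ} (Ω : Set (EN N)) (nv : EN N → EN N) : Prop :=
  IsOpen Ω ∧ IsConnected Ω ∧ Bornology.IsBounded Ω ∧ ∃ ρ : EN N → ℝ, IsC2DefiningFun Ω nv ρ

/-- `Ω` is a bounded domain of class `C¹` with exterior unit normal `nv` on `∂Ω`. -/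
def IsC1Domain {N : ℕ} (Ω : Set (EN N)) (nv : EN N → EN N) : Prop :=
  IsOpen Ω ∧ IsConnected Ω ∧ Bornology.IsBounded Ω ∧
    ∃ ρ : EN N → ℝ, ContDiff ℝ 1 ρ ∧ Ω = {x | ρ x < 0} ∧ frontier Ω = {x | ρ x = 0} ∧
      ∀ x ∈ frontier Ω, gradient ρ x ≠ 0 ∧ nv x = ‖gradient ρ x‖⁻¹ • gradient ρ x

/-- Interior sphere condition (Ω1). -/
def InteriorSphereCond {N : ℕ} (Ω : Set (EN N)) : Prop :=
  ∀ x ∈ frontier Ω, ∃ R > (0 : ℝ), ∃ y ∈ Ω, ‖x - y‖ = R ∧ Metric.ball y R ⊆ Ω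

/-- (F1): homogeneity of `F`. -/
def CondF1 {N : ℕ} (Ω : Set (EN N)) (α : ℝ) (F : EN N → EN N → Mat N → ℝ) : Prop :=
  ∀ x ∈ closure Ω, ∀ t : ℝ, t ≠ 0 → ∀ μ : ℝ, 0 ≤ μ → ∀ p : EN N, p ≠ 0 → ∀ X : Mat N,
    X.IsSymm → F x (t • p) (μ • X) = |t| ^ α * μ * F x p X

/-- (F2): uniform ellipticity of `F` with ellipticity constants `0 < a ≤ A`. -/
def CondF2 {N : ℕ} (Ω : Set (EN N)) (α a A : ℝ) (F : EN N → EN N → Mat N → ℝ) : Prop :=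
  0 < a ∧ a ≤ A ∧ ∀ x ∈ closure Ω, ∀ p : EN N, p ≠ 0 → ∀ M P : Mat N, M.IsSymm →
    P.PosSemidef →
      a * ‖p‖ ^ α * P.trace ≤ F x p (M + P) - F x p M ∧
      F x p (M + P) - F x p M ≤ A * ‖p‖ ^ α * P.trace

/-- (F3): Hölder continuity of `F` in the `x` variable. -/
def CondF3 {N : ℕ} (Ω : Set (EN N)) (α C₁ θ : ℝ) (F : EN N → EN N → Mat N → ℝ) : Prop :=
  0 < C₁ ∧ θ ∈ Set.Ioc (1/2 : ℝ) 1 ∧ ∀ x ∈ closure Ω, ∀ y ∈ closure Ω, ∀ p : EN N, p ≠ 0 →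
    ∀ X : Mat N, X.IsSymm → |F x p X - F y p X| ≤ C₁ * ‖x - y‖ ^ θ * ‖p‖ ^ α * matNorm X

/-- (F4): Hölder continuity of `F` in the gradient variable. -/
def CondF4 {N : ℕ} (Ω : Set (EN N)) (α C₂ ν : ℝ) (F : EN N → EN N → Mat N → ℝ) : Prop :=
  0 < C₂ ∧ ν ∈ Set.Ioc (1/2 : ℝ) 1 ∧ ∀ x ∈ closure Ω, ∀ p : EN N, p ≠ 0 → ∀ q : EN N,
    ‖q‖ ≤ ‖p‖ / 2 → ∀ X : Mat N, X.IsSymm →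
      |F x (p + q) X - F x p X| ≤ C₂ * ‖p‖ ^ (α - ν) * ‖q‖ ^ ν * matNorm X

/-- The Neumann boundary operator `B(x,r,p) = ⟨p, n(x)⟩`. -/
def BNeu {N : ℕ} (nv : EN N → EN N) : EN N → ℝ → EN N → ℝ := fun x _ p => ⟪p, nv x⟫

/-- Viscosity subsolution of
`F(x,Du,D²u) + b(x)·Du |Du|^α + c₀(x, u) = g(x)` in `Ω`, `B(x,u,Du) = 0` on `∂Ω`. -/
def IsSubSol {N : ℕ} (Ω : Set (EN N)) (F : EN N → EN N → Mat N → ℝ) (b : EN N → EN N)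
    (α : ℝ) (c₀ : EN N → ℝ → ℝ) (g : EN N → ℝ) (B : EN N → ℝ → EN N → ℝ)
    (u : EN N → ℝ) : Prop :=
  (∀ x₀ ∈ Ω, ∀ φ : EN N → ℝ, ContDiff ℝ 2 φ →
      IsLocalMaxOn (fun x => u x - φ x) (closure Ω) x₀ → gradient φ x₀ ≠ 0 →
      g x₀ ≤ F x₀ (gradient φ x₀) (hess φ x₀)
        + ⟪b x₀, gradient φ x₀⟫ * ‖gradient φ x₀‖ ^ α + c₀ x₀ (u x₀)) ∧
  (∀ x₀ ∈ Ω, ∀ k : ℝ, (∀ᶠ x in nhdsWithin x₀ (closure Ω), u x = k) → g x₀ ≤ c₀ x₀ k) ∧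
  (∀ x₀ ∈ frontier Ω, ∀ φ : EN N → ℝ, ContDiff ℝ 2 φ →
      IsLocalMaxOn (fun x => u x - φ x) (closure Ω) x₀ → gradient φ x₀ ≠ 0 →
      min (g x₀ - (F x₀ (gradient φ x₀) (hess φ x₀)
          + ⟪b x₀, gradient φ x₀⟫ * ‖gradient φ x₀‖ ^ α + c₀ x₀ (u x₀)))
        (B x₀ (u x₀) (gradient φ x₀)) ≤ 0) ∧
  (∀ x₀ ∈ frontier Ω, ∀ k : ℝ, (∀ᶠ x in nhdsWithin x₀ (closure Ω), u x = k) →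
      min (g x₀ - c₀ x₀ k) (B x₀ k 0) ≤ 0)

/-- Viscosity supersolution of
`F(x,Dv,D²v) + b(x)·Dv |Dv|^α + c₀(x, v) = g(x)` in `Ω`, `B(x,v,Dv) = 0` on `∂Ω`. -/
def IsSuperSol {N : ℕ} (Ω : Set (EN N)) (F : EN N → EN N → Mat N → ℝ) (b : EN N → EN N)
    (α : ℝ) (c₀ : EN N → ℝ → ℝ) (g : EN N → ℝ) (B : EN N → ℝ → EN N → ℝ)
    (v : EN N → ℝ) : Prop :=
  (∀ x₀ ∈ Ω, ∀ φ : EN N → ℝ, ContDiff ℝ 2 φ →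
      IsLocalMinOn (fun x => v x - φ x) (closure Ω) x₀ → gradient φ x₀ ≠ 0 →
      F x₀ (gradient φ x₀) (hess φ x₀)
        + ⟪b x₀, gradient φ x₀⟫ * ‖gradient φ x₀‖ ^ α + c₀ x₀ (v x₀) ≤ g x₀) ∧
  (∀ x₀ ∈ Ω, ∀ k : ℝ, (∀ᶠ x in nhdsWithin x₀ (closure Ω), v x = k) → c₀ x₀ k ≤ g x₀) ∧
  (∀ x₀ ∈ frontier Ω, ∀ φ : EN N → ℝ, ContDiff ℝ 2 φ →
      IsLocalMinOn (fun x => v x - φ x) (closure Ω) x₀ → gradient φ x₀ ≠ 0 →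
      0 ≤ max (g x₀ - (F x₀ (gradient φ x₀) (hess φ x₀)
          + ⟪b x₀, gradient φ x₀⟫ * ‖gradient φ x₀‖ ^ α + c₀ x₀ (v x₀)))
        (B x₀ (v x₀) (gradient φ x₀))) ∧
  (∀ x₀ ∈ frontier Ω, ∀ k : ℝ, (∀ᶠ x in nhdsWithin x₀ (closure Ω), v x = k) →
      0 ≤ max (g x₀ - c₀ x₀ k) (B x₀ k 0))

/-- The admissible set for the principal eigenvalue `λ̄`:
all `λ` such that there is a bounded positive supersolution of
`G(x,v,Dv,D²v) + λ v^{α+1} ≤ 0` in `Ω`, `⟨Dv, n⟩ ≥ 0` on `∂Ω`. -/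
def lamBarSet {N : ℕ} (Ω : Set (EN N)) (nv : EN N → EN N) (F : EN N → EN N → Mat N → ℝ)
    (b : EN N → EN N) (c : EN N → ℝ) (α : ℝ) : Set ℝ :=
  {lam | ∃ v : EN N → ℝ, LowerSemicontinuousOn v (closure Ω) ∧
    (∀ x ∈ closure Ω, 0 < v x) ∧ (∃ M, ∀ x ∈ closure Ω, v x ≤ M) ∧
    IsSuperSol Ω F b α (fun x r => (c x + lam) * |r| ^ α * r) (fun _ => 0) (BNeu nv) v}

/-- The admissible set for the principal eigenvalue `λ̲`:
all `λ` such that there is a bounded negative subsolution of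
`G(x,u,Du,D²u) + λ |u|^α u ≥ 0` in `Ω`, `⟨Du, n⟩ ≤ 0` on `∂Ω`. -/
def lamLowSet {N : ℕ} (Ω : Set (EN N)) (nv : EN N → EN N) (F : EN N → EN N → Mat N → ℝ)
    (b : EN N → EN N) (c : EN N → ℝ) (α : ℝ) : Set ℝ :=
  {lam | ∃ u : EN N → ℝ, UpperSemicontinuousOn u (closure Ω) ∧
    (∀ x ∈ closure Ω, u x < 0) ∧ (∃ M, ∀ x ∈ closure Ω, M ≤ u x) ∧
    IsSubSol Ω F b α (fun x r => (c x + lam) * |r| ^ α * r) (fun _ => 0) (BNeu nv) u}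

/-! ### Regularisation by sup- and inf-convolution -/

section Convolution

variable {V : Type*} [NormedAddCommGroup V] [InnerProductSpace ℝ V]

lemma norm_sub_segment_sq (x y y' : V) (t : ℝ) :
    ‖x - (y + t • (y' - y))‖ ^ 2 = (1 - t) * ‖x - y‖ ^ 2 + t * ‖x - y'‖ ^ 2
      - t * (1 - t) * ‖y' - y‖ ^ 2 := by
  have e1 : x - (y + t • (y' - y)) = (x - y) - t • (y' - y) := by abel
  have e2 : ‖x - y'‖ ^ 2 = ‖(x - y) - (y' - y)‖ ^ 2 := by congr 2; abel
  rw [e1, e2, norm_sub_sq_real (x - y) (y' - y), norm_sub_sq_real (x - y) (t • (y' - y)),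
    inner_smul_right, norm_smul, mul_pow, Real.norm_eq_abs, sq_abs]
  ring

/-- Sup-convolution: `f y = max_{x ∈ K} (U x - k ‖x - y‖²)` is lower semicontinuous and
semiconvex. -/
lemma exists_supConv {K : Set V} (hK : IsCompact K) (hne : K.Nonempty) {U : V → ℝ}
    (hU : UpperSemicontinuousOn U K) (k : ℝ) :
    ∃ f : V → ℝ, (∀ y, ∀ x ∈ K, U x - k * ‖x - y‖ ^ 2 ≤ f y) ∧
      (∀ y, ∃ x ∈ K, f y = U x - k * ‖x - y‖ ^ 2) ∧
      (∀ y y' : V, ∀ t : ℝ, 0 ≤ t → t ≤ 1 →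
        f (y + t • (y' - y)) ≤ (1 - t) * f y + t * f y' + k * (t * (1 - t)) * ‖y' - y‖ ^ 2) ∧
      LowerSemicontinuous f := by
  have hex : ∀ y : V, ∃ x ∈ K, ∀ x' ∈ K,
      U x' - k * ‖x' - y‖ ^ 2 ≤ U x - k * ‖x - y‖ ^ 2 := by
    intro y
    have h1 : UpperSemicontinuousOn (fun x => U x + (- (k * ‖x - y‖ ^ 2))) K := by
      refine hU.add ((Continuous.upperSemicontinuous ?_).upperSemicontinuousOn K)
      fun_prop
    obtain ⟨x, hx, hm⟩ := h1.exists_isMaxOn hne hK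
    refine ⟨x, hx, fun x' hx' => ?_⟩
    have := hm hx'
    simp only [mem_ofPred_eq] at this
    linarith
  choose X hXK hX using hex
  refine ⟨fun y => U (X y) - k * ‖X y - y‖ ^ 2, fun y x hx => hX y x hx,
    fun y => ⟨X y, hXK y, rfl⟩, ?_, ?_⟩
  · intro y y' t ht0 ht1
    set z := y + t • (y' - y) with hz
    have h1 := hX y (X z) (hXK z)
    have h2 := hX y' (X z) (hXK z)
    have key := norm_sub_segment_sq (X z) y y' t
    rw [← hz] at key
    dsimp only
    rw [key]
    nlinarith [mul_le_mul_of_nonneg_left h1 (sub_nonneg.2 ht1), mul_le_mul_of_nonneg_left h2 ht0]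
  · intro y c hc
    have hcont : Continuous fun y' : V => U (X y) - k * ‖X y - y'‖ ^ 2 := by fun_prop
    filter_upwards [hcont.continuousAt.eventually_const_lt hc] with y' hy'
    exact lt_of_lt_of_le hy' (hX y' _ (hXK y))

/-- Inf-convolution of a semiconvex function: the point `Y z` minimises
`y ↦ f y + 2 k ‖z - y‖²`, with a quadratic gap coming from strong convexity. -/
lemma exists_prox [FiniteDimensional ℝ V] {f : V → ℝ} {k A : ℝ} (hk : 0 < k)
    (hconv : ∀ y y' : V, ∀ t : ℝ, 0 ≤ t → t ≤ 1 →
        f (y + t • (y' - y)) ≤ (1 - t) * f y + t * f y' + k * (t * (1 - t)) * ‖y' - y‖ ^ 2)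
    (hlsc : LowerSemicontinuous f) (hlow : ∀ y, A - k * ‖y‖ ^ 2 ≤ f y) :
    ∃ Y : V → V, ∀ z y, f (Y z) + 2 * k * ‖z - Y z‖ ^ 2 + k * ‖y - Y z‖ ^ 2
      ≤ f y + 2 * k * ‖z - y‖ ^ 2 := by
  have : ∀ z : V, ∃ w : V, ∀ y, f w + 2 * k * ‖z - w‖ ^ 2 + k * ‖y - w‖ ^ 2
      ≤ f y + 2 * k * ‖z - y‖ ^ 2 := by
    intro z
    have : ProperSpace V := FiniteDimensional.proper ℝ V
    -- coercivity: the minimum may be sought in a ball around `2 • z`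
    have hlow'' : ∀ y, A - 2 * k * ‖z‖ ^ 2 + k / 2 * ‖y - 2 • z‖ ^ 2
        ≤ f y + 2 * k * ‖z - y‖ ^ 2 := by
      intro y
      have h1 := hlow y
      have e1 : ‖z - y‖ ^ 2 = ‖z‖ ^ 2 - 2 * ⟪z, y⟫ + ‖y‖ ^ 2 := norm_sub_sq_real _ _
      have e2 : ‖y - 2 • z‖ ^ 2 = ‖y‖ ^ 2 - 4 * ⟪z, y⟫ + 4 * ‖z‖ ^ 2 := by
        rw [norm_sub_sq_real, ← Nat.cast_smul_eq_nsmul ℝ, inner_smul_right, norm_smul,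
          real_inner_comm]
        norm_num; ring
      have : 0 ≤ k * ‖y - 2 • z‖ ^ 2 := by positivity
      nlinarith
    set g : V → ℝ := fun y => f y + 2 * k * ‖z - y‖ ^ 2 with hg
    set R : ℝ := 1 + |g z - (A - 2 * k * ‖z‖ ^ 2)| * 2 / k + ‖z - 2 • z‖ with hR
    have hR1 : 1 ≤ R := by
      have : 0 ≤ |g z - (A - 2 * k * ‖z‖ ^ 2)| * 2 / k := by positivity
      have := norm_nonneg (z - 2 • z)
      linarith
    have hglsc : LowerSemicontinuous g := by
      refine hlsc.add (Continuous.lowerSemicontinuous ?_)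
      fun_prop
    obtain ⟨w, hw, hmin⟩ := (hglsc.lowerSemicontinuousOn (closedBall (2 • z) R)).exists_isMinOn
      (nonempty_closedBall.2 (by linarith)) (isCompact_closedBall _ _)
    have hzball : z ∈ closedBall (2 • z) R := by
      rw [mem_closedBall, dist_eq_norm]
      have : 0 ≤ |g z - (A - 2 * k * ‖z‖ ^ 2)| * 2 / k := by positivity
      linarith
    have hglob : ∀ y, g w ≤ g y := by
      intro y
      by_cases hy : y ∈ closedBall (2 • z) R
      · exact hmin hy
      · have h1 : g w ≤ g z := hmin hzball
        have h2 := hlow'' y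
        have h3 : R < ‖y - 2 • z‖ := by
          rw [mem_closedBall, dist_eq_norm] at hy; exact not_le.1 hy
        have h4 : R ≤ ‖y - 2 • z‖ ^ 2 := by nlinarith
        have h5 : |g z - (A - 2 * k * ‖z‖ ^ 2)| * 2 / k ≤ R := by
          have := norm_nonneg (z - 2 • z)
          linarith
        have h6 : |g z - (A - 2 * k * ‖z‖ ^ 2)| ≤ k / 2 * R := by
          rw [div_le_iff₀ hk] at h5; linarith
        have h7 := le_abs_self (g z - (A - 2 * k * ‖z‖ ^ 2))
        have h8 : k / 2 * R ≤ k / 2 * ‖y - 2 • z‖ ^ 2 :=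
          mul_le_mul_of_nonneg_left h4 (by positivity)
        change g w ≤ f y + 2 * k * ‖z - y‖ ^ 2
        linarith
    refine ⟨w, fun y => ?_⟩
    -- strong convexity along the segment from `w` to `y`
    have hseg : ∀ t : ℝ, 0 < t → t ≤ 1 → g w + k * (1 - t) * ‖y - w‖ ^ 2 ≤ g y := by
      intro t ht0 ht1
      have h1 := hconv w y t ht0.le ht1
      have h2 := hglob (w + t • (y - w))
      have key := norm_sub_segment_sq z w y t
      simp only [hg] at h2 ⊢
      rw [key] at h2
      have : t * (f w + 2 * k * ‖z - w‖ ^ 2 + k * (1 - t) * ‖y - w‖ ^ 2)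
          ≤ t * (f y + 2 * k * ‖z - y‖ ^ 2) := by nlinarith
      exact le_of_mul_le_mul_left this ht0
    have hlim : Tendsto (fun t : ℝ => g w + k * (1 - t) * ‖y - w‖ ^ 2) (𝓝[>] 0)
        (𝓝 (g w + k * (1 - 0) * ‖y - w‖ ^ 2)) := by
      refine tendsto_nhdsWithin_of_tendsto_nhds (Continuous.tendsto ?_ 0)
      fun_prop
    have := le_of_tendsto hlim (b := g y) (by
      filter_upwards [Ioc_mem_nhdsGT (zero_lt_one' ℝ)] with t ht using hseg t ht.1 ht.2)
    simp only [hg] at this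
    linarith
  choose Y hY using this
  exact ⟨Y, hY⟩

lemma prox_lipschitz {f : V → ℝ} {k : ℝ} (hk : 0 < k) {Y : V → V}
    (hY : ∀ z y, f (Y z) + 2 * k * ‖z - Y z‖ ^ 2 + k * ‖y - Y z‖ ^ 2
      ≤ f y + 2 * k * ‖z - y‖ ^ 2) : LipschitzWith 2 Y := by
  refine LipschitzWith.of_dist_le_mul fun z z' => ?_
  rw [dist_eq_norm, dist_eq_norm]
  have h1 := hY z (Y z')
  have h2 := hY z' (Y z)
  have e : ‖z - Y z'‖ ^ 2 - ‖z - Y z‖ ^ 2 + ‖z' - Y z‖ ^ 2 - ‖z' - Y z'‖ ^ 2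
      = 2 * ⟪z - z', Y z - Y z'⟫ := by
    simp only [norm_sub_sq_real, inner_sub_left, inner_sub_right]; ring
  have h3 : ‖Y z' - Y z‖ = ‖Y z - Y z'‖ := norm_sub_rev _ _
  rw [h3] at h1
  have h4 := real_inner_le_norm (z - z') (Y z - Y z')
  have h5 : 2 * k * ‖Y z - Y z'‖ ^ 2 ≤ 2 * k * (2 * (‖z - z'‖ * ‖Y z - Y z'‖)) := by nlinarith
  have h6 := le_of_mul_le_mul_left h5 (by positivity)
  by_cases h0 : ‖Y z - Y z'‖ = 0
  · rw [h0]; positivity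
  · have h7 : 0 < ‖Y z - Y z'‖ := lt_of_le_of_ne (norm_nonneg _) (Ne.symm h0)
    have : ‖Y z - Y z'‖ * ‖Y z - Y z'‖ ≤ 2 * ‖z - z'‖ * ‖Y z - Y z'‖ := by nlinarith
    simpa using le_of_mul_le_mul_right this h7

/-- The inf-convolution is differentiable with gradient `4 k (z - Y z)`. -/
lemma prox_hasGradient [CompleteSpace V] {f : V → ℝ} {k : ℝ} (hk : 0 < k) {Y : V → V}
    (hY : ∀ z y, f (Y z) + 2 * k * ‖z - Y z‖ ^ 2 + k * ‖y - Y z‖ ^ 2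
      ≤ f y + 2 * k * ‖z - y‖ ^ 2) (z : V) :
    HasGradientAt (fun z => f (Y z) + 2 * k * ‖z - Y z‖ ^ 2) ((4 * k) • (z - Y z)) z := by
  have hL := prox_lipschitz hk hY
  rw [hasGradientAt_iff_isLittleO]
  have hup : ∀ z z' : V, f (Y z') + 2 * k * ‖z' - Y z'‖ ^ 2
      ≤ f (Y z) + 2 * k * ‖z - Y z‖ ^ 2 + 4 * k * ⟪z - Y z, z' - z⟫ + 2 * k * ‖z' - z‖ ^ 2 := by
    intro z z'
    have h1 := hY z' (Y z)
    have e : ‖z' - Y z‖ ^ 2 = ‖z - Y z‖ ^ 2 + 2 * ⟪z - Y z, z' - z⟫ + ‖z' - z‖ ^ 2 := by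
      rw [← norm_add_sq_real]; congr 2; abel
    rw [e] at h1
    have : 0 ≤ k * ‖Y z - Y z'‖ ^ 2 := by positivity
    linarith
  have hbd : ∀ z', |f (Y z') + 2 * k * ‖z' - Y z'‖ ^ 2 - (f (Y z) + 2 * k * ‖z - Y z‖ ^ 2)
      - ⟪(4 * k) • (z - Y z), z' - z⟫| ≤ 16 * k * ‖z' - z‖ ^ 2 := by
    intro z'
    have h1 := hup z z'
    have h2 := hup z' z
    have h3 : ‖Y z' - Y z‖ ≤ 2 * ‖z' - z‖ := by
      have := hL.dist_le_mul z' z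
      simpa [dist_eq_norm] using this
    have h4 := abs_real_inner_le_norm (Y z' - Y z) (z' - z)
    have e : ⟪z' - Y z', z - z'⟫ = - ⟪z - Y z, z' - z⟫ - ‖z' - z‖ ^ 2
        + ⟪Y z' - Y z, z' - z⟫ := by
      rw [← real_inner_self_eq_norm_sq]
      simp only [inner_sub_left, inner_sub_right]; ring
    rw [e, norm_sub_rev z z'] at h2
    have h5 : |⟪Y z' - Y z, z' - z⟫| ≤ 2 * ‖z' - z‖ ^ 2 := by
      nlinarith [norm_nonneg (z' - z)]
    have h6 := abs_le.1 h5
    have h7 : 0 ≤ k * ‖z' - z‖ ^ 2 := by positivity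
    rw [inner_smul_left, abs_le]
    simp only [conj_trivial]
    constructor <;> nlinarith [mul_le_mul_of_nonneg_left h6.2 hk.le,
      mul_le_mul_of_nonneg_left h6.1 hk.le]
  refine (Asymptotics.IsBigO.of_bound (16 * k) (Eventually.of_forall fun z' => ?_)).trans_isLittleO
    (?_ : (fun z' => ‖z' - z‖ ^ 2) =o[𝓝 z] fun z' => z' - z)
  · rw [Real.norm_eq_abs, norm_pow, norm_norm]
    exact hbd z'
  · have := (Asymptotics.isLittleO_norm_pow_id (E' := V) (n := 2) (by norm_num)).comp_tendsto
      (show Tendsto (fun z' : V => z' - z) (𝓝 z) (𝓝 0) by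
        have : Tendsto (fun z' : V => z' - z) (𝓝 z) (𝓝 (z - z)) :=
          (continuous_id.sub continuous_const).tendsto z
        simpa using this)
    exact this

end Convolution

/-! ### Second order expansions and their transfer to the original function -/

section SecondOrder

variable {V : Type*} [NormedAddCommGroup V] [InnerProductSpace ℝ V] [CompleteSpace V]

/-- If `h` has gradient `G` everywhere and `G` is differentiable at `z` with derivative `X`, then
`X` is symmetric and `h` has a second order Taylor expansion at `z`. -/
lemma taylor_two_of_gradient {h : V → ℝ} {G : V → V} (hG : ∀ z, HasGradientAt h (G z) z)
    {z : V} {X : V →L[ℝ] V} (hX : HasFDerivAt G X z) :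
    (∀ a b, ⟪X a, b⟫ = ⟪a, X b⟫) ∧
    ∀ η : ℝ, 0 < η → ∀ᶠ ζ in 𝓝 (0 : V),
      |h (z + ζ) - h z - ⟪G z, ζ⟫ - 1 / 2 * ⟪X ζ, ζ⟫| ≤ η * ‖ζ‖ ^ 2 := by
  let L : V →L[ℝ] V →L[ℝ] ℝ := (isBoundedBilinearMap_inner (𝕜 := ℝ) (E := V)).toContinuousLinearMap
  have hLapp : ∀ a b, L a b = ⟪a, b⟫ := fun a b => rfl
  have h1 : ∀ y, HasFDerivAt h (L (G y)) y := by
    intro y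
    have e : L (G y) = InnerProductSpace.toDual ℝ V (G y) := by ext a; rfl
    rw [e]
    exact (hG y).hasFDerivAt
  have hsym : ∀ a b, ⟪X a, b⟫ = ⟪a, X b⟫ := by
    intro a b
    have h2 : HasFDerivAt (fun y => L (G y)) (L.comp X) z := L.hasFDerivAt.comp z hX
    have := second_derivative_symmetric h1 h2 a b
    simp only [ContinuousLinearMap.comp_apply, hLapp] at this
    rw [this, real_inner_comm]
  refine ⟨hsym, fun η hη => ?_⟩
  have hlo := hX.isLittleO.def hη
  rw [Metric.eventually_nhds_iff] at hlo
  obtain ⟨r, hr, hlo⟩ := hlo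
  rw [Metric.eventually_nhds_iff]
  refine ⟨r, hr, fun ζ hζ => ?_⟩
  rw [dist_zero_right] at hζ
  set e : V → ℝ := fun ζ => h (z + ζ) - ⟪G z, ζ⟫ - 1 / 2 * ⟪X ζ, ζ⟫ with he
  have hder : ∀ ξ, HasFDerivAt e (L (G (z + ξ)) - L (G z) - L (X ξ)) ξ := by
    intro ξ
    have d1 : HasFDerivAt (fun ζ => h (z + ζ)) (L (G (z + ξ))) ξ := by
      have := HasFDerivAt.comp (g := h) ξ (h1 (z + ξ)) ((hasFDerivAt_id ξ).const_add z)
      exact this.congr_fderiv (by ext a; rfl)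
    have d2 : HasFDerivAt (fun ζ => ⟪G z, ζ⟫) (L (G z)) ξ := (L (G z)).hasFDerivAt
    have d3 := (X.hasFDerivAt (x := ξ)).inner ℝ (hasFDerivAt_id ξ)
    have d4 := (d1.sub d2).sub (d3.const_mul (1 / 2))
    refine d4.congr_fderiv ?_
    ext a
    simp only [sub_apply, smul_apply, smul_eq_mul, hLapp,
      ContinuousLinearMap.comp_apply, ContinuousLinearMap.prod_apply, fderivInnerCLM_apply,
      ContinuousLinearMap.id_apply, id]
    rw [hsym a ξ, real_inner_comm a (X ξ)]
    ring
  have hmv := (convex_closedBall (0 : V) ‖ζ‖).norm_image_sub_le_of_norm_hasFDerivWithin_le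
    (f := e) (C := η * ‖ζ‖) (fun ξ _ => (hder ξ).hasFDerivWithinAt) (fun ξ hξ => by
      rw [mem_closedBall, dist_zero_right] at hξ
      refine ContinuousLinearMap.opNorm_le_bound _ (by positivity) fun a => ?_
      have h3 := @hlo (z + ξ) (by rw [dist_eq_norm]; simpa using lt_of_le_of_lt hξ hζ)
      simp only [add_sub_cancel_left] at h3
      have h4 : (L (G (z + ξ)) - L (G z) - L (X ξ)) a = ⟪G (z + ξ) - G z - X ξ, a⟫ := by
        simp only [sub_apply, hLapp, inner_sub_left]
      rw [h4]
      refine (norm_inner_le_norm _ _).trans ?_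
      refine mul_le_mul_of_nonneg_right (h3.trans ?_) (norm_nonneg _)
      exact mul_le_mul_of_nonneg_left hξ hη.le)
    (x := 0) (y := ζ) (by simp) (by simp)
  have e0 : e ζ - e 0 = h (z + ζ) - h z - ⟪G z, ζ⟫ - 1 / 2 * ⟪X ζ, ζ⟫ := by
    simp only [he, add_zero, map_zero, inner_zero_right]; ring
  rw [Real.norm_eq_abs, e0, sub_zero] at hmv
  calc _ ≤ _ := hmv
    _ = _ := by ring

set_option maxHeartbeats 1000000 in
/-- Transfer of second order information from the double regularisation to the original
function. With `h z = f (Y z) + 2 k ‖z - Y z‖²`, at a point `z` where the proximal map `Y` is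
differentiable with invertible derivative `D = R⁻¹`, the function `U` has a second order upper
expansion at `2 z - Y z` with gradient `4 k (z - Y z)` and Hessian `4 k (R - 1)`. -/
lemma prox_transfer {K : Set V} {U f : V → ℝ} {k : ℝ} (hk : 0 < k) {Y : V → V}
    (hS1 : ∀ y, ∀ x ∈ K, U x - k * ‖x - y‖ ^ 2 ≤ f y)
    (hS2 : ∀ y, ∃ x ∈ K, f y = U x - k * ‖x - y‖ ^ 2)
    (hY : ∀ z y, f (Y z) + 2 * k * ‖z - Y z‖ ^ 2 + k * ‖y - Y z‖ ^ 2
      ≤ f y + 2 * k * ‖z - y‖ ^ 2) {z : V} {D R : V →L[ℝ] V} (hD : HasFDerivAt Y D z)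
    (hDR : ∀ a, D (R a) = a) :
    2 • z - Y z ∈ K ∧
    U (2 • z - Y z) = f (Y z) + 4 * k * ‖z - Y z‖ ^ 2 ∧
    ∀ η : ℝ, 0 < η → ∀ᶠ ξ in 𝓝 (0 : V), 2 • z - Y z + ξ ∈ K →
      U (2 • z - Y z + ξ) ≤ U (2 • z - Y z) + 4 * k * ⟪z - Y z, ξ⟫
        + 2 * k * ⟪R ξ - ξ, ξ⟫ + η * ‖ξ‖ ^ 2 := by
  set w := z - Y z with hw
  set h : V → ℝ := fun z => f (Y z) + 2 * k * ‖z - Y z‖ ^ 2 with hh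
  have hGr := prox_hasGradient hk hY
  have hXd : HasFDerivAt (fun z => (4 * k) • (z - Y z))
      ((4 * k) • (ContinuousLinearMap.id ℝ V - D)) z :=
    ((hasFDerivAt_id z).sub hD).const_smul _
  obtain ⟨hsym, htay⟩ := taylor_two_of_gradient hGr hXd
  have hxw : 2 • z - Y z - Y z = 2 • w := by rw [hw, two_nsmul, two_nsmul]; abel
  -- first order condition for the maximiser defining `f (Y z)`
  obtain ⟨xs, hxsK, hxs⟩ := hS2 (Y z)
  have hxeq : xs = 2 • z - Y z := by
    have hmin : ∀ z', h z - 2 * k * ‖z - Y z‖ ^ 2 + k * ‖xs - Y z‖ ^ 2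
        ≤ h z' - 2 * k * ‖z' - Y z'‖ ^ 2 + k * ‖xs - Y z'‖ ^ 2 := by
      intro z'
      have := hS1 (Y z') xs hxsK
      simp only [hh]
      linarith
    have d1 : HasFDerivAt h _ z := (hGr z).hasFDerivAt
    have d2 := (((hasFDerivAt_id z).sub hD).norm_sq).const_mul (2 * k)
    have d3 := ((hD.const_sub xs).norm_sq).const_mul k
    have d4 := (d1.sub d2).add d3
    have hloc : IsLocalMin (fun z' => h z' - 2 * k * ‖z' - Y z'‖ ^ 2 + k * ‖xs - Y z'‖ ^ 2) z :=
      Eventually.of_forall hmin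
    have hz0 := hloc.hasFDerivAt_eq_zero d4
    have key : ∀ a, ⟪xs - Y z - 2 • w, a⟫ = 0 := by
      intro a
      have := congrArg (fun T : V →L[ℝ] ℝ => T (R a)) hz0
      simp only [add_apply, sub_apply,
        smul_apply, ContinuousLinearMap.comp_apply, innerSL_apply_apply,
        InnerProductSpace.toDual_apply_apply, zero_apply, hDR, id,
        ContinuousLinearMap.id_apply, smul_eq_mul, inner_smul_left, inner_sub_right,
        neg_apply, inner_neg_right, conj_trivial, ← hw, nsmul_eq_mul,
        Pi.sub_apply] at this
      rw [inner_sub_left, two_nsmul, inner_add_left]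
      have h2k : 2 * k * (⟪xs - Y z, a⟫ - (⟪w, a⟫ + ⟪w, a⟫)) = 0 := by
        push_cast at this
        linarith
      rcases mul_eq_zero.1 h2k with h' | h'
      · linarith
      · exact h'
    have := inner_self_eq_zero.1 (key (xs - Y z - 2 • w))
    rw [← hxw] at this
    have := sub_eq_zero.1 this
    exact sub_left_injective this
  have hn2 : ‖2 • w‖ ^ 2 = 4 * ‖w‖ ^ 2 := by
    rw [← Nat.cast_smul_eq_nsmul ℝ, norm_smul]; norm_num; ring
  have hUx : U (2 • z - Y z) = f (Y z) + 4 * k * ‖w‖ ^ 2 := by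
    rw [← hxeq]
    rw [hxeq] at hxs ⊢
    rw [hxw, hn2] at hxs
    linarith
  refine ⟨hxeq ▸ hxsK, hUx, fun η hη => ?_⟩
  -- small parameters controlling the two Taylor remainders
  set c : ℝ := 1 + ‖R‖ with hc
  have hc1 : 1 ≤ c := by have := norm_nonneg R; linarith
  set B : ℝ := ‖ContinuousLinearMap.id ℝ V - D‖ with hB
  have hB0 : 0 ≤ B := norm_nonneg _
  set η₁ : ℝ := η / (2 * c ^ 2) with hη₁
  have hη₁0 : 0 < η₁ := by positivity
  set η₂ : ℝ := η / (8 * k * (B + 1) * c ^ 2) with hη₂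
  have hη₂0 : 0 < η₂ := by positivity
  have t1 := htay η₁ hη₁0
  have t2 : ∀ᶠ ζ in 𝓝 (0 : V), ‖Y (z + ζ) - Y z - D ζ‖ ≤ η₂ * ‖ζ‖ := by
    have := hD.isLittleO.def hη₂0
    have ht : Tendsto (fun ζ : V => z + ζ) (𝓝 0) (𝓝 z) := by
      have : Tendsto (fun ζ : V => z + ζ) (𝓝 0) (𝓝 (z + 0)) :=
        (continuous_const.add continuous_id).tendsto 0
      simpa using this
    filter_upwards [ht.eventually this] with ζ hζ
    simpa using hζ
  have hR0 : Tendsto R (𝓝 0) (𝓝 0) := by simpa using R.continuous.tendsto 0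
  filter_upwards [hR0.eventually t1, hR0.eventually t2] with ξ h1 h2 hξK
  set ζ := R ξ with hζ
  set r := Y (z + ζ) - Y z - D ζ with hr
  have hDζ : D ζ = ξ := hDR ξ
  have hYe : Y (z + ζ) = Y z + ξ + r := by rw [hr, hDζ]; abel
  have hS := hS1 (Y (z + ζ)) _ hξK
  have e1 : 2 • z - Y z + ξ - Y (z + ζ) = 2 • w - r := by
    rw [hYe, ← hxw]; abel
  have e2 : z + ζ - Y (z + ζ) = w + (ζ - ξ) - r := by rw [hYe, hw]; abel
  have hfe : f (Y (z + ζ)) = h (z + ζ) - 2 * k * ‖w + (ζ - ξ) - r‖ ^ 2 := by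
    rw [← e2]; simp only [hh]; ring
  have hhz : h z = f (Y z) + 2 * k * ‖w‖ ^ 2 := rfl
  rw [e1, hfe] at hS
  have h1' := (abs_le.1 h1).2
  have hnorm : ‖ζ‖ ≤ c * ‖ξ‖ := by
    have := R.le_opNorm ξ
    have h0 := norm_nonneg ξ
    rw [hζ]; linarith [this.trans_eq (by ring : ‖R‖ * ‖ξ‖ = c * ‖ξ‖ - ‖ξ‖)]
  have hζ2 : ‖ζ‖ ^ 2 ≤ c ^ 2 * ‖ξ‖ ^ 2 := by
    rw [← mul_pow]; exact pow_le_pow_left₀ (norm_nonneg _) hnorm 2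
  have hIB : ‖ζ - ξ‖ ≤ B * ‖ζ‖ := by
    have := (ContinuousLinearMap.id ℝ V - D).le_opNorm ζ
    simpa [hDζ] using this
  have hcross : |⟪ζ - ξ, r⟫| ≤ B * η₂ * ‖ζ‖ ^ 2 := by
    refine (abs_real_inner_le_norm _ _).trans ?_
    calc ‖ζ - ξ‖ * ‖r‖ ≤ (B * ‖ζ‖) * (η₂ * ‖ζ‖) :=
          mul_le_mul hIB h2 (norm_nonneg _) (by positivity)
      _ = _ := by ring
  have hcross' := (abs_le.1 hcross).2
  have q1 : ⟪(4 * k) • (z - Y z), ζ⟫ = 4 * k * ⟪w, ζ⟫ := by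
    rw [inner_smul_left]; simp [hw]
  have q2 : ⟪((4 * k) • (ContinuousLinearMap.id ℝ V - D)) ζ, ζ⟫ = 4 * k * ⟪ζ - ξ, ζ⟫ := by
    simp [inner_smul_left, hDζ]
  rw [q1, q2] at h1'
  have n1 : ‖2 • w - r‖ ^ 2 = 4 * ‖w‖ ^ 2 - 4 * ⟪w, r⟫ + ‖r‖ ^ 2 := by
    rw [norm_sub_sq_real, hn2, two_nsmul, inner_add_left]; ring
  have n2 : ‖w + (ζ - ξ) - r‖ ^ 2 = ‖w‖ ^ 2 + 2 * (⟪w, ζ⟫ - ⟪w, ξ⟫)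
      + (⟪ζ - ξ, ζ⟫ - ⟪ζ - ξ, ξ⟫) - 2 * ⟪w, r⟫ - 2 * ⟪ζ - ξ, r⟫ + ‖r‖ ^ 2 := by
    rw [norm_sub_sq_real, norm_add_sq_real, inner_add_left, inner_sub_right w ζ ξ,
      ← real_inner_self_eq_norm_sq (ζ - ξ), inner_sub_right (ζ - ξ) ζ ξ]
    ring
  rw [n1, n2] at hS
  rw [hUx]
  have hr0 : 0 ≤ k * ‖r‖ ^ 2 := by positivity
  have b1 : η₁ * ‖ζ‖ ^ 2 ≤ η / 2 * ‖ξ‖ ^ 2 := by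
    calc η₁ * ‖ζ‖ ^ 2 ≤ η₁ * (c ^ 2 * ‖ξ‖ ^ 2) := mul_le_mul_of_nonneg_left hζ2 hη₁0.le
      _ = η / 2 * ‖ξ‖ ^ 2 := by rw [hη₁]; field_simp
  have b2 : 4 * k * (B * η₂ * ‖ζ‖ ^ 2) ≤ η / 2 * ‖ξ‖ ^ 2 := by
    calc 4 * k * (B * η₂ * ‖ζ‖ ^ 2) ≤ 4 * k * ((B + 1) * η₂ * (c ^ 2 * ‖ξ‖ ^ 2)) := by
          have : B * η₂ ≤ (B + 1) * η₂ :=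
            mul_le_mul_of_nonneg_right (by linarith) hη₂0.le
          gcongr
      _ = η / 2 * ‖ξ‖ ^ 2 := by rw [hη₂]; field_simp; ring
  have b3 := mul_le_mul_of_nonneg_left hcross' (by positivity : 0 ≤ 4 * k)
  linarith

end SecondOrder

/-! ### A Jensen-type lemma via Rademacher's theorem -/

section Sums

open MeasureTheory

/-- A Lipschitz map which covers a neighbourhood of the origin takes a prescribed small value at
a point where another given Lipschitz map is differentiable: the exceptional set is null by
Rademacher's theorem, and so is its Lipschitz image. -/
lemma exists_good_point {E : Type*} {P : E → E → Prop} [NormedAddCommGroup E] [NormedSpace ℝ E]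
    [FiniteDimensional ℝ E] {Z T : E → E} {CZ CT : ℝ≥0} (hZ : LipschitzWith CZ Z)
    (hT : LipschitzWith CT T) {τ δ : ℝ} (hδ : 0 < δ)
    (hsurj : ∀ q : E, ‖q‖ < δ → ∃ z, ‖z‖ < τ ∧ P z q ∧ T z = q) :
    ∃ z q, ‖z‖ < τ ∧ P z q ∧ T z = q ∧ DifferentiableAt ℝ Z z := by
  let _ : MeasurableSpace E := borel E
  have : BorelSpace E := ⟨rfl⟩
  have : ProperSpace E := FiniteDimensional.proper ℝ E
  let μ : Measure E := Measure.hausdorffMeasure (Module.finrank ℝ E)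
  have hμ : μ.IsAddHaarMeasure := isAddHaarMeasure_hausdorffMeasure
  have hae := hZ.ae_differentiableAt (μ := μ)
  set bad : Set E := {z | ¬ DifferentiableAt ℝ Z z} with hbad
  have h0 : μ bad = 0 := hae
  have h1 : μ (T '' bad) = 0 := by
    have := hT.hausdorffMeasure_image_le (d := (Module.finrank ℝ E : ℝ)) (by positivity) bad
    refine le_antisymm (this.trans ?_) bot_le
    change _ * μ bad ≤ 0
    rw [h0, mul_zero]
  have h2 : 0 < μ (ball (0 : E) δ) := measure_ball_pos μ 0 hδ
  have h3 : ¬ (ball (0 : E) δ ⊆ T '' bad) := fun hsub =>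
    absurd (measure_mono hsub) (by rw [h1]; exact not_le.2 h2)
  obtain ⟨q, hq, hqn⟩ := not_subset.1 h3
  obtain ⟨z, hz, hP, hTz⟩ := hsurj q (by simpa using hq)
  refine ⟨z, q, hz, hP, hTz, ?_⟩
  by_contra hcon
  exact hqn ⟨z, hcon, hTz⟩

lemma quad_expand {V : Type*} [NormedAddCommGroup V] [InnerProductSpace ℝ V]
    (S : V →L[ℝ] V) (hS : ∀ a b, ⟪S a, b⟫ = ⟪a, S b⟫) (a l : V) :
    ⟪S (a + l), a + l⟫ = ⟪S a, a⟫ + 2 * ⟪S a, l⟫ + ⟪S l, l⟫ := by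
  rw [map_add, inner_add_left, inner_add_right, inner_add_right, hS l a, real_inner_comm l (S a)]
  ring

variable {V : Type*} [NormedAddCommGroup V] [InnerProductSpace ℝ V] [FiniteDimensional ℝ V]

set_option maxHeartbeats 1000000 in
/-- Jensen-type lemma: points arbitrarily close to the origin at which both proximal maps are
differentiable and the second order maximum condition holds. -/
lemma sum_good_point {h1 h2 : V → ℝ} {Y1 Y2 : V → V} {k κ s : ℝ} (hs : 0 < s)
    (hY1 : LipschitzWith 2 Y1) (hY2 : LipschitzWith 2 Y2)
    (hG1 : ∀ z, HasGradientAt h1 ((4 * k) • (z - Y1 z)) z)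
    (hG2 : ∀ z, HasGradientAt h2 ((4 * k) • (z - Y2 z)) z)
    (S : V →L[ℝ] V) (hS : ∀ a b, ⟪S a, b⟫ = ⟪a, S b⟫)
    (hle : ∀ ξ η, h1 ξ + h2 η ≤ 1 / 2 * (⟪S (ξ - η), ξ - η⟫ + κ * (‖ξ‖ ^ 2 + ‖η‖ ^ 2)))
    (h10 : h1 0 = 0) (h20 : h2 0 = 0) {τ : ℝ} (hτ : 0 < τ) :
    ∃ ξ η, ∃ D1 D2 : V →L[ℝ] V, ‖ξ‖ < τ ∧ ‖η‖ < τ ∧ HasFDerivAt Y1 D1 ξ ∧ HasFDerivAt Y2 D2 η ∧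
      ∀ l m, 4 * k * (⟪l - D1 l, l⟫ + ⟪m - D2 m, m⟫)
        ≤ ⟪S (l - m), l - m⟫ + (κ + s) * (‖l‖ ^ 2 + ‖m‖ ^ 2) := by
  have : ProperSpace V := FiniteDimensional.proper ℝ V
  set κ' := κ + s with hκ'
  let T : V × V → V × V := fun z =>
    ((4 * k) • (z.1 - Y1 z.1) - S (z.1 - z.2) - κ' • z.1,
     (4 * k) • (z.2 - Y2 z.2) + S (z.1 - z.2) - κ' • z.2)
  let Z : V × V → V × V := fun z => (Y1 z.1, Y2 z.2)
  have l1 : LipschitzWith (2 * 1) (fun z : V × V => Y1 z.1) := hY1.comp LipschitzWith.prod_fst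
  have l2 : LipschitzWith (2 * 1) (fun z : V × V => Y2 z.2) := hY2.comp LipschitzWith.prod_snd
  have hZ : LipschitzWith _ Z := l1.prodMk l2
  have hT : ∃ C, LipschitzWith C T := by
    have f1 : LipschitzWith 1 (fun z : V × V => z.1) := LipschitzWith.prod_fst
    have f2 : LipschitzWith 1 (fun z : V × V => z.2) := LipschitzWith.prod_snd
    have g1 := ((lipschitzWith_smul (4 * k) : LipschitzWith _ (fun x : V => (4 * k) • x))).comp
      (f1.sub l1)
    have g2 := ((lipschitzWith_smul (4 * k) : LipschitzWith _ (fun x : V => (4 * k) • x))).comp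
      (f2.sub l2)
    have g3 := S.lipschitz.comp (f1.sub f2)
    have g4 := ((lipschitzWith_smul κ' : LipschitzWith _ (fun x : V => κ' • x))).comp f1
    have g5 := ((lipschitzWith_smul κ' : LipschitzWith _ (fun x : V => κ' • x))).comp f2
    exact ⟨_, ((g1.sub g3).sub g4).prodMk ((g2.add g3).sub g5)⟩
  obtain ⟨CT, hT⟩ := hT
  let Θ : V × V → V × V → ℝ := fun q z => h1 z.1 + h2 z.2
    - 1 / 2 * (⟪S (z.1 - z.2), z.1 - z.2⟫ + κ' * (‖z.1‖ ^ 2 + ‖z.2‖ ^ 2))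
    - ⟪q.1, z.1⟫ - ⟪q.2, z.2⟫
  have c1 : Continuous h1 := continuous_iff_continuousAt.2 fun z => (hG1 z).hasFDerivAt.continuousAt
  have c2 : Continuous h2 := continuous_iff_continuousAt.2 fun z => (hG2 z).hasFDerivAt.continuousAt
  set δ := s * τ / 4 with hδ
  have hδ0 : 0 < δ := by positivity
  have hsurj : ∀ q : V × V, ‖q‖ < δ → ∃ z, ‖z‖ < τ ∧ (∀ z', Θ q z' ≤ Θ q z) ∧ T z = q := by
    intro q hq
    have hcont : Continuous (Θ q) := by
      simp only [Θ]; fun_prop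
    obtain ⟨z, hz, hmax⟩ := (isCompact_closedBall (0 : V × V) (3 / 4 * τ)).exists_isMaxOn
      ⟨0, by simp; positivity⟩ hcont.continuousOn
    have hΘ0 : Θ q 0 = 0 := by simp [Θ, h10, h20]
    have hz0 : 0 ≤ Θ q z := by
      rw [← hΘ0]; exact hmax (mem_closedBall_self (by positivity))
    have hglob : ∀ z', Θ q z' ≤ Θ q z := by
      intro z'
      by_cases hz' : z' ∈ closedBall (0 : V × V) (3 / 4 * τ)
      · exact hmax hz'
      · refine le_trans ?_ hz0
        rw [mem_closedBall, dist_zero_right, not_le] at hz'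
        have hq1 : ‖q.1‖ ≤ δ := (norm_fst_le q).trans hq.le
        have hq2 : ‖q.2‖ ≤ δ := (norm_snd_le q).trans hq.le
        have i1 := abs_le.1 ((abs_real_inner_le_norm q.1 z'.1).trans
          (mul_le_mul_of_nonneg_right hq1 (norm_nonneg _)))
        have i2 := abs_le.1 ((abs_real_inner_le_norm q.2 z'.2).trans
          (mul_le_mul_of_nonneg_right hq2 (norm_nonneg _)))
        have hh := hle z'.1 z'.2
        have hm : 3 / 4 * τ < ‖z'.1‖ ∨ 3 / 4 * τ < ‖z'.2‖ := by
          rw [Prod.norm_def] at hz'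
          exact lt_max_iff.1 hz'
        have hfin : δ * ‖z'.1‖ + δ * ‖z'.2‖ ≤ s / 2 * (‖z'.1‖ ^ 2 + ‖z'.2‖ ^ 2) := by
          rw [hδ]
          have a0 := norm_nonneg z'.1
          have b0 := norm_nonneg z'.2
          have : τ / 2 * (‖z'.1‖ + ‖z'.2‖) ≤ ‖z'.1‖ ^ 2 + ‖z'.2‖ ^ 2 := by
            rcases hm with hm | hm <;> nlinarith [sq_nonneg (‖z'.1‖ - τ / 4),
              sq_nonneg (‖z'.2‖ - τ / 4)]
          nlinarith
        simp only [Θ, hκ']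
        nlinarith [i1.1, i2.1]
    refine ⟨z, ?_, hglob, ?_⟩
    · rw [mem_closedBall, dist_zero_right] at hz; linarith
    · have key1 : ∀ v, ⟪(4 * k) • (z.1 - Y1 z.1) - S (z.1 - z.2) - κ' • z.1 - q.1, v⟫ = 0 := by
        intro v
        have d1 : HasDerivAt (fun t : ℝ => h1 (z.1 + t • v)) ⟪(4 * k) • (z.1 - Y1 z.1), v⟫ 0 := by
          have e1 : HasDerivAt (fun t : ℝ => z.1 + t • v) v 0 := by
            simpa using ((hasDerivAt_id (0 : ℝ)).smul_const v).const_add z.1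
          have e2 : HasFDerivAt h1 (InnerProductSpace.toDual ℝ V ((4 * k) • (z.1 - Y1 z.1)))
              (z.1 + (0 : ℝ) • v) := by
            rw [zero_smul, add_zero]; exact (hG1 z.1).hasFDerivAt
          exact e2.comp_hasDerivAt 0 e1
        have d2 : HasDerivAt (fun t : ℝ => h1 (z.1 + t • v) + (Θ q z - h1 z.1
            - t * ⟪S (z.1 - z.2) + κ' • z.1 + q.1, v⟫
              - t ^ 2 * (1 / 2 * (⟪S v, v⟫ + κ' * ‖v‖ ^ 2))))
            (⟪(4 * k) • (z.1 - Y1 z.1), v⟫ + (0 - 1 * ⟪S (z.1 - z.2) + κ' • z.1 + q.1, v⟫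
              - (2 * 0) * (1 / 2 * (⟪S v, v⟫ + κ' * ‖v‖ ^ 2)))) 0 := by
          refine d1.add (((hasDerivAt_const _ _).sub ((hasDerivAt_id (0:ℝ)).mul_const _)).sub
            (HasDerivAt.mul_const ?_ _))
          simpa using hasDerivAt_pow 2 (0 : ℝ)
        have hloc : IsLocalMax (fun t : ℝ => h1 (z.1 + t • v) + (Θ q z - h1 z.1
            - t * ⟪S (z.1 - z.2) + κ' • z.1 + q.1, v⟫
              - t ^ 2 * (1 / 2 * (⟪S v, v⟫ + κ' * ‖v‖ ^ 2)))) 0 := by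
          refine Eventually.of_forall fun t => ?_
          have hm := hglob (z.1 + t • v, z.2)
          simp only [Θ] at hm ⊢
          have e : z.1 + t • v - z.2 = (z.1 - z.2) + t • v := by abel
          rw [e, quad_expand S hS, norm_add_sq_real] at hm
          simp only [map_smul, inner_smul_left, inner_smul_right, norm_smul, conj_trivial,
            inner_add_left, inner_add_right, mul_pow, Real.norm_eq_abs, sq_abs, zero_smul,
            add_zero] at hm ⊢
          nlinarith
        have := hloc.hasDerivAt_eq_zero d2
        simp only [inner_sub_left, inner_add_left] at this ⊢
        linarith
      have key2 : ∀ v, ⟪(4 * k) • (z.2 - Y2 z.2) + S (z.1 - z.2) - κ' • z.2 - q.2, v⟫ = 0 := by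
        intro v
        have d1 : HasDerivAt (fun t : ℝ => h2 (z.2 + t • v)) ⟪(4 * k) • (z.2 - Y2 z.2), v⟫ 0 := by
          have e1 : HasDerivAt (fun t : ℝ => z.2 + t • v) v 0 := by
            simpa using ((hasDerivAt_id (0 : ℝ)).smul_const v).const_add z.2
          have e2 : HasFDerivAt h2 (InnerProductSpace.toDual ℝ V ((4 * k) • (z.2 - Y2 z.2)))
              (z.2 + (0 : ℝ) • v) := by
            rw [zero_smul, add_zero]; exact (hG2 z.2).hasFDerivAt
          exact e2.comp_hasDerivAt 0 e1
        have d2 : HasDerivAt (fun t : ℝ => h2 (z.2 + t • v) + (Θ q z - h2 z.2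
            - t * ⟪- S (z.1 - z.2) + κ' • z.2 + q.2, v⟫
              - t ^ 2 * (1 / 2 * (⟪S v, v⟫ + κ' * ‖v‖ ^ 2))))
            (⟪(4 * k) • (z.2 - Y2 z.2), v⟫ + (0 - 1 * ⟪- S (z.1 - z.2) + κ' • z.2 + q.2, v⟫
              - (2 * 0) * (1 / 2 * (⟪S v, v⟫ + κ' * ‖v‖ ^ 2)))) 0 := by
          refine d1.add (((hasDerivAt_const _ _).sub ((hasDerivAt_id (0:ℝ)).mul_const _)).sub
            (HasDerivAt.mul_const ?_ _))
          simpa using hasDerivAt_pow 2 (0 : ℝ)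
        have hloc : IsLocalMax (fun t : ℝ => h2 (z.2 + t • v) + (Θ q z - h2 z.2
            - t * ⟪- S (z.1 - z.2) + κ' • z.2 + q.2, v⟫
              - t ^ 2 * (1 / 2 * (⟪S v, v⟫ + κ' * ‖v‖ ^ 2)))) 0 := by
          refine Eventually.of_forall fun t => ?_
          have hm := hglob (z.1, z.2 + t • v)
          simp only [Θ] at hm ⊢
          have e : z.1 - (z.2 + t • v) = (z.1 - z.2) + (-t) • v := by rw [neg_smul]; abel
          rw [e, quad_expand S hS, norm_add_sq_real] at hm
          simp only [map_smul, inner_smul_left, inner_smul_right, norm_smul, conj_trivial,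
            inner_add_left, inner_add_right, mul_pow, Real.norm_eq_abs, sq_abs, zero_smul,
            add_zero, inner_neg_left] at hm ⊢
          nlinarith
        have := hloc.hasDerivAt_eq_zero d2
        simp only [inner_sub_left, inner_add_left, inner_neg_left] at this ⊢
        linarith
      have r1 := sub_eq_zero.1 (inner_self_eq_zero.1 (key1 _))
      have r2 := sub_eq_zero.1 (inner_self_eq_zero.1 (key2 _))
      exact Prod.ext r1 r2
  obtain ⟨z, q, hz, hmax, hTz, hdiff⟩ := exists_good_point hZ hT hδ0 hsurj
  have hd1 : DifferentiableAt ℝ Y1 z.1 := by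
    have e : Y1 = fun x => (Z (x, z.2)).1 := rfl
    rw [e]
    have : DifferentiableAt ℝ (fun x : V => Z (x, z.2)) z.1 := by
      refine DifferentiableAt.comp (g := Z) z.1 hdiff ?_
      fun_prop
    exact this.fst
  have hd2 : DifferentiableAt ℝ Y2 z.2 := by
    have e : Y2 = fun x => (Z (z.1, x)).2 := rfl
    rw [e]
    have : DifferentiableAt ℝ (fun x : V => Z (z.1, x)) z.2 := by
      refine DifferentiableAt.comp (g := Z) z.2 hdiff ?_
      fun_prop
    exact this.snd
  refine ⟨z.1, z.2, fderiv ℝ Y1 z.1, fderiv ℝ Y2 z.2, (norm_fst_le z).trans_lt hz,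
    (norm_snd_le z).trans_lt hz, hd1.hasFDerivAt, hd2.hasFDerivAt, ?_⟩
  set D1 := fderiv ℝ Y1 z.1
  set D2 := fderiv ℝ Y2 z.2
  have hX1 : HasFDerivAt (fun z => (4 * k) • (z - Y1 z))
      ((4 * k) • (ContinuousLinearMap.id ℝ V - D1)) z.1 :=
    ((hasFDerivAt_id z.1).sub hd1.hasFDerivAt).const_smul _
  have hX2 : HasFDerivAt (fun z => (4 * k) • (z - Y2 z))
      ((4 * k) • (ContinuousLinearMap.id ℝ V - D2)) z.2 :=
    ((hasFDerivAt_id z.2).sub hd2.hasFDerivAt).const_smul _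
  have t1 := (taylor_two_of_gradient hG1 hX1).2
  have t2 := (taylor_two_of_gradient hG2 hX2).2
  intro l m
  have hT1 : (4 * k) • (z.1 - Y1 z.1) = q.1 + S (z.1 - z.2) + κ' • z.1 := by
    have := congrArg Prod.fst hTz
    simp only [T] at this
    rw [← this]; abel
  have hT2 : (4 * k) • (z.2 - Y2 z.2) = q.2 - S (z.1 - z.2) + κ' • z.2 := by
    have := congrArg Prod.snd hTz
    simp only [T] at this
    rw [← this]; abel
  refine le_of_forall_pos_le_add fun ε hε => ?_
  set η := ε / (2 * (‖l‖ ^ 2 + ‖m‖ ^ 2 + 1)) with hη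
  have hη0 : 0 < η := by positivity
  have hl : Tendsto (fun t : ℝ => t • l) (𝓝[>] 0) (𝓝 0) := by
    refine tendsto_nhdsWithin_of_tendsto_nhds ?_
    have : Tendsto (fun t : ℝ => t • l) (𝓝 0) (𝓝 ((0 : ℝ) • l)) :=
      (continuous_id.smul continuous_const).tendsto 0
    simpa using this
  have hm : Tendsto (fun t : ℝ => t • m) (𝓝[>] 0) (𝓝 0) := by
    refine tendsto_nhdsWithin_of_tendsto_nhds ?_
    have : Tendsto (fun t : ℝ => t • m) (𝓝 0) (𝓝 ((0 : ℝ) • m)) :=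
      (continuous_id.smul continuous_const).tendsto 0
    simpa using this
  obtain ⟨t, ⟨e1, e2⟩, ht⟩ := ((hl.eventually (t1 η hη0)).and (hm.eventually (t2 η hη0))).and
    (self_mem_nhdsWithin (a := (0 : ℝ)) (s := Ioi 0)) |>.exists
  have ht0 : 0 < t := ht
  have hmx := hmax (z.1 + t • l, z.2 + t • m)
  simp only [Θ] at hmx
  have e : z.1 + t • l - (z.2 + t • m) = (z.1 - z.2) + t • (l - m) := by rw [smul_sub]; abel
  rw [e, quad_expand S hS, norm_add_sq_real, norm_add_sq_real] at hmx
  replace e1 := (abs_le.1 e1).1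
  replace e2 := (abs_le.1 e2).1
  rw [hT1] at e1
  rw [hT2] at e2
  simp only [map_smul, inner_smul_left, inner_smul_right, norm_smul, conj_trivial,
    inner_add_left, inner_add_right, mul_pow, Real.norm_eq_abs, sq_abs,
    inner_sub_left (q.2), smul_apply, sub_apply, ContinuousLinearMap.id_apply] at hmx e1 e2
  have es : ⟪S (z.1 - z.2), l - m⟫ = ⟪S (z.1 - z.2), l⟫ - ⟪S (z.1 - z.2), m⟫ := inner_sub_right _ _ _
  rw [es] at hmx
  have fin : t ^ 2 * (4 * k * (⟪l - D1 l, l⟫ + ⟪m - D2 m, m⟫)) ≤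
      t ^ 2 * (⟪S (l - m), l - m⟫ + κ' * (‖l‖ ^ 2 + ‖m‖ ^ 2) + 2 * η * (‖l‖ ^ 2 + ‖m‖ ^ 2)) := by
    nlinarith
  have := le_of_mul_le_mul_left fin (by positivity)
  refine this.trans (add_le_add le_rfl ?_)
  rw [hη]
  have hp : 0 ≤ ‖l‖ ^ 2 + ‖m‖ ^ 2 := by positivity
  rw [show 2 * (ε / (2 * (‖l‖ ^ 2 + ‖m‖ ^ 2 + 1))) * (‖l‖ ^ 2 + ‖m‖ ^ 2)
    = ε * ((‖l‖ ^ 2 + ‖m‖ ^ 2) / (‖l‖ ^ 2 + ‖m‖ ^ 2 + 1)) by field_simp]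
  have : (‖l‖ ^ 2 + ‖m‖ ^ 2) / (‖l‖ ^ 2 + ‖m‖ ^ 2 + 1) ≤ 1 := by
    rw [div_le_one (by positivity)]; linarith
  nlinarith

end Sums

/-! ### The theorem on sums -/

section Sums

variable {V : Type*} [NormedAddCommGroup V] [InnerProductSpace ℝ V]

lemma inner_apply_le_opNorm (S : V →L[ℝ] V) (a b : V) : ⟪S a, b⟫ ≤ ‖S‖ * ‖a‖ * ‖b‖ :=
  (real_inner_le_norm _ _).trans (mul_le_mul_of_nonneg_right (S.le_opNorm a) (norm_nonneg _))

set_option maxHeartbeats 1000000 in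
lemma quad_penalty (S : V →L[ℝ] V) (hS : ∀ a b, ⟪S a, b⟫ = ⟪a, S b⟫) (κ : ℝ) {s : ℝ}
    (hs : 0 < s) : ∃ k0 : ℝ, 0 < k0 ∧ ∀ k, k0 ≤ k → ∀ l m a b : V,
      ⟪S (l - m), l - m⟫ + κ * (‖l‖ ^ 2 + ‖m‖ ^ 2) ≤ ⟪S (a - b), a - b⟫
        + (κ + s) * (‖a‖ ^ 2 + ‖b‖ ^ 2) + k * (‖l - a‖ ^ 2 + ‖m - b‖ ^ 2) := by
  set M := ‖S‖ + |κ| with hM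
  have hS0 := norm_nonneg S
  have hκ0 := abs_nonneg κ
  have hM0 : 0 ≤ M := by positivity
  refine ⟨16 * M ^ 2 / s + 6 * M + 1, by positivity, fun k hk l m a b => ?_⟩
  have e : l - m = (a - b) + ((l - a) - (m - b)) := by abel
  have el : l = a + (l - a) := by abel
  have em : m = b + (m - b) := by abel
  set p := l - a with hp
  set r := m - b with hr
  rw [e, quad_expand S hS, el, em, norm_add_sq_real, norm_add_sq_real]
  have i1 := inner_apply_le_opNorm S (a - b) (p - r)
  have i2 := inner_apply_le_opNorm S (p - r) (p - r)
  have n1 : ‖a - b‖ ≤ ‖a‖ + ‖b‖ := norm_sub_le _ _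
  have n2 : ‖p - r‖ ≤ ‖p‖ + ‖r‖ := norm_sub_le _ _
  have i1' : ⟪S (a - b), p - r⟫ ≤ ‖S‖ * ((‖a‖ + ‖b‖) * (‖p‖ + ‖r‖)) := by
    refine i1.trans ?_
    rw [mul_assoc]
    gcongr
  have i2' : ⟪S (p - r), p - r⟫ ≤ ‖S‖ * ((‖p‖ + ‖r‖) * (‖p‖ + ‖r‖)) := by
    refine i2.trans ?_
    rw [mul_assoc]
    gcongr
  have j1 : κ * ⟪a, p⟫ ≤ |κ| * (‖a‖ * ‖p‖) := by
    refine (le_abs_self _).trans ?_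
    rw [abs_mul]
    exact mul_le_mul_of_nonneg_left (abs_real_inner_le_norm _ _) hκ0
  have j2 : κ * ⟪b, r⟫ ≤ |κ| * (‖b‖ * ‖r‖) := by
    refine (le_abs_self _).trans ?_
    rw [abs_mul]
    exact mul_le_mul_of_nonneg_left (abs_real_inner_le_norm _ _) hκ0
  have j3 : κ * (‖p‖ ^ 2 + ‖r‖ ^ 2) ≤ |κ| * (‖p‖ ^ 2 + ‖r‖ ^ 2) :=
    mul_le_mul_of_nonneg_right (le_abs_self κ) (by positivity)
  have a0 := norm_nonneg a
  have b0 := norm_nonneg b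
  have p0 := norm_nonneg p
  have r0 := norm_nonneg r
  have k1 : |κ| * (‖a‖ * ‖p‖) + |κ| * (‖b‖ * ‖r‖) ≤ |κ| * ((‖a‖ + ‖b‖) * (‖p‖ + ‖r‖)) := by
    rw [← mul_add]
    refine mul_le_mul_of_nonneg_left ?_ hκ0
    nlinarith [mul_nonneg a0 r0, mul_nonneg b0 p0]
  have k2 : (‖p‖ + ‖r‖) * (‖p‖ + ‖r‖) ≤ 2 * (‖p‖ ^ 2 + ‖r‖ ^ 2) := by
    nlinarith [sq_nonneg (‖p‖ - ‖r‖)]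
  have k3 : (‖a‖ + ‖b‖) ^ 2 ≤ 2 * (‖a‖ ^ 2 + ‖b‖ ^ 2) := by
    nlinarith [sq_nonneg (‖a‖ - ‖b‖)]
  have k4 : 2 * M * ((‖a‖ + ‖b‖) * (‖p‖ + ‖r‖))
      ≤ s / 2 * (‖a‖ + ‖b‖) ^ 2 + 8 * M ^ 2 / s * (‖p‖ + ‖r‖) ^ 2 := by
    have h : 0 ≤ (s * (‖a‖ + ‖b‖) - 2 * M * (‖p‖ + ‖r‖)) ^ 2 := sq_nonneg _
    rw [← sub_nonneg]
    have : s / 2 * (‖a‖ + ‖b‖) ^ 2 + 8 * M ^ 2 / s * (‖p‖ + ‖r‖) ^ 2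
        - 2 * M * ((‖a‖ + ‖b‖) * (‖p‖ + ‖r‖)) = ((s * (‖a‖ + ‖b‖) - 2 * M * (‖p‖ + ‖r‖)) ^ 2
          + 12 * (M * (‖p‖ + ‖r‖)) ^ 2) / (2 * s) := by
      field_simp; ring
    rw [this]
    positivity
  have k5 : 8 * M ^ 2 / s * (‖p‖ + ‖r‖) ^ 2 ≤ 8 * M ^ 2 / s * (2 * (‖p‖ ^ 2 + ‖r‖ ^ 2)) := by
    rw [pow_two (‖p‖ + ‖r‖)]
    exact mul_le_mul_of_nonneg_left k2 (by positivity)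
  have k6 : (16 * M ^ 2 / s + 6 * M + 1) * (‖p‖ ^ 2 + ‖r‖ ^ 2) ≤ k * (‖p‖ ^ 2 + ‖r‖ ^ 2) :=
    mul_le_mul_of_nonneg_right hk (by positivity)
  have k7 : 16 * M ^ 2 / s * (‖p‖ ^ 2 + ‖r‖ ^ 2) = 8 * M ^ 2 / s * (2 * (‖p‖ ^ 2 + ‖r‖ ^ 2)) := by
    ring
  have k8 : ‖S‖ * ((‖p‖ + ‖r‖) * (‖p‖ + ‖r‖)) ≤ ‖S‖ * (2 * (‖p‖ ^ 2 + ‖r‖ ^ 2)) :=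
    mul_le_mul_of_nonneg_left k2 hS0
  have k9 : s / 2 * (‖a‖ + ‖b‖) ^ 2 ≤ s / 2 * (2 * (‖a‖ ^ 2 + ‖b‖ ^ 2)) :=
    mul_le_mul_of_nonneg_left k3 (by positivity)
  have k10 : 0 ≤ ‖p‖ ^ 2 + ‖r‖ ^ 2 := by positivity
  have k11 := mul_nonneg hS0 k10
  have k12 := mul_nonneg hκ0 k10
  have k13 : M * ((‖a‖ + ‖b‖) * (‖p‖ + ‖r‖)) = ‖S‖ * ((‖a‖ + ‖b‖) * (‖p‖ + ‖r‖))
      + |κ| * ((‖a‖ + ‖b‖) * (‖p‖ + ‖r‖)) := by rw [hM]; ring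
  have k14 : M * (‖p‖ ^ 2 + ‖r‖ ^ 2) = ‖S‖ * (‖p‖ ^ 2 + ‖r‖ ^ 2)
      + |κ| * (‖p‖ ^ 2 + ‖r‖ ^ 2) := by rw [hM]; ring
  linarith

/-- A symmetric operator bounded below by `1/2` has a symmetric inverse of norm at most `2`. -/
lemma exists_inverse_of_coercive [FiniteDimensional ℝ V] (D : V →L[ℝ] V)
    (hsym : ∀ a b, ⟪D a, b⟫ = ⟪a, D b⟫) (hc : ∀ l, 1 / 2 * ‖l‖ ^ 2 ≤ ⟪D l, l⟫) :
    ∃ R : V →L[ℝ] V, (∀ a, D (R a) = a) ∧ (∀ a, ‖R a‖ ≤ 2 * ‖a‖) ∧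
      ∀ a b, ⟪R a, b⟫ = ⟪a, R b⟫ := by
  have hlow : ∀ l, ‖l‖ ≤ 2 * ‖D l‖ := by
    intro l
    have h1 := hc l
    have h2 := real_inner_le_norm (D l) l
    by_cases h0 : ‖l‖ = 0
    · rw [h0]; positivity
    · have h3 : 0 < ‖l‖ := lt_of_le_of_ne (norm_nonneg _) (Ne.symm h0)
      have : ‖l‖ * ‖l‖ ≤ (2 * ‖D l‖) * ‖l‖ := by nlinarith
      exact le_of_mul_le_mul_right this h3
  have hinj : Function.Injective (D : V →ₗ[ℝ] V) := by
    rw [injective_iff_map_eq_zero]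
    intro l hl
    have := hlow l
    have hl' : D l = 0 := hl
    rw [hl'] at this
    simpa using this
  let e := LinearEquiv.ofInjectiveEndo (D : V →ₗ[ℝ] V) hinj
  let R : V →L[ℝ] V := LinearMap.toContinuousLinearMap (e.symm : V →ₗ[ℝ] V)
  have hDR : ∀ a, D (R a) = a := fun a => e.apply_symm_apply a
  refine ⟨R, hDR, fun a => ?_, fun a b => ?_⟩
  · have := hlow (R a); rwa [hDR] at this
  · have := hsym (R a) (R b)
    rw [hDR, hDR] at this
    exact this.symm

set_option maxHeartbeats 2000000 in
/-- The theorem on sums, in approximate form: if `U₁ x + U₂ y ≤ Q(x, y) / 2` with equality at the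
origin, there are points arbitrarily close to the origin at which `U₁` and `U₂` have second order
superjets whose Hessians are dominated by a slight enlargement of `Q` and are uniformly bounded. -/
lemma theorem_on_sums [FiniteDimensional ℝ V] {K1 K2 : Set V} (hK1 : IsCompact K1)
    (hK2 : IsCompact K2) {U1 U2 : V → ℝ}
    (hU1 : UpperSemicontinuousOn U1 K1) (hU2 : UpperSemicontinuousOn U2 K2)
    (h01 : (0 : V) ∈ K1) (h02 : (0 : V) ∈ K2) (hU10 : U1 0 = 0) (hU20 : U2 0 = 0)
    (S : V →L[ℝ] V) (hS : ∀ a b, ⟪S a, b⟫ = ⟪a, S b⟫) (κ : ℝ)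
    (hle : ∀ x ∈ K1, ∀ y ∈ K2,
      U1 x + U2 y ≤ 1 / 2 * (⟪S (x - y), x - y⟫ + κ * (‖x‖ ^ 2 + ‖y‖ ^ 2)))
    {s : ℝ} (hs : 0 < s) :
    ∃ M : ℝ, ∀ τ : ℝ, 0 < τ → ∃ x ∈ K1, ∃ y ∈ K2, ∃ p1 p2 : V, ∃ X1 X2 : V →L[ℝ] V,
      (∀ a b, ⟪X1 a, b⟫ = ⟪a, X1 b⟫) ∧ (∀ a b, ⟪X2 a, b⟫ = ⟪a, X2 b⟫) ∧ ‖X1‖ ≤ M ∧ ‖X2‖ ≤ M ∧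
      ‖x‖ < τ ∧ ‖y‖ < τ ∧ ‖p1‖ < τ ∧ ‖p2‖ < τ ∧ |U1 x| < τ ∧ |U2 y| < τ ∧
      (∀ᶠ ξ in 𝓝 (0 : V), x + ξ ∈ K1 → U1 (x + ξ) ≤ U1 x + ⟪p1, ξ⟫ + 1 / 2 * ⟪X1 ξ, ξ⟫) ∧
      (∀ᶠ ξ in 𝓝 (0 : V), y + ξ ∈ K2 → U2 (y + ξ) ≤ U2 y + ⟪p2, ξ⟫ + 1 / 2 * ⟪X2 ξ, ξ⟫) ∧
      ∀ a b, ⟪X1 a, a⟫ + ⟪X2 b, b⟫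
        ≤ ⟪S (a - b), a - b⟫ + (κ + s) * (‖a‖ ^ 2 + ‖b‖ ^ 2) := by
  set s1 := s / 4 with hs1
  have hs10 : 0 < s1 := by positivity
  obtain ⟨ka, hka0, hka⟩ := quad_penalty S hS κ hs10
  obtain ⟨kb, hkb0, hkb⟩ := quad_penalty S hS (κ + s1 + s1) hs10
  set k := ka + kb + ‖S‖ + |κ + s1 + s1| with hkdef
  have hSn := norm_nonneg S
  have hκn := abs_nonneg (κ + s1 + s1)
  have hk : 0 < k := by linarith
  obtain ⟨f1, f1a, f1b, f1c, f1d⟩ := exists_supConv hK1 ⟨0, h01⟩ hU1 k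
  obtain ⟨f2, f2a, f2b, f2c, f2d⟩ := exists_supConv hK2 ⟨0, h02⟩ hU2 k
  have f1low : ∀ y, 0 - k * ‖y‖ ^ 2 ≤ f1 y := by
    intro y; have := f1a y 0 h01; rwa [hU10, zero_sub y, norm_neg] at this
  have f2low : ∀ y, 0 - k * ‖y‖ ^ 2 ≤ f2 y := by
    intro y; have := f2a y 0 h02; rwa [hU20, zero_sub y, norm_neg] at this
  obtain ⟨Y1, hY1⟩ := exists_prox hk f1c f1d f1low
  obtain ⟨Y2, hY2⟩ := exists_prox hk f2c f2d f2low
  have hfsum : ∀ ξ η, f1 ξ + f2 η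
      ≤ 1 / 2 * (⟪S (ξ - η), ξ - η⟫ + (κ + s1) * (‖ξ‖ ^ 2 + ‖η‖ ^ 2)) := by
    intro ξ η
    obtain ⟨x, hx, hfx⟩ := f1b ξ
    obtain ⟨y, hy, hfy⟩ := f2b η
    have h1 := hle x hx y hy
    have h2 := hka (2 * k) (by linarith) x y ξ η
    rw [hfx, hfy]
    linarith
  have hf10 : f1 0 = 0 := by
    have h1 := f1low 0
    have h2 := f2low 0
    have h3 := hfsum 0 0
    simp at h1 h2 h3
    linarith
  have hf20 : f2 0 = 0 := by
    have h1 := f1low 0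
    have h2 := f2low 0
    have h3 := hfsum 0 0
    simp at h1 h2 h3
    linarith
  have hY0 : ∀ (f : V → ℝ) (Y : V → V), f 0 = 0 → (∀ y, 0 - k * ‖y‖ ^ 2 ≤ f y) →
      (∀ z y, f (Y z) + 2 * k * ‖z - Y z‖ ^ 2 + k * ‖y - Y z‖ ^ 2
      ≤ f y + 2 * k * ‖z - y‖ ^ 2) → Y 0 = 0 := by
    intro f Y h0 hl hY
    have h1 := hY 0 0
    have h2 := hl (Y 0)
    simp only [zero_sub, norm_neg, h0, norm_zero] at h1 h2
    have h3 : k * ‖Y 0‖ ^ 2 ≤ 0 := by nlinarith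
    have h4 : ‖Y 0‖ ^ 2 ≤ 0 := by
      by_contra hcon
      have : 0 < k * ‖Y 0‖ ^ 2 := mul_pos hk (not_le.1 hcon)
      linarith
    have h5 : ‖Y 0‖ = 0 := by nlinarith [norm_nonneg (Y 0)]
    exact norm_eq_zero.1 h5
  have hY10 := hY0 f1 Y1 hf10 f1low hY1
  have hY20 := hY0 f2 Y2 hf20 f2low hY2
  have hL1 := prox_lipschitz hk hY1
  have hL2 := prox_lipschitz hk hY2
  have hG1 := prox_hasGradient hk hY1
  have hG2 := prox_hasGradient hk hY2
  set h1 : V → ℝ := fun z => f1 (Y1 z) + 2 * k * ‖z - Y1 z‖ ^ 2 with hh1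
  set h2 : V → ℝ := fun z => f2 (Y2 z) + 2 * k * ‖z - Y2 z‖ ^ 2 with hh2
  have hle1 : ∀ z, h1 z ≤ f1 z := by
    intro z
    have := hY1 z z
    simp only [sub_self, norm_zero] at this
    have h0 : 0 ≤ k * ‖z - Y1 z‖ ^ 2 := by positivity
    simp only [hh1]; linarith
  have hle2 : ∀ z, h2 z ≤ f2 z := by
    intro z
    have := hY2 z z
    simp only [sub_self, norm_zero] at this
    have h0 : 0 ≤ k * ‖z - Y2 z‖ ^ 2 := by positivity
    simp only [hh2]; linarith
  have h10 : h1 0 = 0 := by simp [hh1, hY10, hf10]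
  have h20 : h2 0 = 0 := by simp [hh2, hY20, hf20]
  have c1 : Tendsto h1 (𝓝 0) (𝓝 0) := by
    have : Tendsto h1 (𝓝 0) (𝓝 (h1 0)) := (hG1 0).hasFDerivAt.continuousAt
    rwa [h10] at this
  have c2 : Tendsto h2 (𝓝 0) (𝓝 0) := by
    have : Tendsto h2 (𝓝 0) (𝓝 (h2 0)) := (hG2 0).hasFDerivAt.continuousAt
    rwa [h20] at this
  refine ⟨4 * k * 3 + s1, fun τ hτ => ?_⟩
  have hev : ∀ᶠ z in 𝓝 (0 : V), |h1 z| < τ / 2 ∧ |h2 z| < τ / 2 := by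
    have e1 := c1.eventually (Metric.ball_mem_nhds (0 : ℝ) (half_pos hτ))
    have e2 := c2.eventually (Metric.ball_mem_nhds (0 : ℝ) (half_pos hτ))
    filter_upwards [e1, e2] with z a b
    simp only [dist_zero_right, Real.norm_eq_abs] at a b
    exact ⟨a, b⟩
  obtain ⟨τ', hτ'0, hτ'⟩ := Metric.eventually_nhds_iff.1 hev
  set τ₁ := min τ' (min 1 (τ / (40 * (k + 1)))) with hτ₁
  have hτ₁0 : 0 < τ₁ := by positivity
  have hτ₁1 : τ₁ ≤ 1 := (min_le_right _ _).trans (min_le_left _ _)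
  have hτ₁2 : τ₁ * (40 * (k + 1)) ≤ τ := by
    rw [← le_div_iff₀ (by positivity)]; exact (min_le_right _ _).trans (min_le_right _ _)
  obtain ⟨ξ, η, D1, D2, hξ, hη, hD1, hD2, hsec⟩ := sum_good_point hs10 hL1 hL2 hG1 hG2 S hS
    (κ := κ + s1) (fun ξ η => (add_le_add (hle1 ξ) (hle2 η)).trans (hfsum ξ η)) h10 h20 hτ₁0
  have hsymD : ∀ (h : V → ℝ) (Y : V → V) (D : V →L[ℝ] V) (z : V),
      (∀ z, HasGradientAt h ((4 * k) • (z - Y z)) z) → HasFDerivAt Y D z →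
      ∀ a b, ⟪D a, b⟫ = ⟪a, D b⟫ := by
    intro h Y D z hG hD a b
    have hX : HasFDerivAt (fun z => (4 * k) • (z - Y z))
      ((4 * k) • (ContinuousLinearMap.id ℝ V - D)) z :=
      ((hasFDerivAt_id z).sub hD).const_smul _
    have := (taylor_two_of_gradient hG hX).1 a b
    simp only [smul_apply, sub_apply, ContinuousLinearMap.id_apply, inner_smul_left,
      inner_smul_right, conj_trivial, inner_sub_left, inner_sub_right] at this
    have := mul_left_cancel₀ (by positivity : (4 * k) ≠ 0) this
    linarith
  have hs1' := hsymD h1 Y1 D1 ξ hG1 hD1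
  have hs2' := hsymD h2 Y2 D2 η hG2 hD2
  have hSq : ∀ l, ⟪S l, l⟫ + (κ + s1 + s1) * ‖l‖ ^ 2 ≤ k * ‖l‖ ^ 2 := by
    intro l
    have i1 := inner_apply_le_opNorm S l l
    have i2 : (κ + s1 + s1) * ‖l‖ ^ 2 ≤ |κ + s1 + s1| * ‖l‖ ^ 2 :=
      mul_le_mul_of_nonneg_right (le_abs_self _) (by positivity)
    have i3 : 0 ≤ (ka + kb) * ‖l‖ ^ 2 := by positivity
    rw [hkdef]
    linarith
  have hco1 : ∀ l, 1 / 2 * ‖l‖ ^ 2 ≤ ⟪D1 l, l⟫ := by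
    intro l
    have h := hsec l 0
    simp only [map_zero, sub_zero, inner_zero_left, add_zero, norm_zero, inner_sub_left,
      real_inner_self_eq_norm_sq] at h
    have := hSq l
    have h4 : k * (1 / 2 * ‖l‖ ^ 2) ≤ k * ⟪D1 l, l⟫ := by nlinarith
    exact le_of_mul_le_mul_left h4 hk
  have hco2 : ∀ l, 1 / 2 * ‖l‖ ^ 2 ≤ ⟪D2 l, l⟫ := by
    intro l
    have h := hsec 0 l
    simp only [map_zero, zero_sub, sub_zero, inner_zero_left, zero_add, norm_zero, inner_sub_left,
      real_inner_self_eq_norm_sq, map_neg, inner_neg_neg] at h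
    have := hSq l
    have h4 : k * (1 / 2 * ‖l‖ ^ 2) ≤ k * ⟪D2 l, l⟫ := by nlinarith
    exact le_of_mul_le_mul_left h4 hk
  obtain ⟨R1, hDR1, hRn1, hRs1⟩ := exists_inverse_of_coercive D1 hs1' hco1
  obtain ⟨R2, hDR2, hRn2, hRs2⟩ := exists_inverse_of_coercive D2 hs2' hco2
  obtain ⟨m1, v1, j1⟩ := prox_transfer hk f1a f1b hY1 hD1 hDR1
  obtain ⟨m2, v2, j2⟩ := prox_transfer hk f2a f2b hY2 hD2 hDR2
  have hYn1 : ‖Y1 ξ‖ ≤ 2 * ‖ξ‖ := by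
    have := hL1.dist_le_mul ξ 0
    rwa [hY10, dist_zero_right, dist_zero_right] at this
  have hYn2 : ‖Y2 η‖ ≤ 2 * ‖η‖ := by
    have := hL2.dist_le_mul η 0
    rwa [hY20, dist_zero_right, dist_zero_right] at this
  let XX : (V →L[ℝ] V) → V →L[ℝ] V := fun R =>
    (4 * k) • (R - ContinuousLinearMap.id ℝ V) + s1 • ContinuousLinearMap.id ℝ V
  have hXa : ∀ R a, XX R a = (4 * k) • (R a - a) + s1 • a := fun R a => rfl
  have hXs : ∀ R : V →L[ℝ] V, (∀ a b, ⟪R a, b⟫ = ⟪a, R b⟫) → ∀ a b, ⟪XX R a, b⟫ = ⟪a, XX R b⟫ := by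
    intro R hR a b
    simp only [hXa, inner_add_left, inner_add_right, inner_smul_left, inner_smul_right,
      inner_sub_left, inner_sub_right, hR a b, conj_trivial]
  have hXn : ∀ R : V →L[ℝ] V, (∀ a, ‖R a‖ ≤ 2 * ‖a‖) → ‖XX R‖ ≤ 4 * k * 3 + s1 := by
    intro R hR
    refine ContinuousLinearMap.opNorm_le_bound _ (by positivity) fun a => ?_
    rw [hXa]
    have n1 := norm_add_le ((4 * k) • (R a - a)) (s1 • a)
    have n2 := norm_sub_le (R a) a
    rw [norm_smul, norm_smul, Real.norm_of_nonneg (by positivity : 0 ≤ 4 * k),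
      Real.norm_of_nonneg hs10.le] at n1
    have n3 : 4 * k * ‖R a - a‖ ≤ 4 * k * (3 * ‖a‖) :=
      mul_le_mul_of_nonneg_left (by linarith [hR a]) (by positivity)
    linarith
  have hXq : ∀ R a, ⟪XX R a, a⟫ = 4 * k * ⟪R a - a, a⟫ + s1 * ‖a‖ ^ 2 := by
    intro R a
    rw [hXa, inner_add_left, inner_smul_left, inner_smul_left, real_inner_self_eq_norm_sq]
    simp
  have hsize : ∀ (z y : V), ‖z‖ < τ₁ → ‖y‖ ≤ 2 * ‖z‖ → ‖2 • z - y‖ < τ ∧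
      ‖(4 * k) • (z - y)‖ < τ ∧ 2 * k * ‖z - y‖ ^ 2 < τ / 2 := by
    intro z y hz hy
    have n0 := norm_sub_le z y
    have n3 : ‖z - y‖ ≤ 3 * τ₁ := by linarith
    refine ⟨?_, ?_, ?_⟩
    · have n1 : 2 • z - y = z + (z - y) := by rw [two_nsmul]; abel
      have n2 := norm_add_le z (z - y)
      rw [n1]
      nlinarith
    · rw [norm_smul, Real.norm_of_nonneg (by positivity : 0 ≤ 4 * k)]
      have : 4 * k * ‖z - y‖ ≤ 4 * k * (3 * τ₁) := mul_le_mul_of_nonneg_left n3 (by positivity)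
      nlinarith
    · have : ‖z - y‖ ^ 2 ≤ (3 * τ₁) ^ 2 := pow_le_pow_left₀ (norm_nonneg _) n3 2
      have h2 : (3 * τ₁) ^ 2 ≤ 9 * τ₁ := by nlinarith
      have : 2 * k * ‖z - y‖ ^ 2 ≤ 2 * k * (9 * τ₁) :=
        mul_le_mul_of_nonneg_left (by linarith) (by positivity)
      nlinarith
  obtain ⟨sx1, sx2, sx3⟩ := hsize ξ (Y1 ξ) hξ hYn1
  obtain ⟨sy1, sy2, sy3⟩ := hsize η (Y2 η) hη hYn2
  have hhx := (hτ' (y := ξ) (by rw [dist_zero_right]; exact hξ.trans_le (min_le_left _ _))).1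
  have hhy := (hτ' (y := η) (by rw [dist_zero_right]; exact hη.trans_le (min_le_left _ _))).2
  refine ⟨2 • ξ - Y1 ξ, m1, 2 • η - Y2 η, m2, (4 * k) • (ξ - Y1 ξ), (4 * k) • (η - Y2 η),
    XX R1, XX R2, hXs R1 hRs1, hXs R2 hRs2, hXn R1 hRn1, hXn R2 hRn2, sx1, sy1, sx2, sy2,
    ?_, ?_, ?_, ?_, ?_⟩
  · have e : U1 (2 • ξ - Y1 ξ) = h1 ξ + 2 * k * ‖ξ - Y1 ξ‖ ^ 2 := by rw [v1]; simp only [hh1]; ring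
    rw [e]
    have : 0 ≤ 2 * k * ‖ξ - Y1 ξ‖ ^ 2 := by positivity
    rw [abs_lt] at hhx ⊢
    constructor <;> linarith
  · have e : U2 (2 • η - Y2 η) = h2 η + 2 * k * ‖η - Y2 η‖ ^ 2 := by rw [v2]; simp only [hh2]; ring
    rw [e]
    have : 0 ≤ 2 * k * ‖η - Y2 η‖ ^ 2 := by positivity
    rw [abs_lt] at hhy ⊢
    constructor <;> linarith
  · filter_upwards [j1 (s1 / 2) (by positivity)] with x hx hxK
    have := hx hxK
    rw [hXq, inner_smul_left]
    simp only [conj_trivial]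
    linarith
  · filter_upwards [j2 (s1 / 2) (by positivity)] with x hx hxK
    have := hx hxK
    rw [hXq, inner_smul_left]
    simp only [conj_trivial]
    linarith
  · intro a b
    rw [hXq, hXq]
    have q1 := hsec (R1 a) (R2 b)
    rw [hDR1, hDR2] at q1
    have q2 := hkb (4 * k) (by linarith) (R1 a) (R2 b) a b
    have e1 : ⟪R1 a - a, R1 a⟫ = ⟪R1 a - a, a⟫ + ‖R1 a - a‖ ^ 2 := by
      rw [← real_inner_self_eq_norm_sq, ← inner_add_right]; congr 1; abel
    have e2 : ⟪R2 b - b, R2 b⟫ = ⟪R2 b - b, b⟫ + ‖R2 b - b‖ ^ 2 := by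
      rw [← real_inner_self_eq_norm_sq, ← inner_add_right]; congr 1; abel
    rw [e1, e2] at q1
    have e3 : s = 4 * s1 := by rw [hs1]; ring
    rw [e3]
    linarith

end Sums

/-! ### Operators, matrices and quadratic test functions -/

/-- Matrix of a continuous linear operator on `ℝ^N` in the standard basis. -/
def matOf {N : ℕ} (T : EN N →L[ℝ] EN N) : Mat N :=
  Matrix.of fun i j => ⟪T (EuclideanSpace.single i 1), EuclideanSpace.single j 1⟫

/-- Symmetry of an operator, stated through the inner product. -/
def SymOp {V : Type*} [NormedAddCommGroup V] [InnerProductSpace ℝ V] (T : V →L[ℝ] V) : Prop :=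
  ∀ a b, ⟪T a, b⟫ = ⟪a, T b⟫

/-- Trace of an operator on `ℝ^N`. -/
def trOp {N : ℕ} (T : EN N →L[ℝ] EN N) : ℝ := LinearMap.trace ℝ (EN N) (T : EN N →ₗ[ℝ] EN N)

section Matrices

variable {N : ℕ}

lemma SymOp.add {V : Type*} [NormedAddCommGroup V] [InnerProductSpace ℝ V] {S T : V →L[ℝ] V}
    (hS : SymOp S) (hT : SymOp T) : SymOp (S + T) := fun a b => by
  simp only [add_apply, inner_add_left, inner_add_right, hS a b, hT a b]

lemma SymOp.neg {V : Type*} [NormedAddCommGroup V] [InnerProductSpace ℝ V] {T : V →L[ℝ] V}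
    (hT : SymOp T) : SymOp (-T) := fun a b => by
  simp only [neg_apply, inner_neg_left, inner_neg_right, hT a b]

lemma SymOp.sub {V : Type*} [NormedAddCommGroup V] [InnerProductSpace ℝ V] {S T : V →L[ℝ] V}
    (hS : SymOp S) (hT : SymOp T) : SymOp (S - T) := by
  rw [sub_eq_add_neg]; exact hS.add hT.neg

lemma SymOp.smul {V : Type*} [NormedAddCommGroup V] [InnerProductSpace ℝ V] {T : V →L[ℝ] V}
    (hT : SymOp T) (c : ℝ) : SymOp (c • T) := fun a b => by
  simp only [smul_apply, inner_smul_left, inner_smul_right, hT a b, conj_trivial]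

lemma symOp_id {V : Type*} [NormedAddCommGroup V] [InnerProductSpace ℝ V] :
    SymOp (ContinuousLinearMap.id ℝ V) := fun _ _ => rfl

lemma matOf_add (S T : EN N →L[ℝ] EN N) : matOf (S + T) = matOf S + matOf T := by
  ext i j; simp [matOf, inner_add_left]

lemma matOf_neg (T : EN N →L[ℝ] EN N) : matOf (-T) = -matOf T := by
  ext i j; simp [matOf]

lemma matOf_smul (c : ℝ) (T : EN N →L[ℝ] EN N) : matOf (c • T) = c • matOf T := by
  ext i j; simp [matOf, inner_smul_left]

lemma matOf_isSymm {T : EN N →L[ℝ] EN N} (hT : SymOp T) : (matOf T).IsSymm := by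
  ext i j
  simp only [matOf, Matrix.transpose_apply, Matrix.of_apply]
  rw [hT, real_inner_comm]

lemma toEuclideanLin_matOf {T : EN N →L[ℝ] EN N} (hT : SymOp T) :
    LinearMap.toContinuousLinearMap (Matrix.toEuclideanLin (matOf T)) = T := by
  refine ContinuousLinearMap.ext fun v => ?_
  ext i
  have e1 : (LinearMap.toContinuousLinearMap (Matrix.toEuclideanLin (matOf T)) v) i
      = ∑ j, ⟪T (EuclideanSpace.single i 1), EuclideanSpace.single j 1⟫ * v j := rfl
  have e2 : (T v) i = ⟪T (EuclideanSpace.single i 1), v⟫ := by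
    rw [hT, EuclideanSpace.inner_single_left]; simp
  rw [e1, e2]
  rw [PiLp.inner_apply]
  refine Finset.sum_congr rfl fun j _ => ?_
  rw [EuclideanSpace.inner_single_right]
  simp [mul_comm]

lemma matNorm_matOf {T : EN N →L[ℝ] EN N} (hT : SymOp T) : matNorm (matOf T) = ‖T‖ := by
  rw [matNorm, toEuclideanLin_matOf hT]

lemma matOf_trace (T : EN N →L[ℝ] EN N) : (matOf T).trace = trOp T := by
  rw [trOp, LinearMap.trace_eq_sum_inner (T : EN N →ₗ[ℝ] EN N) (EuclideanSpace.basisFun (Fin N) ℝ)]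
  simp only [Matrix.trace, matOf, Matrix.diag_apply, Matrix.of_apply]
  refine Finset.sum_congr rfl fun j _ => ?_
  rw [real_inner_comm]
  simp

lemma matOf_posSemidef {T : EN N →L[ℝ] EN N} (hT : SymOp T) (h : ∀ a, 0 ≤ ⟪T a, a⟫) :
    (matOf T).PosSemidef := by
  refine Matrix.PosSemidef.of_dotProduct_mulVec_nonneg ?_ fun x => ?_
  · have := matOf_isSymm hT
    rw [Matrix.IsHermitian, Matrix.conjTranspose_eq_transpose_of_trivial]
    exact this
  · have h1 := h (WithLp.toLp 2 x)
    have e := congrArg (fun L : EN N →L[ℝ] EN N => L (WithLp.toLp 2 x)) (toEuclideanLin_matOf hT)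
    simp only at e
    rw [← e, real_inner_comm, PiLp.inner_apply] at h1
    refine h1.trans_eq ?_
    simp only [dotProduct]
    refine Finset.sum_congr rfl fun j _ => ?_
    simp [mul_comm]

lemma trOp_add (S T : EN N →L[ℝ] EN N) : trOp (S + T) = trOp S + trOp T := by
  simp [trOp]

lemma trOp_smul_id (c : ℝ) : trOp (c • ContinuousLinearMap.id ℝ (EN N)) = c * N := by
  simp [trOp]

lemma inner_le_trOp {P : EN N →L[ℝ] EN N} (h : ∀ a, 0 ≤ ⟪P a, a⟫) (η : EN N) :
    ⟪P η, η⟫ ≤ trOp P * ‖η‖ ^ 2 := by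
  by_cases hη : η = 0
  · simp [hη]
  have hn : ‖η‖ ≠ 0 := norm_ne_zero_iff.2 hη
  set e : EN N := ‖η‖⁻¹ • η with he
  have hne : ‖e‖ = 1 := by rw [he, norm_smul]; simp [hn]
  have horth : Orthonormal ℝ ((↑) : ({e} : Set (EN N)) → EN N) := by
    rw [orthonormal_iff_ite]
    rintro ⟨a, ha⟩ ⟨b, hb⟩
    simp only [mem_singleton_iff] at ha hb
    subst ha; subst hb
    simp [hne]
  obtain ⟨u, bb, hu, hb⟩ := horth.exists_orthonormalBasis_extension
  have hmem : e ∈ u := by exact_mod_cast hu (mem_singleton e)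
  have h1 : ⟪P e, e⟫ ≤ trOp P := by
    rw [trOp, LinearMap.trace_eq_sum_inner _ bb]
    have := Finset.single_le_sum (f := fun i => ⟪bb i, (P : EN N →ₗ[ℝ] EN N) (bb i)⟫)
      (fun i _ => by
        have := h (bb i)
        rw [real_inner_comm] at this
        exact this) (Finset.mem_univ (⟨e, hmem⟩ : {x // x ∈ u}))
    refine le_trans (le_of_eq ?_) this
    simp only [hb]
    rw [real_inner_comm]; rfl
  have e2 : η = ‖η‖ • e := by rw [he, smul_smul]; simp [hn]
  calc ⟪P η, η⟫ = ‖η‖ ^ 2 * ⟪P e, e⟫ := by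
        conv_lhs => rw [e2]
        rw [map_smul, inner_smul_left, inner_smul_right]; simp; ring
    _ ≤ ‖η‖ ^ 2 * trOp P := mul_le_mul_of_nonneg_left h1 (by positivity)
    _ = _ := by ring

lemma trOp_nonneg {P : EN N →L[ℝ] EN N} (h : ∀ a, 0 ≤ ⟪P a, a⟫) : 0 ≤ trOp P := by
  rw [trOp, LinearMap.trace_eq_sum_inner _ (EuclideanSpace.basisFun (Fin N) ℝ)]
  refine Finset.sum_nonneg fun i _ => ?_
  rw [real_inner_comm]; exact h _

/-- The norm of a symmetric operator is controlled by its quadratic form. -/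
lemma SymOp.norm_le {V : Type*} [NormedAddCommGroup V] [InnerProductSpace ℝ V] {T : V →L[ℝ] V}
    (hT : SymOp T) {C : ℝ} (hC : 0 ≤ C) (h : ∀ a, |⟪T a, a⟫| ≤ C * ‖a‖ ^ 2) : ‖T‖ ≤ C := by
  refine ContinuousLinearMap.opNorm_le_bound _ hC fun a => ?_
  by_cases ha : ‖T a‖ = 0
  · rw [ha]; positivity
  by_cases ha' : a = 0
  · simp [ha']
  have hapos : 0 < ‖a‖ := norm_pos_iff.2 ha'
  have hTpos : 0 < ‖T a‖ := lt_of_le_of_ne (norm_nonneg _) (Ne.symm ha)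
  -- polarisation with `b` the multiple of `T a` of the same length as `a`
  set b : V := (‖a‖ / ‖T a‖) • T a with hb
  have hbn : ‖b‖ = ‖a‖ := by
    rw [hb, norm_smul, Real.norm_of_nonneg (by positivity)]; field_simp
  have h1 := (abs_le.1 (h (a + b))).2
  have h2 := (abs_le.1 (h (a - b))).1
  have e1 : ⟪T (a + b), a + b⟫ - ⟪T (a - b), a - b⟫ = 4 * ⟪T a, b⟫ := by
    have := hT b a
    rw [real_inner_comm (T a) b] at this
    simp only [map_add, map_sub, inner_add_left, inner_add_right, inner_sub_left,
      inner_sub_right, this]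
    ring
  have e2 : ⟪T a, b⟫ = ‖a‖ * ‖T a‖ := by
    rw [hb, inner_smul_right, real_inner_self_eq_norm_sq]; field_simp
  have e3 := parallelogram_law_with_norm ℝ a b
  rw [hbn] at e3
  have : ‖a‖ * ‖T a‖ ≤ ‖a‖ * (C * ‖a‖) := by nlinarith
  exact le_of_mul_le_mul_left this hapos

end Matrices

section TestFunctions

variable {N : ℕ}

lemma quad_hasFDerivAt (p x0 : EN N) {T : EN N →L[ℝ] EN N} (hT : SymOp T) (x : EN N) :
    HasFDerivAt (fun x => ⟪p, x - x0⟫ + 1 / 2 * ⟪T (x - x0), x - x0⟫)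
      (innerSL ℝ p + innerSL ℝ (T (x - x0))) x := by
  have d0 : HasFDerivAt (fun x : EN N => x - x0) (ContinuousLinearMap.id ℝ (EN N)) x :=
    (hasFDerivAt_id x).sub_const x0
  have d1 := (hasFDerivAt_const p x).inner ℝ d0
  have d2 := (T.hasFDerivAt.comp x d0).inner ℝ d0
  refine (d1.add (d2.const_mul (1 / 2))).congr_fderiv ?_
  ext a
  simp only [Function.comp_apply, add_apply, smul_apply, ContinuousLinearMap.comp_apply,
    ContinuousLinearMap.prod_apply, fderivInnerCLM_apply, ContinuousLinearMap.id_apply,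
    zero_apply, inner_zero_left, innerSL_apply_apply, smul_eq_mul]
  rw [hT a (x - x0), real_inner_comm a (T (x - x0))]
  ring

lemma quad_contDiff (p x0 : EN N) (T : EN N →L[ℝ] EN N) :
    ContDiff ℝ 2 (fun x => ⟪p, x - x0⟫ + 1 / 2 * ⟪T (x - x0), x - x0⟫) := by
  have h : ContDiff ℝ 2 (fun x : EN N => x - x0) := contDiff_id.sub contDiff_const
  exact (contDiff_const.inner ℝ h).add (contDiff_const.mul ((T.contDiff.comp h).inner ℝ h))

lemma quad_gradient (p x0 : EN N) {T : EN N →L[ℝ] EN N} (hT : SymOp T) :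
    gradient (fun x => ⟪p, x - x0⟫ + 1 / 2 * ⟪T (x - x0), x - x0⟫) x0 = p := by
  refine HasGradientAt.gradient ?_
  rw [hasGradientAt_iff_hasFDerivAt]
  refine (quad_hasFDerivAt p x0 hT x0).congr_fderiv ?_
  ext a; simp

lemma quad_hess (p x0 : EN N) {T : EN N →L[ℝ] EN N} (hT : SymOp T) :
    hess (fun x => ⟪p, x - x0⟫ + 1 / 2 * ⟪T (x - x0), x - x0⟫) x0 = matOf T := by
  ext i j
  simp only [hess, matOf, Matrix.of_apply, iteratedFDeriv_two_apply]
  have e : fderiv ℝ (fun x => ⟪p, x - x0⟫ + 1 / 2 * ⟪T (x - x0), x - x0⟫)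
      = fun x => innerSL ℝ p + innerSL ℝ (T (x - x0)) :=
    funext fun x => (quad_hasFDerivAt p x0 hT x).fderiv
  rw [e]
  have d0 : HasFDerivAt (fun x : EN N => x - x0) (ContinuousLinearMap.id ℝ (EN N)) x0 :=
    (hasFDerivAt_id x0).sub_const x0
  have d1 : HasFDerivAt (fun x : EN N => innerSL ℝ p + innerSL ℝ (T (x - x0)))
      (((innerSL ℝ : EN N →L[ℝ] EN N →L[ℝ] ℝ).comp T).comp (ContinuousLinearMap.id ℝ (EN N))) x0 := by
    have := HasFDerivAt.comp (f := fun x : EN N => x - x0) x0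
      (((innerSL ℝ : EN N →L[ℝ] EN N →L[ℝ] ℝ).comp T).hasFDerivAt) d0
    exact this.const_add _
  rw [d1.fderiv]
  simp

end TestFunctions

/-! ### Viscosity inequalities in terms of jets -/

/-- The structural hypotheses on the second order operator, written for operators on `ℝ^N` in
place of matrices. -/
structure EllOp {N : ℕ} (Ω : Set (EN N)) (α a A C₁ θ C₂ ν : ℝ)
    (H : EN N → EN N → (EN N →L[ℝ] EN N) → ℝ) : Prop where
  a_pos : 0 < a
  a_le : a ≤ A
  C₁_pos : 0 < C₁
  C₂_pos : 0 < C₂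
  θ_mem : θ ∈ Set.Ioc (1/2 : ℝ) 1
  ν_mem : ν ∈ Set.Ioc (1/2 : ℝ) 1
  ell : ∀ x ∈ closure Ω, ∀ p : EN N, p ≠ 0 → ∀ M P : EN N →L[ℝ] EN N, SymOp M → SymOp P →
    (∀ ξ, 0 ≤ ⟪P ξ, ξ⟫) → a * ‖p‖ ^ α * trOp P ≤ H x p (M + P) - H x p M ∧
      H x p (M + P) - H x p M ≤ A * ‖p‖ ^ α * trOp P
  hol_x : ∀ x ∈ closure Ω, ∀ y ∈ closure Ω, ∀ p : EN N, p ≠ 0 → ∀ X : EN N →L[ℝ] EN N, SymOp X →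
    |H x p X - H y p X| ≤ C₁ * ‖x - y‖ ^ θ * ‖p‖ ^ α * ‖X‖
  hol_p : ∀ x ∈ closure Ω, ∀ p : EN N, p ≠ 0 → ∀ q : EN N, ‖q‖ ≤ ‖p‖ / 2 →
    ∀ X : EN N →L[ℝ] EN N, SymOp X →
      |H x (p + q) X - H x p X| ≤ C₂ * ‖p‖ ^ (α - ν) * ‖q‖ ^ ν * ‖X‖
  zero : ∀ x ∈ closure Ω, ∀ p : EN N, p ≠ 0 → H x p 0 = 0

/-- The operator governing `-w` when `H` governs `w`. -/
def dualOp {N : ℕ} (H : EN N → EN N → (EN N →L[ℝ] EN N) → ℝ) :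
    EN N → EN N → (EN N →L[ℝ] EN N) → ℝ := fun x p X => - H x (-p) (-X)

section Operators

variable {N : ℕ} {Ω : Set (EN N)} {α a A C₁ θ C₂ ν : ℝ}

lemma EllOp.dual {H : EN N → EN N → (EN N →L[ℝ] EN N) → ℝ} (h : EllOp Ω α a A C₁ θ C₂ ν H) :
    EllOp Ω α a A C₁ θ C₂ ν (dualOp H) where
  a_pos := h.a_pos
  a_le := h.a_le
  C₁_pos := h.C₁_pos
  C₂_pos := h.C₂_pos
  θ_mem := h.θ_mem
  ν_mem := h.ν_mem
  ell := by
    intro x hx p hp M P hM hP hpos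
    have := h.ell x hx (-p) (neg_ne_zero.2 hp) (-(M + P)) P (hM.add hP).neg hP hpos
    rw [show -(M + P) + P = -M by abel, norm_neg] at this
    simp only [dualOp]
    constructor <;> linarith [this.1, this.2]
  hol_x := by
    intro x hx y hy p hp X hX
    have := h.hol_x x hx y hy (-p) (neg_ne_zero.2 hp) (-X) hX.neg
    rw [norm_neg, norm_neg] at this
    simp only [dualOp]
    rw [show -H x (-p) (-X) - -H y (-p) (-X) = -(H x (-p) (-X) - H y (-p) (-X)) by ring, abs_neg]
    exact this
  hol_p := by
    intro x hx p hp q hq X hX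
    have := h.hol_p x hx (-p) (neg_ne_zero.2 hp) (-q) (by rwa [norm_neg, norm_neg]) (-X) hX.neg
    rw [norm_neg, norm_neg, norm_neg] at this
    simp only [dualOp]
    rw [neg_add, show -H x (-p + -q) (-X) - -H x (-p) (-X)
      = -(H x (-p + -q) (-X) - H x (-p) (-X)) by ring, abs_neg]
    exact this
  zero := by
    intro x hx p hp
    simp only [dualOp, neg_zero]
    rw [h.zero x hx (-p) (neg_ne_zero.2 hp), neg_zero]

lemma ellOp_of_conds {F : EN N → EN N → Mat N → ℝ} (hF1 : CondF1 Ω α F) (hF2 : CondF2 Ω α a A F)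
    (hF3 : CondF3 Ω α C₁ θ F) (hF4 : CondF4 Ω α C₂ ν F) :
    EllOp Ω α a A C₁ θ C₂ ν (fun x p T => F x p (matOf T)) where
  a_pos := hF2.1
  a_le := hF2.2.1
  C₁_pos := hF3.1
  C₂_pos := hF4.1
  θ_mem := hF3.2.1
  ν_mem := hF4.2.1
  ell := by
    intro x hx p hp M P hM hP hpos
    have := hF2.2.2 x hx p hp (matOf M) (matOf P) (matOf_isSymm hM) (matOf_posSemidef hP hpos)
    rw [matOf_trace] at this
    simp only [matOf_add]
    exact this
  hol_x := by
    intro x hx y hy p hp X hX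
    have := hF3.2.2 x hx y hy p hp (matOf X) (matOf_isSymm hX)
    rwa [matNorm_matOf hX] at this
  hol_p := by
    intro x hx p hp q hq X hX
    have := hF4.2.2 x hx p hp q hq (matOf X) (matOf_isSymm hX)
    rwa [matNorm_matOf hX] at this
  zero := by
    intro x hx p hp
    have := hF1 x hx 1 one_ne_zero 0 le_rfl p hp 0 (by simp)
    have e : matOf (0 : EN N →L[ℝ] EN N) = 0 := by ext i j; simp [matOf]
    simp only [e]
    simpa using this

/-- `u` satisfies the subsolution inequality of `H + b·p |p|^α + c₀(x, u)` for all second order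
superjets `(p, T)` with `p ≠ 0`, where at boundary points only jets pointing strictly outwards are
considered, and on the interior of its constancy set. -/
def JetSub (Ω : Set (EN N)) (ρ : EN N → ℝ) (H : EN N → EN N → (EN N →L[ℝ] EN N) → ℝ)
    (b : EN N → EN N) (α : ℝ) (c₀ : EN N → ℝ → ℝ) (u : EN N → ℝ) : Prop :=
  (∀ x ∈ closure Ω, ∀ p : EN N, p ≠ 0 → ∀ T : EN N →L[ℝ] EN N, SymOp T →
    (∀ᶠ ξ in 𝓝 (0 : EN N), x + ξ ∈ closure Ω →
      u (x + ξ) ≤ u x + ⟪p, ξ⟫ + 1 / 2 * ⟪T ξ, ξ⟫) →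
    (x ∈ Ω ∨ 0 < ⟪p, gradient ρ x⟫) →
    0 ≤ H x p T + ⟪b x, p⟫ * ‖p‖ ^ α + c₀ x (u x)) ∧
  ∀ x ∈ Ω, (∀ᶠ x' in 𝓝 x, u x' = u x) → 0 ≤ c₀ x (u x)

lemma isLocalMaxOn_of_jet {u : EN N → ℝ} {x p : EN N} {T : EN N →L[ℝ] EN N} {s : Set (EN N)}
    (h : ∀ᶠ ξ in 𝓝 (0 : EN N), x + ξ ∈ s → u (x + ξ) ≤ u x + ⟪p, ξ⟫ + 1 / 2 * ⟪T ξ, ξ⟫) :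
    IsLocalMaxOn (fun y => u y - (⟪p, y - x⟫ + 1 / 2 * ⟪T (y - x), y - x⟫)) s x := by
  rw [IsLocalMaxOn, IsMaxFilter, eventually_nhdsWithin_iff]
  have ht : Tendsto (fun y : EN N => y - x) (𝓝 x) (𝓝 0) := by
    have : Tendsto (fun y : EN N => y - x) (𝓝 x) (𝓝 (x - x)) :=
      (continuous_id.sub continuous_const).tendsto x
    simpa using this
  filter_upwards [ht.eventually h] with y hy hys
  rw [add_sub_cancel] at hy
  have := hy hys
  simp only [sub_self, map_zero, inner_zero_right, mul_zero, add_zero, sub_zero]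
  linarith

lemma mem_or_frontier {X : Type*} [TopologicalSpace X] {s : Set X} (hs : IsOpen s) {x : X}
    (hx : x ∈ closure s) : x ∈ s ∨ x ∈ frontier s := by
  by_cases h : x ∈ s
  · exact Or.inl h
  · right; rw [hs.frontier_eq]; exact ⟨hx, h⟩

lemma inner_normal_pos {nv : EN N → EN N} {ρ : EN N → ℝ} (hρ : IsC2DefiningFun Ω nv ρ) {x p : EN N}
    (hx : x ∈ frontier Ω) (h : 0 < ⟪p, gradient ρ x⟫) : 0 < ⟪p, nv x⟫ := by
  obtain ⟨h1, h2⟩ := hρ.2.2.2 x hx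
  rw [h2, inner_smul_right]
  have := norm_pos_iff.2 h1
  positivity

lemma jetSub_of_isSubSol (hΩ : IsOpen Ω) {nv : EN N → EN N} {ρ : EN N → ℝ}
    (hρ : IsC2DefiningFun Ω nv ρ)
    {F : EN N → EN N → Mat N → ℝ} {b : EN N → EN N} {c₀ : EN N → ℝ → ℝ} {u : EN N → ℝ}
    (hu : IsSubSol Ω F b α c₀ (fun _ => 0) (BNeu nv) u) :
    JetSub Ω ρ (fun x p T => F x p (matOf T)) b α c₀ u := by
  refine ⟨fun x hx p hp T hT hj hside => ?_, fun x hx hc =>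
    hu.2.1 x hx (u x) (hc.filter_mono nhdsWithin_le_nhds)⟩
  have hmax := isLocalMaxOn_of_jet hj
  have hg := quad_gradient p x hT
  have hh := quad_hess p x hT
  have hcd := quad_contDiff p x T
  rcases mem_or_frontier hΩ hx with hxΩ | hxf
  · have := hu.1 x hxΩ _ hcd hmax (by rw [hg]; exact hp)
    rwa [hg, hh] at this
  · have h0 := hu.2.2.1 x hxf _ hcd hmax (by rw [hg]; exact hp)
    rw [hg, hh] at h0
    have hnot : x ∉ Ω := by rw [hΩ.frontier_eq] at hxf; exact hxf.2
    have hpos := inner_normal_pos hρ hxf (hside.resolve_left hnot)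
    rcases min_le_iff.1 h0 with h1 | h1
    · linarith
    · simp only [BNeu] at h1
      linarith

/-- Positive multiples of a supersolution, after a change of sign, are governed by the dual
operator; this is where homogeneity enters. -/
lemma jetSub_of_isSuperSol (hΩ : IsOpen Ω) {nv : EN N → EN N} {ρ : EN N → ℝ}
    (hρ : IsC2DefiningFun Ω nv ρ)
    {F : EN N → EN N → Mat N → ℝ} (hF1 : CondF1 Ω α F) {b : EN N → EN N} {d : EN N → ℝ}
    {v : EN N → ℝ}
    (hv : IsSuperSol Ω F b α (fun x r => d x * |r| ^ α * r) (fun _ => 0) (BNeu nv) v)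
    {t : ℝ} (ht : 0 < t) :
    JetSub Ω ρ (dualOp fun x p T => F x p (matOf T)) b α (fun x r => d x * |r| ^ α * r)
      (fun x => -(t * v x)) := by
  have htp : 0 < t⁻¹ := inv_pos.2 ht
  have hcz : ∀ x, d x * |(-(t * v x))| ^ α * (-(t * v x))
      = -(t ^ α * t * (d x * |v x| ^ α * v x)) := by
    intro x
    rw [abs_neg, abs_mul, abs_of_pos ht, Real.mul_rpow ht.le (abs_nonneg _)]
    ring
  refine ⟨fun x hx p hp T hT hj hside => ?_, fun x hx hc => ?_⟩
  · set p' : EN N := -(t⁻¹ • p) with hp'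
    set T' : EN N →L[ℝ] EN N := -(t⁻¹ • T) with hT'
    have hp'0 : p' ≠ 0 := neg_ne_zero.2 (smul_ne_zero htp.ne' hp)
    have hT's : SymOp T' := (hT.smul _).neg
    have hj' : ∀ᶠ ξ in 𝓝 (0 : EN N), x + ξ ∈ closure Ω →
        (fun y => - v y) (x + ξ) ≤ (fun y => - v y) x + ⟪-p', ξ⟫ + 1 / 2 * ⟪(-T') ξ, ξ⟫ := by
      filter_upwards [hj] with ξ hξ hmem
      have h1 := hξ hmem
      simp only [hp', hT', neg_neg, smul_apply, inner_smul_left, conj_trivial]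
      have h2 := mul_le_mul_of_nonneg_left h1 htp.le
      have e : ∀ z, t⁻¹ * (-(t * v z)) = - v z := by intro z; field_simp
      rw [mul_add, mul_add, e, e] at h2
      linarith
    have hmax := isLocalMaxOn_of_jet (u := fun y => - v y) (x := x) (p := -p') (T := -T')
      (s := closure Ω) hj'
    have hmin : IsLocalMinOn (fun y => v y - (⟪p', y - x⟫ + 1 / 2 * ⟪T' (y - x), y - x⟫))
        (closure Ω) x := by
      have := hmax.neg
      refine this.congr (Eventually.of_forall fun y => ?_) hx
      simp only [inner_neg_left, neg_apply]
      ring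
    have hg := quad_gradient p' x hT's
    have hh := quad_hess p' x hT's
    have hcd := quad_contDiff p' x T'
    have hFs : F x p' (matOf T') = t⁻¹ ^ α * t⁻¹ * F x (-p) (matOf (-T)) := by
      have := hF1 x hx t⁻¹ htp.ne' t⁻¹ htp.le (-p) (neg_ne_zero.2 hp) (matOf (-T))
        (matOf_isSymm hT.neg)
      rw [abs_of_pos htp] at this
      rw [← this, hp', hT', smul_neg, ← matOf_smul, smul_neg]
    have hb : ⟪b x, p'⟫ * ‖p'‖ ^ α = - (t⁻¹ ^ α * t⁻¹ * (⟪b x, p⟫ * ‖p‖ ^ α)) := by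
      rw [hp', norm_neg, norm_smul, Real.norm_of_nonneg htp.le,
        Real.mul_rpow htp.le (norm_nonneg _), inner_neg_right, inner_smul_right]
      ring
    have hsol : F x p' (matOf T') + ⟪b x, p'⟫ * ‖p'‖ ^ α + d x * |v x| ^ α * v x ≤ 0 := by
      rcases mem_or_frontier hΩ hx with hxΩ | hxf
      · have := hv.1 x hxΩ _ hcd hmin (by rw [hg]; exact hp'0)
        rwa [hg, hh] at this
      · have h0 := hv.2.2.1 x hxf _ hcd hmin (by rw [hg]; exact hp'0)
        rw [hg, hh] at h0
        have hnot : x ∉ Ω := by rw [hΩ.frontier_eq] at hxf; exact hxf.2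
        have hpos := inner_normal_pos hρ hxf (hside.resolve_left hnot)
        rcases le_max_iff.1 h0 with h1 | h1
        · linarith
        · simp only [BNeu, hp', inner_neg_left, inner_smul_left, conj_trivial] at h1
          have := mul_pos htp hpos
          linarith
    rw [hFs, hb] at hsol
    simp only [dualOp]
    rw [hcz]
    have e1 : t ^ α * t * (t⁻¹ ^ α * t⁻¹) = 1 := by
      rw [Real.inv_rpow ht.le]
      have := Real.rpow_pos_of_pos ht α
      field_simp
    have hsc := mul_le_mul_of_nonneg_left hsol
      (by positivity : 0 ≤ t ^ α * t)
    have e2 : t ^ α * t * (t⁻¹ ^ α * t⁻¹ * F x (-p) (matOf (-T))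
        + -(t⁻¹ ^ α * t⁻¹ * (⟪b x, p⟫ * ‖p‖ ^ α)) + d x * |v x| ^ α * v x)
        = (t ^ α * t * (t⁻¹ ^ α * t⁻¹)) * (F x (-p) (matOf (-T)) - ⟪b x, p⟫ * ‖p‖ ^ α)
          + t ^ α * t * (d x * |v x| ^ α * v x) := by ring
    rw [e2, e1] at hsc
    linarith
  · have := hv.2.1 x hx (v x) (by
      refine (hc.mono fun y hy => ?_).filter_mono nhdsWithin_le_nhds
      have : t * v y = t * v x := by simpa using hy
      exact mul_left_cancel₀ ht.ne' this)
    simp only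
    rw [hcz]
    have h2 := mul_le_mul_of_nonneg_left this (by positivity : 0 ≤ t ^ α * t)
    linarith

end Operators

/-! ### Comparison of the operator at two points -/

section Compare

variable {N : ℕ} {Ω : Set (EN N)} {α a A C₁ θ C₂ ν : ℝ}

/-- Comparison of the operator at the two points of a doubling-of-variables argument. The trace
`t` of the (nonnegative) gap between the two Hessians controls the size of each Hessian, which
compensates the Hölder dependence on position and gradient. -/
lemma ell_compare {H : EN N → EN N → (EN N →L[ℝ] EN N) → ℝ} (h : EllOp Ω α a A C₁ θ C₂ ν H)
    {x y : EN N} (hx : x ∈ closure Ω) (hy : y ∈ closure Ω) {p q : EN N} (hp : p ≠ 0)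
    (hq : ‖q‖ ≤ ‖p‖ / 2) {X Y S : EN N →L[ℝ] EN N} (hX : SymOp X) (hY : SymOp Y) {κ E : ℝ}
    (hκ : 0 ≤ κ) (hE : 0 < E) (hEa : E ≤ a / 2)
    (hE1 : C₁ * ‖x - y‖ ^ θ + C₂ * (‖q‖ / ‖p‖) ^ ν ≤ E)
    (hform : ∀ ξ η : EN N, ⟪X ξ, ξ⟫ + ⟪(-Y) η, η⟫ ≤ ⟪S (ξ - η), ξ - η⟫
      + κ * (‖ξ‖ ^ 2 + ‖η‖ ^ 2)) :
    ∃ t : ℝ, 0 ≤ t ∧ (∀ e : EN N, ‖e‖ = 1 → -(4 * ⟪S e, e⟫) ≤ t) ∧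
      H x (p + q) X - H y p Y
        ≤ ‖p‖ ^ α * (-(a / 2) * t + 2 / a * E ^ 2 * ‖S‖ + (2 * A * N + A) * κ) := by
  have ha := h.a_pos
  have hpn : 0 < ‖p‖ := norm_pos_iff.2 hp
  have hpa : 0 < ‖p‖ ^ α := Real.rpow_pos_of_pos hpn α
  set I : EN N →L[ℝ] EN N := ContinuousLinearMap.id ℝ (EN N) with hI
  have hIs : SymOp I := symOp_id
  set X' := X - κ • I with hX'
  set P := Y - X + (2 * κ) • I with hP
  have hX's : SymOp X' := hX.sub (hIs.smul _)
  have hPs : SymOp P := (hY.sub hX).add (hIs.smul _)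
  have eX' : ∀ ξ, ⟪X' ξ, ξ⟫ = ⟪X ξ, ξ⟫ - κ * ‖ξ‖ ^ 2 := by
    intro ξ
    simp only [hX', hI, sub_apply, smul_apply, inner_sub_left, inner_smul_left, conj_trivial,
      ContinuousLinearMap.id_apply, real_inner_self_eq_norm_sq]
  have eP : ∀ ξ, ⟪P ξ, ξ⟫ = ⟪Y ξ, ξ⟫ - ⟪X ξ, ξ⟫ + 2 * κ * ‖ξ‖ ^ 2 := by
    intro ξ
    simp only [hP, hI, sub_apply, add_apply, smul_apply, inner_sub_left, inner_add_left,
      inner_smul_left, conj_trivial, ContinuousLinearMap.id_apply, real_inner_self_eq_norm_sq]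
  have key : ∀ ξ η : EN N, ⟪X' ξ, ξ⟫ - ⟪X' η, η⟫ ≤ ⟪S (ξ - η), ξ - η⟫ + ⟪P η, η⟫ := by
    intro ξ η
    have := hform ξ η
    rw [neg_apply, inner_neg_left] at this
    rw [eX', eX', eP]
    linarith
  have hPpos : ∀ ξ, 0 ≤ ⟪P ξ, ξ⟫ := by
    intro ξ
    have := key ξ ξ
    simp only [sub_self, map_zero, inner_zero_left] at this
    linarith
  set t := trOp P with ht
  have ht0 : 0 ≤ t := trOp_nonneg hPpos
  have htle : ∀ ξ, ⟪P ξ, ξ⟫ ≤ t * ‖ξ‖ ^ 2 := fun ξ => inner_le_trOp hPpos ξ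
  refine ⟨t, ht0, ?_, ?_⟩
  · intro e he
    have h1 := key e (-e)
    have h2 := htle (-e)
    rw [norm_neg, he] at h2
    have e2 : e - -e = (2 : ℝ) • e := by rw [two_smul, sub_neg_eq_add]
    rw [e2, map_smul, map_neg, inner_neg_neg] at h1
    simp only [inner_smul_left, inner_smul_right, conj_trivial] at h1
    linarith
  -- the parameter balancing the two contributions to the size of the Hessian
  set s := 2 * E / a with hs
  have hs0 : 0 < s := by positivity
  have hs1 : s ≤ 1 := by rw [hs, div_le_one ha]; linarith
  set z := ‖S‖ with hz
  have hz0 : 0 ≤ z := norm_nonneg _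
  have hSb : ∀ ξ : EN N, ⟪S ξ, ξ⟫ ≤ z * ‖ξ‖ ^ 2 := by
    intro ξ
    have := inner_apply_le_opNorm S ξ ξ
    linarith [this, show ‖S‖ * ‖ξ‖ * ‖ξ‖ = z * ‖ξ‖ ^ 2 by rw [hz]; ring]
  have hX'n : ‖X'‖ ≤ s * z + t / s := by
    refine hX's.norm_le (by positivity) fun η => ?_
    have hb : ∀ c : ℝ, |c| = s → (2 * c + c ^ 2) * ⟪X' η, η⟫ ≤ (s ^ 2 * z + t) * ‖η‖ ^ 2 := by
      intro c hc
      have h1 := key ((1 + c) • η) η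
      have e : (1 + c) • η - η = c • η := by rw [add_smul, one_smul]; abel
      rw [e] at h1
      have h2 := hSb (c • η)
      rw [norm_smul, Real.norm_eq_abs, hc, mul_pow] at h2
      rw [map_smul] at h1
      simp only [inner_smul_left, inner_smul_right, conj_trivial] at h1
      have h3 := htle η
      rw [map_smul] at h2 h1
      simp only [inner_smul_left, inner_smul_right, conj_trivial] at h2 h1
      nlinarith [h1, h2, h3]
    have h1 := hb s (abs_of_pos hs0)
    have h2 := hb (-s) (by rw [abs_neg, abs_of_pos hs0])
    have hR : 0 ≤ (s ^ 2 * z + t) * ‖η‖ ^ 2 := by positivity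
    have e : (s * z + t / s) * ‖η‖ ^ 2 = (s ^ 2 * z + t) * ‖η‖ ^ 2 / s := by field_simp
    rw [e, abs_le]
    set w := ⟪X' η, η⟫
    set R := (s ^ 2 * z + t) * ‖η‖ ^ 2
    have hss : s * s ≤ s := mul_le_of_le_one_left hs0.le hs1
    rw [neg_le, le_div_iff₀ hs0, le_div_iff₀ hs0]
    rcases le_total 0 w with hw | hw
    · exact ⟨by nlinarith, by nlinarith⟩
    · exact ⟨by nlinarith, by nlinarith⟩
  have hIn : ‖κ • I‖ ≤ κ := by
    rw [norm_smul, Real.norm_of_nonneg hκ]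
    exact mul_le_of_le_one_right hκ ContinuousLinearMap.norm_id_le
  have hXn : ‖X‖ ≤ s * z + t / s + κ := by
    have : X = X' + κ • I := by rw [hX']; abel
    calc ‖X‖ = ‖X' + κ • I‖ := by rw [← this]
      _ ≤ ‖X'‖ + ‖κ • I‖ := norm_add_le _ _
      _ ≤ _ := add_le_add hX'n hIn
  have h1 := (abs_le.1 (h.hol_p x hx p hp q hq X hX)).2
  have h2 := (abs_le.1 (h.hol_x x hx y hy p hp X hX)).2
  have h3 := (h.ell y hy p hp X P hX hPs hPpos).1
  have hIpos : ∀ ξ : EN N, 0 ≤ ⟪((2 * κ) • I) ξ, ξ⟫ := by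
    intro ξ
    simp only [hI, smul_apply, inner_smul_left, conj_trivial, ContinuousLinearMap.id_apply,
      real_inner_self_eq_norm_sq]
    positivity
  have h4 := (h.ell y hy p hp Y ((2 * κ) • I) hY (hIs.smul _) hIpos).2
  have e : X + P = Y + (2 * κ) • I := by rw [hP]; abel
  rw [e] at h3
  have e4 : trOp ((2 * κ) • I) = 2 * κ * N := by rw [hI, trOp_smul_id]
  rw [e4] at h4
  have e5 : C₂ * ‖p‖ ^ (α - ν) * ‖q‖ ^ ν = ‖p‖ ^ α * (C₂ * (‖q‖ / ‖p‖) ^ ν) := by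
    rw [Real.div_rpow (norm_nonneg _) (norm_nonneg _), Real.rpow_sub hpn]
    ring
  rw [e5] at h1
  have h5 : ‖p‖ ^ α * (C₁ * ‖x - y‖ ^ θ + C₂ * (‖q‖ / ‖p‖) ^ ν) * ‖X‖
      ≤ ‖p‖ ^ α * E * (s * z + t / s + κ) := by gcongr
  have e6 : E * (s * z + t / s + κ) = 2 / a * E ^ 2 * z + a / 2 * t + E * κ := by
    rw [hs]; field_simp
  have h6 : E * κ ≤ A * κ := by
    refine mul_le_mul_of_nonneg_right ?_ hκ
    linarith [h.a_le]
  have h7 : ‖p‖ ^ α * (E * (s * z + t / s + κ))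
      ≤ ‖p‖ ^ α * (2 / a * E ^ 2 * z + a / 2 * t + A * κ) := by
    rw [e6]; gcongr
  linarith

end Compare

/-! ### The boundary barrier -/

section Barrier

variable {N : ℕ} {Ω : Set (EN N)}

/-- Uniform second order control of a `C²` function on a ball. -/
lemma taylor_c2 {f : EN N → ℝ} (hf : ContDiff ℝ 2 f) (R : ℝ) :
    ∃ C : ℝ, 0 < C ∧ ∀ x ∈ closedBall (0 : EN N) R, ‖gradient f x‖ ≤ C ∧
      ∀ y ∈ closedBall (0 : EN N) R, |f y - f x - ⟪gradient f x, y - x⟫| ≤ C * ‖y - x‖ ^ 2 := by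
  have hd : Differentiable ℝ f := hf.differentiable (by norm_num)
  have hf1 : ContDiff ℝ 1 (fderiv ℝ f) := hf.fderiv_right (by norm_num)
  obtain ⟨K, hK⟩ := hf1.contDiffOn.exists_lipschitzOnWith (s := closedBall (0 : EN N) R) one_ne_zero
    (convex_closedBall _ _) (isCompact_closedBall _ _)
  obtain ⟨B, hB⟩ := (isCompact_closedBall (0 : EN N) R).exists_bound_of_continuousOn
    hf1.continuous.continuousOn
  have hg : ∀ x, ‖gradient f x‖ = ‖fderiv ℝ f x‖ := by
    intro x; rw [gradient]; exact LinearIsometryEquiv.norm_map _ _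
  have hgi : ∀ x w, ⟪gradient f x, w⟫ = fderiv ℝ f x w := by
    intro x w; rw [gradient, InnerProductSpace.toDual_symm_apply]
  refine ⟨|B| + K + 1, by positivity, fun x hx => ⟨?_, fun y hy => ?_⟩⟩
  · rw [hg]
    have := hB x hx
    have := le_abs_self B
    have : (0 : ℝ) ≤ K := K.2
    linarith
  · have hseg : segment ℝ x y ⊆ closedBall (0 : EN N) R :=
      (convex_closedBall (0 : EN N) R).segment_subset hx hy
    have := (convex_segment x y).norm_image_sub_le_of_norm_hasFDerivWithin_le'
      (f := f) (f' := fderiv ℝ f) (φ := fderiv ℝ f x) (C := K * ‖y - x‖)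
      (fun z _ => (hd z).hasFDerivAt.hasFDerivWithinAt)
      (fun z hz => by
        have h1 := hK.norm_sub_le (hseg hz) hx
        have h2 : ‖z - x‖ ≤ ‖y - x‖ := by
          have := norm_sub_le_of_mem_segment hz
          simpa using this
        calc _ ≤ K * ‖z - x‖ := h1
          _ ≤ _ := by gcongr)
      (left_mem_segment ℝ x y) (right_mem_segment ℝ x y)
    rw [hgi]
    rw [Real.norm_eq_abs] at this
    refine this.trans ?_
    have : 0 ≤ (|B| + 1) * ‖y - x‖ ^ 2 := by positivity
    nlinarith

/-- The data of a function `σ` on `Ω̄` whose gradient `dσ` points outwards so strongly along the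
boundary that it corrects, in `B (x - y) + D dσ(x)`, the wrong sign of the normal component of
`B (x - y)` as long as `B |x - y|² ≤ 6 m D`. -/
structure IsBarrier (Ω : Set (EN N)) (ρ : EN N → ℝ) (m : ℝ) (σ : EN N → ℝ) (dσ : EN N → EN N)
    (C : ℝ) : Prop where
  one_le : 1 ≤ C
  pos : ∀ x ∈ closure Ω, 0 < σ x
  le_one : ∀ x ∈ closure Ω, σ x ≤ 1
  norm_le : ∀ x ∈ closure Ω, ‖dσ x‖ ≤ C
  taylor : ∀ x ∈ closure Ω, ∀ y ∈ closure Ω, |σ y - σ x - ⟪dσ x, y - x⟫| ≤ C * ‖y - x‖ ^ 2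
  bdry : ∀ x ∈ frontier Ω, ∀ y ∈ closure Ω, ∀ B D : ℝ, 0 ≤ B → 0 < D →
    B * ‖x - y‖ ^ 2 ≤ 6 * m * D → 0 < ⟪B • (x - y) + D • dσ x, gradient ρ x⟫

/-- The barrier is `exp (L ρ)` for a defining function `ρ` and a large constant `L`. -/
lemma exists_barrier {nv : EN N → EN N} (hb : Bornology.IsBounded Ω) {ρ : EN N → ℝ}
    (hρ : IsC2DefiningFun Ω nv ρ) (m : ℝ) (hm : 0 ≤ m) :
    ∃ σ dσ C, IsBarrier Ω ρ m σ dσ C := by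
  obtain ⟨hc2, hΩ, hfr, hgr⟩ := hρ
  have hd : Differentiable ℝ ρ := hc2.differentiable (by norm_num)
  obtain ⟨R, hR⟩ := hb.closure.subset_closedBall (0 : EN N)
  have hle : ∀ x ∈ closure Ω, ρ x ≤ 0 := by
    have : IsClosed {x | ρ x ≤ 0} := isClosed_le hc2.continuous continuous_const
    refine fun x hx => closure_minimal (fun y hy => ?_) this hx
    rw [hΩ] at hy
    have hy' : ρ y < 0 := hy
    exact hy'.le
  obtain ⟨Cρ, hCρ, hT⟩ := taylor_c2 hc2 R
  have hgc : Continuous (gradient ρ) := by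
    have hf1 : ContDiff ℝ 1 (fderiv ℝ ρ) := hc2.fderiv_right (by norm_num)
    exact (InnerProductSpace.toDual ℝ (EN N)).symm.continuous.comp hf1.continuous
  have hfc : IsCompact (frontier Ω) :=
    (isCompact_closedBall (0 : EN N) R).of_isClosed_subset isClosed_frontier
      (frontier_subset_closure.trans hR)
  obtain ⟨k, hk, hkle⟩ : ∃ k : ℝ, 0 < k ∧ ∀ x ∈ frontier Ω, k ≤ ‖gradient ρ x‖ ^ 2 := by
    rcases (frontier Ω).eq_empty_or_nonempty with h | h
    · exact ⟨1, one_pos, by simp [h]⟩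
    · obtain ⟨x, hx, hmin⟩ := hfc.exists_isMinOn h (hgc.norm.pow 2).continuousOn
      exact ⟨‖gradient ρ x‖ ^ 2, by have := norm_pos_iff.2 (hgr x hx).1; positivity,
        fun y hy => hmin hy⟩
  set L := (6 * m * Cρ + 1) / k with hL
  have hL0 : 0 < L := by positivity
  set σ : EN N → ℝ := fun x => Real.exp (L * ρ x) with hσ
  have hσ2 : ContDiff ℝ 2 σ := (contDiff_const.mul hc2).exp
  have hgσ : ∀ x, gradient σ x = (L * σ x) • gradient ρ x := by
    intro x
    have h1 : HasGradientAt ρ (gradient ρ x) x := (hd x).hasGradientAt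
    have h2 : HasFDerivAt ρ (InnerProductSpace.toDual ℝ (EN N) (gradient ρ x)) x := h1.hasFDerivAt
    have h3 := (h2.const_mul L).exp
    have h4 : HasGradientAt σ ((L * σ x) • gradient ρ x) x := by
      rw [hasGradientAt_iff_hasFDerivAt]
      refine h3.congr_fderiv ?_
      ext w
      simp [hσ, mul_comm, mul_assoc, mul_left_comm]
    exact h4.gradient
  obtain ⟨C, hC, hTσ⟩ := taylor_c2 hσ2 R
  refine ⟨σ, gradient σ, C + 1, by linarith, fun x _ => Real.exp_pos _, fun x hx => ?_,
    fun x hx => ?_, fun x hx y hy => ?_, fun x hx y hy B D hB hD hBD => ?_⟩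
  · exact Real.exp_le_one_iff.2 (mul_nonpos_of_nonneg_of_nonpos hL0.le (hle x hx))
  · linarith [(hTσ x (hR hx)).1]
  · refine ((hTσ x (hR hx)).2 y (hR hy)).trans ?_
    gcongr; linarith
  · have hx0 : ρ x = 0 := by rw [hfr] at hx; exact hx
    have hσ1 : σ x = 1 := by simp [hσ, hx0]
    have h1 := (hT x (hR (frontier_subset_closure hx))).2 y (hR hy)
    rw [hx0] at h1
    have h2 := (abs_le.1 h1).1
    have h3 := hle y hy
    rw [hgσ, hσ1, mul_one, inner_add_left, smul_smul, inner_smul_left, inner_smul_left,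
      real_inner_self_eq_norm_sq]
    simp only [conj_trivial]
    have e : ⟪x - y, gradient ρ x⟫ = - ⟪gradient ρ x, y - x⟫ := by
      rw [real_inner_comm, ← inner_neg_right, neg_sub]
    rw [e]
    rw [← norm_neg, neg_sub] at hBD
    have h4 : ⟪gradient ρ x, y - x⟫ ≤ Cρ * ‖y - x‖ ^ 2 := by linarith
    have h5 := mul_le_mul_of_nonneg_left h4 hB
    have h6 := mul_le_mul_of_nonneg_left hBD hCρ.le
    have h7 : 6 * m * Cρ + 1 ≤ L * ‖gradient ρ x‖ ^ 2 := by
      have : 6 * m * Cρ + 1 = L * k := by rw [hL]; field_simp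
      rw [this]
      exact mul_le_mul_of_nonneg_left (hkle x hx) hL0.le
    have h8 := mul_le_mul_of_nonneg_left h7 hD.le
    linarith

end Barrier

/-! ### Second order expansion of the penalty -/

section Penalty

variable {N : ℕ} {Ω : Set (EN N)}

lemma taylor_two_real {g g' : ℝ → ℝ} {s₀ g₂ : ℝ} (h1 : ∀ᶠ s in 𝓝 s₀, HasDerivAt g (g' s) s)
    (h2 : HasDerivAt g' g₂ s₀) {ε : ℝ} (hε : 0 < ε) :
    ∀ᶠ δ in 𝓝 (0 : ℝ), |g (s₀ + δ) - g s₀ - g' s₀ * δ - 1 / 2 * g₂ * δ ^ 2| ≤ ε * δ ^ 2 := by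
  have h3 := (hasDerivAt_iff_isLittleO.1 h2).def hε
  obtain ⟨τ, hτ, hball⟩ := Metric.eventually_nhds_iff.1 (h1.and h3)
  filter_upwards [Metric.ball_mem_nhds (0 : ℝ) hτ] with δ hδ
  rw [mem_ball, dist_zero_right, Real.norm_eq_abs] at hδ
  set f : ℝ → ℝ := fun t => g (s₀ + t) - g' s₀ * t - 1 / 2 * g₂ * t ^ 2 with hf
  have hin : ∀ t ∈ segment ℝ (0 : ℝ) δ, |t| ≤ |δ| := by
    intro t ht
    have := norm_sub_le_of_mem_segment ht
    simpa using this
  have hd : ∀ t ∈ segment ℝ (0 : ℝ) δ, HasDerivWithinAt f (g' (s₀ + t) - g' s₀ - g₂ * t)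
      (segment ℝ (0 : ℝ) δ) t := by
    intro t ht
    have hg : HasDerivAt g (g' (s₀ + t)) (s₀ + t) :=
      (hball (by rw [Real.dist_eq]; simpa using (hin t ht).trans_lt hδ)).1
    have e1 : HasDerivAt (fun t => g (s₀ + t)) (g' (s₀ + t)) t := hg.comp_const_add s₀ t
    have e2 := (e1.sub ((hasDerivAt_id t).const_mul (g' s₀))).sub
      (((hasDerivAt_id t).pow 2).const_mul (1 / 2 * g₂))
    refine (e2.congr_deriv ?_).hasDerivWithinAt
    simp
    ring
  have hb : ∀ t ∈ segment ℝ (0 : ℝ) δ, ‖g' (s₀ + t) - g' s₀ - g₂ * t‖ ≤ ε * |δ| := by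
    intro t ht
    have := (hball (y := s₀ + t) (by rw [Real.dist_eq]; simpa using (hin t ht).trans_lt hδ)).2
    simp only [add_sub_cancel_left, smul_eq_mul, Real.norm_eq_abs] at this
    rw [Real.norm_eq_abs, mul_comm g₂]
    exact this.trans (mul_le_mul_of_nonneg_left (hin t ht) hε.le)
  have := (convex_segment (0 : ℝ) δ).norm_image_sub_le_of_norm_hasDerivWithin_le hd hb
    (left_mem_segment ℝ 0 δ) (right_mem_segment ℝ 0 δ)
  simp only [hf, Real.norm_eq_abs, sub_zero, add_zero, mul_zero] at this
  rw [show ε * |δ| * |δ| = ε * δ ^ 2 by rw [mul_assoc, abs_mul_abs_self, ← pow_two]] at this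
  convert this using 2
  ring

/-- The operator `c₁ Id + c₂ v ⊗ v`. -/
def profOp (c₁ c₂ : ℝ) (v : EN N) : EN N →L[ℝ] EN N :=
  c₁ • ContinuousLinearMap.id ℝ (EN N) + c₂ • (innerSL ℝ v).smulRight v

lemma profOp_apply (c₁ c₂ : ℝ) (v w : EN N) : profOp c₁ c₂ v w = c₁ • w + c₂ • ⟪v, w⟫ • v := by
  simp [profOp]

lemma profOp_inner (c₁ c₂ : ℝ) (v w : EN N) :
    ⟪profOp c₁ c₂ v w, w⟫ = c₁ * ‖w‖ ^ 2 + c₂ * ⟪v, w⟫ ^ 2 := by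
  rw [profOp_apply, inner_add_left, inner_smul_left, inner_smul_left, inner_smul_left,
    real_inner_self_eq_norm_sq]
  simp only [conj_trivial]
  ring

lemma profOp_symm (c₁ c₂ : ℝ) (v : EN N) : SymOp (profOp c₁ c₂ v) := by
  intro x y
  rw [profOp_apply, profOp_apply]
  simp only [inner_add_left, inner_add_right, inner_smul_left, inner_smul_right, conj_trivial]
  rw [real_inner_comm v x]
  ring

lemma profOp_norm (c₁ c₂ : ℝ) (v : EN N) : ‖profOp c₁ c₂ v‖ ≤ |c₁| + |c₂| * ‖v‖ ^ 2 := by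
  refine ContinuousLinearMap.opNorm_le_bound _ (by positivity) fun w => ?_
  rw [profOp_apply]
  refine (norm_add_le _ _).trans ?_
  rw [norm_smul, norm_smul, norm_smul, Real.norm_eq_abs, Real.norm_eq_abs]
  have := norm_inner_le_norm (𝕜 := ℝ) v w
  calc _ ≤ |c₁| * ‖w‖ + |c₂| * ((‖v‖ * ‖w‖) * ‖v‖) := by gcongr
    _ = _ := by ring

/-- The scalar inequality behind `penalty_expansion`: `w = A₁ + R₁` is the increment of the weight,
`G` the new value of the profile, `i = ⟨v, ζ⟩`, `l = |ζ|`, `n = |ξ| + |η|`, `Q = |ξ|² + |η|²`. -/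
lemma penalty_scalar {W A₁ R₁ R₂ C n Q l i r g₀ g₁ g₂ k ε ε₂ : ℝ} (hW0 : 0 ≤ W) (hW : W ≤ 3)
    (hC : 0 ≤ C) (hr : 0 ≤ r) (hg0 : 0 ≤ g₀) (hg1 : 0 ≤ g₁) (hk : 0 < k) (hn : 0 ≤ n)
    (hn1 : n ≤ 1) (hl : 0 ≤ l) (hln : l ≤ n) (hi : |i| ≤ r * l) (hnQ : n ^ 2 ≤ 2 * Q)
    (hQn : Q ≤ n ^ 2)
    (hA : |A₁| ≤ C * n) (hR1 : |R₁| ≤ C * Q) (hε2 : 0 < ε₂) (hε2' : 12 * (2 * r + 1) ^ 2 * ε₂ ≤ ε)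
    (hR2 : |R₂| ≤ ε₂ * (2 * i + l ^ 2) ^ 2)
    (hnε : (3 * |g₂| * (2 * r + 1) + 2 * C * (g₁ + (|g₂| / 2 + ε₂) * (2 * r + 1) ^ 2)
      + 2 * C * g₁ * r) * n ≤ ε / 4) :
    (W + (A₁ + R₁)) * (g₀ + g₁ * (2 * i + l ^ 2) + 1 / 2 * g₂ * (2 * i + l ^ 2) ^ 2 + R₂)
      ≤ W * g₀ + 2 * W * g₁ * i + g₀ * A₁
        + 1 / 2 * (((2 * W * g₁ + 2 * C * g₁ * r / k) * l ^ 2 + 4 * W * g₂ * i ^ 2)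
          + (2 * g₀ * C + 4 * C * g₁ * r * k + 2 * ε) * Q) := by
  have hQ0 : 0 ≤ Q := by nlinarith [sq_nonneg n]
  have hl1 : l ≤ 1 := hln.trans hn1
  set D := 2 * r + 1 with hD
  have hD0 : 0 < D := by positivity
  have hll : l ^ 2 ≤ l * 1 := by rw [pow_two]; gcongr
  have hδ : |2 * i + l ^ 2| ≤ D * l := by
    have h1 : |2 * i + l ^ 2| ≤ |2 * i| + |l ^ 2| := abs_add_le _ _
    rw [abs_mul, abs_two, abs_of_nonneg (sq_nonneg l)] at h1
    rw [hD]; linarith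
  have hδn : |2 * i + l ^ 2| ≤ D * n := hδ.trans (by gcongr)
  have hδ2 : (2 * i + l ^ 2) ^ 2 ≤ D ^ 2 * n ^ 2 := by
    rw [← sq_abs, ← mul_pow]; gcongr
  have hR2' : |R₂| ≤ ε₂ * (D ^ 2 * n ^ 2) := hR2.trans (by gcongr)
  set K := g₁ + (|g₂| / 2 + ε₂) * D ^ 2 with hK
  have hK0 : 0 ≤ K := by positivity
  have hl2n : l ^ 2 ≤ n ^ 2 := by gcongr
  set R₃ := g₁ * l ^ 2 + 1 / 2 * g₂ * (2 * i + l ^ 2) ^ 2 + R₂ with hR3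
  have hR3b : |R₃| ≤ K * n ^ 2 := by
    have h1 : |R₃| ≤ |g₁ * l ^ 2| + |1 / 2 * g₂ * (2 * i + l ^ 2) ^ 2| + |R₂| := abs_add_three _ _ _
    rw [abs_of_nonneg (by positivity : 0 ≤ g₁ * l ^ 2), abs_mul (1 / 2 * g₂), abs_mul (1 / 2),
      abs_sq (2 * i + l ^ 2), abs_of_pos (by norm_num : (0 : ℝ) < 1 / 2)] at h1
    have h2 : g₁ * l ^ 2 ≤ g₁ * n ^ 2 := by gcongr
    have h3 : 1 / 2 * |g₂| * (2 * i + l ^ 2) ^ 2 ≤ 1 / 2 * |g₂| * (D ^ 2 * n ^ 2) := by gcongr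
    rw [hK]; linarith
  have hn3 : 0 ≤ n ^ 3 := by positivity
  -- first order weight increment against the remainder of the profile
  have c1 : A₁ * R₃ ≤ C * K * n ^ 3 := by
    calc A₁ * R₃ ≤ |A₁| * |R₃| := by rw [← abs_mul]; exact le_abs_self _
      _ ≤ (C * n) * (K * n ^ 2) := by gcongr
      _ = _ := by ring
  have hin : |i| ≤ r * n := hi.trans (by gcongr)
  have hR1n : |R₁| ≤ C * n ^ 2 := hR1.trans (by gcongr)
  have c2 : R₁ * (2 * g₁ * i) ≤ 2 * C * g₁ * r * n ^ 3 := by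
    calc R₁ * (2 * g₁ * i) ≤ |R₁ * (2 * g₁ * i)| := le_abs_self _
      _ = |R₁| * (2 * g₁ * |i|) := by rw [abs_mul, abs_mul, abs_of_nonneg (by positivity : 0 ≤ 2 * g₁)]
      _ ≤ (C * n ^ 2) * (2 * g₁ * (r * n)) := by gcongr
      _ = _ := by ring
  have c3 : R₁ * R₃ ≤ C * K * n ^ 3 := by
    calc R₁ * R₃ ≤ |R₁| * |R₃| := by rw [← abs_mul]; exact le_abs_self _
      _ ≤ (C * n ^ 2) * (K * n ^ 2) := by gcongr
      _ = C * K * n ^ 3 * n := by ring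
      _ ≤ C * K * n ^ 3 * 1 := by gcongr
      _ = _ := by ring
  have c4 : A₁ * (2 * g₁ * i) ≤ 2 * C * g₁ * r * (n * l) := by
    calc A₁ * (2 * g₁ * i) ≤ |A₁ * (2 * g₁ * i)| := le_abs_self _
      _ = |A₁| * (2 * g₁ * |i|) := by rw [abs_mul, abs_mul, abs_of_nonneg (by positivity : 0 ≤ 2 * g₁)]
      _ ≤ (C * n) * (2 * g₁ * (r * l)) := by gcongr
      _ = _ := by ring
  have hnl : n * l ≤ k * Q + l ^ 2 / (2 * k) := by
    have h1 : 0 ≤ (k * n - l) ^ 2 / (2 * k) := by positivity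
    have h2 : (k * n - l) ^ 2 / (2 * k) = k * n ^ 2 / 2 - n * l + l ^ 2 / (2 * k) := by
      field_simp; ring
    have h3 : k * n ^ 2 ≤ k * (2 * Q) := by gcongr
    linarith
  have c5 : A₁ * (2 * g₁ * i) ≤ 2 * C * g₁ * r * (k * Q + l ^ 2 / (2 * k)) :=
    c4.trans (by gcongr)
  have c6 : g₀ * R₁ ≤ g₀ * (C * Q) := by
    gcongr; exact (le_abs_self _).trans hR1
  have c7 : W * R₂ ≤ 3 * (ε₂ * (D ^ 2 * n ^ 2)) := by
    calc W * R₂ ≤ W * |R₂| := by gcongr; exact le_abs_self _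
      _ ≤ _ := by gcongr
  have c8 : W * (g₂ * (2 * i * l ^ 2 + 1 / 2 * l ^ 4)) ≤ 3 * |g₂| * D * n ^ 3 := by
    have h1 : |2 * i * l ^ 2 + 1 / 2 * l ^ 4| ≤ D * n ^ 3 := by
      have h2 : |2 * i * l ^ 2 + 1 / 2 * l ^ 4| ≤ |2 * i * l ^ 2| + |1 / 2 * l ^ 4| :=
        abs_add_le _ _
      rw [abs_mul, abs_mul, abs_two, abs_of_nonneg (sq_nonneg l),
        abs_of_nonneg (by positivity : 0 ≤ 1 / 2 * l ^ 4)] at h2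
      have h3 : 2 * |i| * l ^ 2 ≤ 2 * (r * n) * n ^ 2 := by gcongr
      have h4 : l ^ 4 ≤ n ^ 3 := by
        calc l ^ 4 = l ^ 3 * l := by ring
          _ ≤ n ^ 3 * 1 := by gcongr
          _ = _ := by ring
      rw [hD]; linarith
    calc W * (g₂ * (2 * i * l ^ 2 + 1 / 2 * l ^ 4))
        ≤ W * (|g₂| * |2 * i * l ^ 2 + 1 / 2 * l ^ 4|) := by
          refine mul_le_mul_of_nonneg_left ?_ hW0
          rw [← abs_mul]; exact le_abs_self _
      _ ≤ 3 * (|g₂| * (D * n ^ 3)) := by gcongr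
      _ = _ := by ring
  have c9 : (3 * |g₂| * D + 2 * C * K + 2 * C * g₁ * r) * n ^ 3 ≤ ε / 2 * Q := by
    have hε : 0 < ε := lt_of_lt_of_le (by positivity) hε2'
    calc (3 * |g₂| * D + 2 * C * K + 2 * C * g₁ * r) * n ^ 3
        = ((3 * |g₂| * D + 2 * C * K + 2 * C * g₁ * r) * n) * n ^ 2 := by ring
      _ ≤ (ε / 4) * (2 * Q) := by gcongr
      _ = _ := by ring
  have c10 : 3 * (ε₂ * (D ^ 2 * n ^ 2)) ≤ ε / 2 * Q := by
    have h1 : 12 * D ^ 2 * ε₂ * n ^ 2 ≤ ε * (2 * Q) := by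
      have hε : 0 < ε := lt_of_lt_of_le (by positivity) hε2'
      gcongr
    linarith
  have e : (W + (A₁ + R₁)) * (g₀ + g₁ * (2 * i + l ^ 2) + 1 / 2 * g₂ * (2 * i + l ^ 2) ^ 2 + R₂)
      = W * g₀ + 2 * W * g₁ * i + g₀ * A₁ + W * g₁ * l ^ 2 + 2 * W * g₂ * i ^ 2 + W * R₂
        + W * (g₂ * (2 * i * l ^ 2 + 1 / 2 * l ^ 4)) + g₀ * R₁
        + A₁ * (2 * g₁ * i) + A₁ * R₃ + R₁ * (2 * g₁ * i) + R₁ * R₃ := by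
    rw [hR3]; ring
  rw [e]
  have e2 : C * g₁ * r * l ^ 2 / k = 2 * C * g₁ * r * (l ^ 2 / (2 * k)) := by field_simp
  have e3 : 2 * C * g₁ * r / k * l ^ 2 = 2 * (C * g₁ * r * l ^ 2 / k) := by ring
  linarith

end Penalty

section Penalty

variable {N : ℕ} {Ω : Set (EN N)}

/-- The second order upper expansion of `(1 + σ(x) + σ(y)) g(|x - y|²)`. -/
lemma penalty_expansion {ρ : EN N → ℝ} {m : ℝ} {σ : EN N → ℝ} {dσ : EN N → EN N} {C : ℝ}
    (hB : IsBarrier Ω ρ m σ dσ C) {x y : EN N} (hx : x ∈ closure Ω) (hy : y ∈ closure Ω)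
    {g : ℝ → ℝ} {g₁ g₂ : ℝ} (hg0 : 0 ≤ g (‖x - y‖ ^ 2)) (hg1 : 0 ≤ g₁)
    (hT : ∀ ε > 0, ∀ᶠ δ in 𝓝 (0 : ℝ), |g (‖x - y‖ ^ 2 + δ) - g (‖x - y‖ ^ 2) - g₁ * δ
      - 1 / 2 * g₂ * δ ^ 2| ≤ ε * δ ^ 2) {k ε : ℝ} (hk : 0 < k) (hε : 0 < ε) :
    ∀ᶠ z in 𝓝 (0 : EN N × EN N), x + z.1 ∈ closure Ω → y + z.2 ∈ closure Ω →
      (1 + σ (x + z.1) + σ (y + z.2)) * g (‖(x + z.1) - (y + z.2)‖ ^ 2)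
        ≤ (1 + σ x + σ y) * g (‖x - y‖ ^ 2)
          + ⟪(2 * (1 + σ x + σ y) * g₁) • (x - y) + g (‖x - y‖ ^ 2) • dσ x, z.1⟫
          + ⟪(2 * (1 + σ x + σ y) * g₁) • (y - x) + g (‖x - y‖ ^ 2) • dσ y, z.2⟫
          + 1 / 2 * (⟪profOp (2 * (1 + σ x + σ y) * g₁ + 2 * C * g₁ * ‖x - y‖ / k)
              (4 * (1 + σ x + σ y) * g₂) (x - y) (z.1 - z.2), z.1 - z.2⟫
            + (2 * g (‖x - y‖ ^ 2) * C + 4 * C * g₁ * ‖x - y‖ * k + 2 * ε)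
              * (‖z.1‖ ^ 2 + ‖z.2‖ ^ 2)) := by
  set r := ‖x - y‖ with hr
  have hr0 : 0 ≤ r := norm_nonneg _
  have hC0 : 0 ≤ C := zero_le_one.trans hB.one_le
  set ε₂ := ε / (12 * (2 * r + 1) ^ 2) with hε2
  have hε20 : 0 < ε₂ := by positivity
  set K := 3 * |g₂| * (2 * r + 1) + 2 * C * (g₁ + (|g₂| / 2 + ε₂) * (2 * r + 1) ^ 2)
      + 2 * C * g₁ * r with hK
  have hcn : Continuous fun z : EN N × EN N => ‖z.1‖ + ‖z.2‖ := by fun_prop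
  have hn0 : Tendsto (fun z : EN N × EN N => ‖z.1‖ + ‖z.2‖) (𝓝 0) (𝓝 0) := by
    have := hcn.tendsto 0; simpa using this
  have hδ0 : Tendsto (fun z : EN N × EN N => 2 * ⟪x - y, z.1 - z.2⟫ + ‖z.1 - z.2‖ ^ 2)
      (𝓝 0) (𝓝 0) := by
    have : Continuous fun z : EN N × EN N => 2 * ⟪x - y, z.1 - z.2⟫ + ‖z.1 - z.2‖ ^ 2 := by
      fun_prop
    have := this.tendsto 0
    simpa using this
  have hKn : ∀ᶠ z in 𝓝 (0 : EN N × EN N), K * (‖z.1‖ + ‖z.2‖) < ε / 4 := by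
    have := hn0.const_mul K
    rw [mul_zero] at this
    exact this.eventually_lt_const (by positivity)
  filter_upwards [hδ0.eventually (hT ε₂ hε20), hn0.eventually_lt_const one_pos, hKn]
    with z hz1 hz2 hz3 hzx hzy
  obtain ⟨ξ, η⟩ := z
  simp only at hz1 hz2 hz3 hzx hzy ⊢
  set ζ := ξ - η with hζ
  have es : ‖(x + ξ) - (y + η)‖ ^ 2 = r ^ 2 + (2 * ⟪x - y, ζ⟫ + ‖ζ‖ ^ 2) := by
    rw [show (x + ξ) - (y + η) = (x - y) + ζ by rw [hζ]; abel, norm_add_sq_real]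
    ring
  have t1 := hB.taylor x hx (x + ξ) hzx
  have t2 := hB.taylor y hy (y + η) hzy
  rw [add_sub_cancel_left] at t1 t2
  have b1 : |⟪dσ x, ξ⟫| ≤ C * ‖ξ‖ := (abs_real_inner_le_norm _ _).trans (by
    gcongr; exact hB.norm_le x hx)
  have b2 : |⟪dσ y, η⟫| ≤ C * ‖η‖ := (abs_real_inner_le_norm _ _).trans (by
    gcongr; exact hB.norm_le y hy)
  have hx1 := hB.pos x hx
  have hy1 := hB.pos y hy
  have hx2 := hB.le_one x hx
  have hy2 := hB.le_one y hy
  have hq : (‖ξ‖ + ‖η‖) ^ 2 ≤ 2 * (‖ξ‖ ^ 2 + ‖η‖ ^ 2) := by nlinarith [sq_nonneg (‖ξ‖ - ‖η‖)]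
  have hq' : ‖ξ‖ ^ 2 + ‖η‖ ^ 2 ≤ (‖ξ‖ + ‖η‖) ^ 2 := by
    nlinarith [mul_nonneg (norm_nonneg ξ) (norm_nonneg η)]
  have hmain := penalty_scalar (W := 1 + σ x + σ y) (A₁ := ⟪dσ x, ξ⟫ + ⟪dσ y, η⟫)
    (R₁ := (σ (x + ξ) - σ x - ⟪dσ x, ξ⟫) + (σ (y + η) - σ y - ⟪dσ y, η⟫))
    (R₂ := g (r ^ 2 + (2 * ⟪x - y, ζ⟫ + ‖ζ‖ ^ 2)) - g (r ^ 2) - g₁ * (2 * ⟪x - y, ζ⟫ + ‖ζ‖ ^ 2)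
      - 1 / 2 * g₂ * (2 * ⟪x - y, ζ⟫ + ‖ζ‖ ^ 2) ^ 2)
    (C := C) (n := ‖ξ‖ + ‖η‖) (Q := ‖ξ‖ ^ 2 + ‖η‖ ^ 2) (l := ‖ζ‖) (i := ⟪x - y, ζ⟫) (r := r)
    (g₀ := g (r ^ 2)) (g₁ := g₁) (g₂ := g₂) (k := k) (ε := ε) (ε₂ := ε₂)
    (by linarith) (by linarith) hC0 hr0 hg0 hg1 hk (by positivity) hz2.le (norm_nonneg _)
    (norm_sub_le _ _) (abs_real_inner_le_norm _ _) hq hq'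
    ((abs_add_le _ _).trans (by linarith)) ((abs_add_le _ _).trans (by linarith)) hε20
    (by rw [hε2]; apply le_of_eq; field_simp) hz1 hz3.le
  rw [es, profOp_inner]
  have e1 : ⟪(2 * (1 + σ x + σ y) * g₁) • (x - y) + g (r ^ 2) • dσ x, ξ⟫
      = 2 * (1 + σ x + σ y) * g₁ * ⟪x - y, ξ⟫ + g (r ^ 2) * ⟪dσ x, ξ⟫ := by
    simp only [inner_add_left, inner_smul_left, conj_trivial]
  have e2 : ⟪(2 * (1 + σ x + σ y) * g₁) • (y - x) + g (r ^ 2) • dσ y, η⟫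
      = - (2 * (1 + σ x + σ y) * g₁ * ⟪x - y, η⟫) + g (r ^ 2) * ⟪dσ y, η⟫ := by
    rw [← neg_sub x y, smul_neg]
    simp only [inner_add_left, inner_neg_left, inner_smul_left, conj_trivial]
  have e3 : ⟪x - y, ζ⟫ = ⟪x - y, ξ⟫ - ⟪x - y, η⟫ := by rw [hζ, inner_sub_right]
  rw [e1, e2]
  refine le_trans (le_of_eq ?_) (hmain.trans (le_of_eq ?_))
  · ring
  · rw [e3]; ring

end Penalty

/-! ### Viscosity inequalities at a touching pair -/

lemma continuous_norm_rpow_smul {E : Type*} [NormedAddCommGroup E] [NormedSpace ℝ E] {α : ℝ}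
    (hα : -1 < α) : Continuous fun p : E => ‖p‖ ^ α • p := by
  rw [continuous_iff_continuousAt]
  intro p
  rcases eq_or_ne p 0 with rfl | hp
  · rw [ContinuousAt, smul_zero, tendsto_zero_iff_norm_tendsto_zero]
    have h1 : Continuous fun p : E => ‖p‖ ^ (α + 1) :=
      continuous_norm.rpow_const fun _ => Or.inr (by linarith)
    have h2 := h1.tendsto 0
    rw [norm_zero, Real.zero_rpow (by linarith)] at h2
    refine h2.congr fun p => ?_
    rw [norm_smul, Real.norm_of_nonneg (Real.rpow_nonneg (norm_nonneg _) _)]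
    rcases eq_or_ne p 0 with rfl | hp
    · rw [norm_zero, mul_zero, Real.zero_rpow (by linarith)]
    · rw [Real.rpow_add (norm_pos_iff.2 hp), Real.rpow_one]
  · exact (continuous_norm.continuousAt.rpow_const (Or.inl (norm_ne_zero_iff.2 hp))).smul
      continuousAt_id

section Transfer

variable {N : ℕ} {Ω : Set (EN N)} {α a A C₁ θ C₂ ν : ℝ}

/-- Jets near a point `x` with bounded Hessian yield the subsolution inequality at `x` up to a
small error. -/
lemma jet_transfer {H : EN N → EN N → (EN N →L[ℝ] EN N) → ℝ} (h : EllOp Ω α a A C₁ θ C₂ ν H)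
    (hα : -1 < α) (hΩ : IsOpen Ω) {ρ : EN N → ℝ} (hρ : Continuous (gradient ρ)) {b : EN N → EN N}
    (hb : ContinuousOn b (closure Ω)) {c₀ : EN N → ℝ → ℝ}
    (hc : ContinuousOn (fun z : EN N × ℝ => c₀ z.1 z.2) (closure Ω ×ˢ univ)) {u : EN N → ℝ}
    (hJ : JetSub Ω ρ H b α c₀ u) {x p : EN N} (hx : x ∈ closure Ω) (hp : p ≠ 0)
    (hside : x ∈ Ω ∨ 0 < ⟪p, gradient ρ x⟫) (M : ℝ) {s : ℝ} (hs : 0 < s) :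
    ∃ τ > 0, ∀ ξ q : EN N, ∀ X : EN N →L[ℝ] EN N, x + ξ ∈ closure Ω → ‖ξ‖ < τ → ‖q‖ < τ →
      |u (x + ξ) - u x - ⟪p, ξ⟫| < τ → SymOp X → ‖X‖ ≤ M →
      (∀ᶠ ζ in 𝓝 (0 : EN N), x + ξ + ζ ∈ closure Ω →
        u (x + ξ + ζ) ≤ u (x + ξ) + ⟪p + q, ζ⟫ + 1 / 2 * ⟪X ζ, ζ⟫) →
      -s ≤ H x p X + ⟪b x, p⟫ * ‖p‖ ^ α + c₀ x (u x) := by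
  have hpn : 0 < ‖p‖ := norm_pos_iff.2 hp
  set D : Set (EN N × EN N × ℝ) := {z | x + z.1 ∈ closure Ω} with hD
  -- error of the second order term
  have E1 : ∀ᶠ z in 𝓝 (0 : EN N × EN N × ℝ), C₁ * ‖z.1‖ ^ θ * ‖p + z.2.1‖ ^ α * |M|
      + C₂ * ‖p‖ ^ (α - ν) * ‖z.2.1‖ ^ ν * |M| < s / 3 := by
    have hθ : 0 < θ := by linarith [h.θ_mem.1]
    have hν : 0 < ν := by linarith [h.ν_mem.1]
    have c1 : ContinuousAt (fun z : EN N × EN N × ℝ => ‖z.1‖ ^ θ) 0 :=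
      (continuous_fst.norm.rpow_const fun _ => Or.inr hθ.le).continuousAt
    have c2 : ContinuousAt (fun z : EN N × EN N × ℝ => ‖z.2.1‖ ^ ν) 0 :=
      (continuous_snd.fst.norm.rpow_const fun _ => Or.inr hν.le).continuousAt
    have c3 : ContinuousAt (fun z : EN N × EN N × ℝ => ‖p + z.2.1‖ ^ α) 0 := by
      refine ContinuousAt.rpow_const ?_ (Or.inl (by simpa using hp))
      exact (continuous_const.add continuous_snd.fst).norm.continuousAt
    have c4 : ContinuousAt (fun z : EN N × EN N × ℝ => C₁ * ‖z.1‖ ^ θ * ‖p + z.2.1‖ ^ α * |M|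
        + C₂ * ‖p‖ ^ (α - ν) * ‖z.2.1‖ ^ ν * |M|) 0 := ((((continuousAt_const (y := C₁)).mul c1).mul c3).mul
      (continuousAt_const (y := |M|))).add
      (((continuousAt_const (y := C₂ * ‖p‖ ^ (α - ν))).mul c2).mul (continuousAt_const (y := |M|)))
    have c5 := c4.tendsto
    simp only [Prod.fst_zero, Prod.snd_zero, norm_zero, Real.zero_rpow hθ.ne',
      Real.zero_rpow hν.ne', mul_zero, zero_mul, add_zero] at c5
    exact c5.eventually_lt_const (by positivity)
  have hmap : ∀ f : EN N × EN N × ℝ → EN N, Continuous f → f 0 = x →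
      (∀ z ∈ D, f z ∈ closure Ω) → Tendsto f (𝓝[D] 0) (𝓝[closure Ω] x) := by
    intro f hf h0 hfD
    refine tendsto_nhdsWithin_iff.2 ⟨?_, ?_⟩
    · have := hf.tendsto 0
      rw [h0] at this
      exact this.mono_left nhdsWithin_le_nhds
    · filter_upwards [self_mem_nhdsWithin] with z hz using hfD z hz
  -- error of the first order term
  have E2 : ∀ᶠ z in 𝓝[D] (0 : EN N × EN N × ℝ),
      ⟪b (x + z.1), ‖p + z.2.1‖ ^ α • (p + z.2.1)⟫ - ⟪b x, ‖p‖ ^ α • p⟫ < s / 3 := by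
    have t1 : Tendsto (fun z : EN N × EN N × ℝ => b (x + z.1)) (𝓝[D] 0) (𝓝 (b x)) :=
      (hb x hx).tendsto.comp (hmap (fun z => x + z.1) (by fun_prop) (by simp) fun z hz => hz)
    have t2 : Tendsto (fun z : EN N × EN N × ℝ => ‖p + z.2.1‖ ^ α • (p + z.2.1)) (𝓝[D] 0)
        (𝓝 (‖p‖ ^ α • p)) := by
      have hcc : Continuous fun z : EN N × EN N × ℝ => ‖p + z.2.1‖ ^ α • (p + z.2.1) :=
        (continuous_norm_rpow_smul hα).comp (continuous_const.add continuous_snd.fst)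
      have := hcc.tendsto 0
      simp only [Prod.fst_zero, Prod.snd_zero, add_zero] at this
      exact this.mono_left nhdsWithin_le_nhds
    have t3 := (t1.inner t2).sub_const ⟪b x, ‖p‖ ^ α • p⟫
    rw [sub_self] at t3
    exact t3.eventually_lt_const (by positivity)
  -- error of the zeroth order term
  have E3 : ∀ᶠ z in 𝓝[D] (0 : EN N × EN N × ℝ),
      c₀ (x + z.1) (u x + ⟪p, z.1⟫ + z.2.2) - c₀ x (u x) < s / 3 := by
    have t1 := (hc (x, u x) ⟨hx, trivial⟩).tendsto
    have t2 : Tendsto (fun z : EN N × EN N × ℝ => (x + z.1, u x + ⟪p, z.1⟫ + z.2.2)) (𝓝[D] 0)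
        (𝓝[closure Ω ×ˢ univ] (x, u x)) := by
      refine tendsto_nhdsWithin_iff.2 ⟨?_, ?_⟩
      · have hcc : Continuous fun z : EN N × EN N × ℝ => (x + z.1, u x + ⟪p, z.1⟫ + z.2.2) := by
          fun_prop
        have := hcc.tendsto 0
        simp only [Prod.fst_zero, Prod.snd_zero, add_zero, inner_zero_right] at this
        exact this.mono_left nhdsWithin_le_nhds
      · filter_upwards [self_mem_nhdsWithin] with z hz using ⟨hz, trivial⟩
    have t3 := (t1.comp t2).sub_const (c₀ x (u x))
    rw [sub_self] at t3
    exact t3.eventually_lt_const (by positivity)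
  have E4 : ∀ᶠ z in 𝓝 (0 : EN N × EN N × ℝ), x + z.1 ∈ Ω
      ∨ 0 < ⟪p + z.2.1, gradient ρ (x + z.1)⟫ := by
    rcases hside with hxΩ | hpos
    · have hcc : Continuous fun z : EN N × EN N × ℝ => x + z.1 := by fun_prop
      have := hcc.tendsto 0
      simp only [Prod.fst_zero, add_zero] at this
      exact (this.eventually (hΩ.mem_nhds hxΩ)).mono fun z hz => Or.inl hz
    · have hcc : Continuous fun z : EN N × EN N × ℝ => ⟪p + z.2.1, gradient ρ (x + z.1)⟫ :=
        (continuous_const.add continuous_snd.fst).inner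
          (hρ.comp (continuous_const.add continuous_fst))
      have := hcc.tendsto 0
      simp only [Prod.fst_zero, Prod.snd_zero, add_zero] at this
      exact (this.eventually_const_lt hpos).mono fun z hz => Or.inr hz
  have E5 : ∀ᶠ z in 𝓝 (0 : EN N × EN N × ℝ), ‖z.2.1‖ < ‖p‖ / 2 := by
    have hcc : Continuous fun z : EN N × EN N × ℝ => ‖z.2.1‖ := by fun_prop
    have := hcc.tendsto 0
    simp only [Prod.fst_zero, Prod.snd_zero, norm_zero] at this
    exact this.eventually_lt_const (by positivity)
  obtain ⟨τ, hτ, hball⟩ := Metric.eventually_nhds_iff.1 (E1.and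
    ((eventually_nhdsWithin_iff.1 E2).and ((eventually_nhdsWithin_iff.1 E3).and (E4.and E5))))
  refine ⟨τ, hτ, fun ξ q X hmem hξ hq he hX hXM hjet => ?_⟩
  obtain ⟨e1, e2, e3, e4, e5⟩ := hball (y := (ξ, q, u (x + ξ) - u x - ⟪p, ξ⟫)) (by
    rw [dist_zero_right, Prod.norm_def, Prod.norm_def, max_lt_iff, max_lt_iff]
    exact ⟨hξ, hq, he⟩)
  have e2 := e2 hmem
  have e3 := e3 hmem
  simp only at e1 e2 e3 e4 e5
  rw [show u x + ⟪p, ξ⟫ + (u (x + ξ) - u x - ⟪p, ξ⟫) = u (x + ξ) by ring] at e3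
  have hpq : p + q ≠ 0 := by
    intro h0
    have : q = -p := by rw [← sub_eq_zero, sub_neg_eq_add, add_comm]; exact h0
    rw [this, norm_neg] at e5
    linarith
  have hs0 := hJ.1 (x + ξ) hmem (p + q) hpq X hX hjet e4
  have a1 := (abs_le.1 (h.hol_x (x + ξ) hmem x hx (p + q) hpq X hX)).2
  have a2 := (abs_le.1 (h.hol_p x hx p hp q e5.le X hX)).2
  rw [add_sub_cancel_left] at a1
  have hXM' : ‖X‖ ≤ |M| := hXM.trans (le_abs_self M)
  have hC1 := h.C₁_pos
  have hC2 := h.C₂_pos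
  have a3 : C₁ * ‖ξ‖ ^ θ * ‖p + q‖ ^ α * ‖X‖ ≤ C₁ * ‖ξ‖ ^ θ * ‖p + q‖ ^ α * |M| := by gcongr
  have a4 : C₂ * ‖p‖ ^ (α - ν) * ‖q‖ ^ ν * ‖X‖ ≤ C₂ * ‖p‖ ^ (α - ν) * ‖q‖ ^ ν * |M| := by gcongr
  simp only [inner_smul_right] at e2
  linarith

/-- The theorem on sums for a pair of subsolutions: at a point where `u₁(x) + u₂(y)` is touched
from above by a function of quadratic type, both equations hold with a pair of Hessians satisfying
the matrix inequality, up to a small error. -/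
lemma sums_ineq {H₁ H₂ : EN N → EN N → (EN N →L[ℝ] EN N) → ℝ} (h₁ : EllOp Ω α a A C₁ θ C₂ ν H₁)
    (h₂ : EllOp Ω α a A C₁ θ C₂ ν H₂)
    (hα : -1 < α) (hΩ : IsOpen Ω) (hΩb : Bornology.IsBounded Ω) {ρ : EN N → ℝ}
    (hρ : Continuous (gradient ρ)) {b : EN N → EN N}
    (hb : ContinuousOn b (closure Ω)) {c₁ c₂ : EN N → ℝ → ℝ}
    (hc₁ : ContinuousOn (fun z : EN N × ℝ => c₁ z.1 z.2) (closure Ω ×ˢ univ))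
    (hc₂ : ContinuousOn (fun z : EN N × ℝ => c₂ z.1 z.2) (closure Ω ×ˢ univ)) {u₁ u₂ : EN N → ℝ}
    (hu₁ : UpperSemicontinuousOn u₁ (closure Ω)) (hu₂ : UpperSemicontinuousOn u₂ (closure Ω))
    (hJ₁ : JetSub Ω ρ H₁ b α c₁ u₁) (hJ₂ : JetSub Ω ρ H₂ b α c₂ u₂) {x y p₁ p₂ : EN N}
    (hx : x ∈ closure Ω) (hy : y ∈ closure Ω) (hp₁ : p₁ ≠ 0) (hp₂ : p₂ ≠ 0)
    (hside₁ : x ∈ Ω ∨ 0 < ⟪p₁, gradient ρ x⟫) (hside₂ : y ∈ Ω ∨ 0 < ⟪p₂, gradient ρ y⟫)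
    {S : EN N →L[ℝ] EN N} (hS : SymOp S) {κ : ℝ}
    (hmax : ∀ᶠ z in 𝓝 (0 : EN N × EN N), x + z.1 ∈ closure Ω → y + z.2 ∈ closure Ω →
      u₁ (x + z.1) + u₂ (y + z.2) ≤ u₁ x + u₂ y + ⟪p₁, z.1⟫ + ⟪p₂, z.2⟫
        + 1 / 2 * (⟪S (z.1 - z.2), z.1 - z.2⟫ + κ * (‖z.1‖ ^ 2 + ‖z.2‖ ^ 2)))
    {s : ℝ} (hs : 0 < s) :
    ∃ X₁ X₂ : EN N →L[ℝ] EN N, SymOp X₁ ∧ SymOp X₂ ∧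
      (∀ ξ η : EN N, ⟪X₁ ξ, ξ⟫ + ⟪X₂ η, η⟫ ≤ ⟪S (ξ - η), ξ - η⟫
        + (κ + s) * (‖ξ‖ ^ 2 + ‖η‖ ^ 2)) ∧
      -s ≤ H₁ x p₁ X₁ + ⟪b x, p₁⟫ * ‖p₁‖ ^ α + c₁ x (u₁ x) ∧
      -s ≤ H₂ y p₂ X₂ + ⟪b y, p₂⟫ * ‖p₂‖ ^ α + c₂ y (u₂ y) := by
  obtain ⟨δ', hδ', hball⟩ := Metric.eventually_nhds_iff.1 hmax
  set δ := δ' / 2 with hδ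
  have hδ0 : 0 < δ := by positivity
  have hcpt : IsCompact (closure Ω) := Metric.isCompact_of_isClosed_isBounded isClosed_closure
    hΩb.closure
  let K : EN N → Set (EN N) := fun z => closedBall 0 δ ∩ {ξ | z + ξ ∈ closure Ω}
  have hK : ∀ z, IsCompact (K z) := fun z => (isCompact_closedBall _ _).inter_right
    (isClosed_closure.preimage (continuous_const.add continuous_id))
  have h0 : ∀ z ∈ closure Ω, (0 : EN N) ∈ K z := fun z hz =>
    ⟨by simp [hδ0.le], by simpa using hz⟩
  let U : (EN N → ℝ) → EN N → EN N → EN N → ℝ := fun f z p ξ => f (z + ξ) - f z - ⟪p, ξ⟫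
  have hU : ∀ f z p, UpperSemicontinuousOn f (closure Ω) → UpperSemicontinuousOn (U f z p) (K z) := by
    intro f z p hf
    have g1 : UpperSemicontinuousOn (fun ξ => f (z + ξ)) (K z) :=
      hf.comp (g := fun ξ : EN N => z + ξ) (continuous_const.add continuous_id).continuousOn
        (fun ξ hξ => hξ.2)
    have g2 : UpperSemicontinuousOn (fun ξ => -(f z) - ⟪p, ξ⟫) (K z) :=
      Continuous.upperSemicontinuous (by fun_prop) |>.upperSemicontinuousOn _
    have e : U f z p = fun ξ => f (z + ξ) + (-(f z) - ⟪p, ξ⟫) := by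
      funext ξ; simp only [U]; ring
    rw [e]
    exact g1.add g2
  obtain ⟨M, hM⟩ := theorem_on_sums (hK x) (hK y) (hU u₁ x p₁ hu₁) (hU u₂ y p₂ hu₂) (h0 x hx)
    (h0 y hy) (by simp [U]) (by simp [U]) S hS κ (by
      intro ξ hξ η hη
      have := hball (y := (ξ, η)) (by
        rw [dist_zero_right, Prod.norm_def, max_lt_iff]
        have h1 : ‖ξ‖ ≤ δ := by simpa using hξ.1
        have h2 : ‖η‖ ≤ δ := by simpa using hη.1
        constructor <;> simp only <;> linarith) hξ.2 hη.2
      simp only [U]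
      simp only at this
      linarith) hs
  obtain ⟨τ₁, hτ₁, ht₁⟩ := jet_transfer h₁ hα hΩ hρ hb hc₁ hJ₁ hx hp₁ hside₁ M hs
  obtain ⟨τ₂, hτ₂, ht₂⟩ := jet_transfer h₂ hα hΩ hρ hb hc₂ hJ₂ hy hp₂ hside₂ M hs
  obtain ⟨ξ, hξ, η, hη, q₁, q₂, X₁, X₂, hX₁, hX₂, hM₁, hM₂, nξ, nη, nq₁, nq₂, nU₁, nU₂, j₁, j₂,
    hform⟩ := hM (min δ (min τ₁ τ₂)) (by positivity)
  simp only [lt_min_iff] at nξ nη nq₁ nq₂ nU₁ nU₂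
  have hjet : ∀ (f : EN N → ℝ) (z p q ξ : EN N) (X : EN N →L[ℝ] EN N), ‖ξ‖ < δ →
      (∀ᶠ ζ in 𝓝 (0 : EN N), ξ + ζ ∈ K z →
        U f z p (ξ + ζ) ≤ U f z p ξ + ⟪q, ζ⟫ + 1 / 2 * ⟪X ζ, ζ⟫) →
      ∀ᶠ ζ in 𝓝 (0 : EN N), z + ξ + ζ ∈ closure Ω →
        f (z + ξ + ζ) ≤ f (z + ξ) + ⟪p + q, ζ⟫ + 1 / 2 * ⟪X ζ, ζ⟫ := by
    intro f z p q ξ X hξ hj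
    have hnear : ∀ᶠ ζ in 𝓝 (0 : EN N), ‖ξ + ζ‖ < δ := by
      have hcc : Continuous fun ζ : EN N => ‖ξ + ζ‖ := by fun_prop
      have := hcc.tendsto 0
      rw [add_zero] at this
      exact this.eventually_lt_const hξ
    filter_upwards [hj, hnear] with ζ h1 h2 h3
    have h4 := h1 ⟨by simpa using h2.le, by
      rw [add_assoc] at h3
      exact h3⟩
    simp only [U, inner_add_right, ← add_assoc] at h4
    rw [inner_add_left]
    linarith
  exact ⟨X₁, X₂, hX₁, hX₂, hform,
    ht₁ ξ q₁ X₁ hξ.2 nξ.2.1 nq₁.2.1 nU₁.2.1 hX₁ hM₁ (hjet u₁ x p₁ q₁ ξ X₁ nξ.1 j₁),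
    ht₂ η q₂ X₂ hη.2 nη.2.2 nq₂.2.2 nU₂.2.2 hX₂ hM₂ (hjet u₂ y p₂ q₂ η X₂ nη.1 j₂)⟩

end Transfer

/-! ### The basic inequality at off-diagonal maxima -/

section KeyInequality

variable {N : ℕ} {Ω : Set (EN N)} {α a A C₁ θ C₂ ν : ℝ}

/-- A pair of functions `u₁`, `u₂` to be compared: `u₁` is a subsolution for `H`, and `-u₂` is a
supersolution for `H`, expressed as `u₂` being a subsolution for the dual operator. -/
structure PairData (Ω : Set (EN N)) (ρ : EN N → ℝ) (α a A C₁ θ C₂ ν : ℝ)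
    (H : EN N → EN N → (EN N →L[ℝ] EN N) → ℝ) (b : EN N → EN N) (c₁ c₂ : EN N → ℝ → ℝ)
    (u₁ u₂ : EN N → ℝ) : Prop where
  ell : EllOp Ω α a A C₁ θ C₂ ν H
  hα : -1 < α
  isOpen : IsOpen Ω
  bdd : Bornology.IsBounded Ω
  hρ : Continuous (gradient ρ)
  hb : ContinuousOn b (closure Ω)
  hc₁ : ContinuousOn (fun z : EN N × ℝ => c₁ z.1 z.2) (closure Ω ×ˢ univ)
  hc₂ : ContinuousOn (fun z : EN N × ℝ => c₂ z.1 z.2) (closure Ω ×ˢ univ)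
  usc₁ : UpperSemicontinuousOn u₁ (closure Ω)
  usc₂ : UpperSemicontinuousOn u₂ (closure Ω)
  jet₁ : JetSub Ω ρ H b α c₁ u₁
  jet₂ : JetSub Ω ρ (dualOp H) b α c₂ u₂

/-- The conditions at the distance `r` on a penalty profile `g(|x - y|²)`; `g₁` and `g₂` are the
first two derivatives of `g` at `r²`. -/
structure IsProfile (g : ℝ → ℝ) (g₁ g₂ m r : ℝ) : Prop where
  pos₀ : 0 < g (r ^ 2)
  pos₁ : 0 < g₁
  le_val : r ^ 2 * g₁ ≤ m * g (r ^ 2)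
  val_le : g (r ^ 2) ≤ 4 * r ^ 2 * g₁
  snd_le : |g₂| * r ^ 2 ≤ m * g₁
  taylor : ∀ ε > 0, ∀ᶠ δ in 𝓝 (0 : ℝ), |g (r ^ 2 + δ) - g (r ^ 2) - g₁ * δ
      - 1 / 2 * g₂ * δ ^ 2| ≤ ε * δ ^ 2

/-- The gradient of the penalty in its first variable. -/
def penGrad (σ : EN N → ℝ) (dσ : EN N → EN N) (g₀ g₁ : ℝ) (x y : EN N) : EN N :=
  (2 * (1 + σ x + σ y) * g₁) • (x - y) + g₀ • dσ x

variable {ρ : EN N → ℝ} {m : ℝ} {σ : EN N → ℝ} {dσ : EN N → EN N} {C : ℝ}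

/-- At boundary points the gradient of the penalty points strictly outwards. -/
lemma penGrad_side (hΩ : IsOpen Ω) (hB : IsBarrier Ω ρ m σ dσ C) {x y : EN N}
    (hx : x ∈ closure Ω) (hy : y ∈ closure Ω) {g : ℝ → ℝ} {g₁ g₂ : ℝ}
    (hg : IsProfile g g₁ g₂ m ‖x - y‖) :
    x ∈ Ω ∨ 0 < ⟪penGrad σ dσ (g (‖x - y‖ ^ 2)) g₁ x y, gradient ρ x⟫ := by
  rcases mem_or_frontier hΩ hx with h | h
  · exact Or.inl h
  · right
    have h1 := hB.pos x hx
    have h2 := hB.pos y hy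
    have h3 := hB.le_one x hx
    have h4 := hB.le_one y hy
    have h5 := hg.pos₁
    refine hB.bdry x h y hy _ _ (by positivity) hg.pos₀ ?_
    have : 2 * (1 + σ x + σ y) * g₁ * ‖x - y‖ ^ 2 ≤ 2 * 3 * g₁ * ‖x - y‖ ^ 2 := by
      gcongr; linarith
    linarith [hg.le_val]

/-- At short distance the gradient of the penalty is comparable to `g₁ |x - y|`. -/
lemma penGrad_norm (hB : IsBarrier Ω ρ m σ dσ C) {x y : EN N}
    (hx : x ∈ closure Ω) (hy : y ∈ closure Ω) {g : ℝ → ℝ} {g₁ g₂ : ℝ}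
    (hg : IsProfile g g₁ g₂ m ‖x - y‖) (hr : 16 * C * ‖x - y‖ ≤ 1) :
    g₁ * ‖x - y‖ ≤ ‖penGrad σ dσ (g (‖x - y‖ ^ 2)) g₁ x y‖ ∧
      ‖penGrad σ dσ (g (‖x - y‖ ^ 2)) g₁ x y‖ ≤ 7 * (g₁ * ‖x - y‖) := by
  have h1 := hB.pos x hx
  have h2 := hB.pos y hy
  have h3 := hB.le_one x hx
  have h4 := hB.le_one y hy
  have h5 := hg.pos₁
  set r := ‖x - y‖ with hrdef
  have hr0 : 0 ≤ r := norm_nonneg _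
  have hC : 0 ≤ C := zero_le_one.trans hB.one_le
  have n1 : ‖(2 * (1 + σ x + σ y) * g₁) • (x - y)‖ = 2 * (1 + σ x + σ y) * g₁ * r := by
    rw [norm_smul, Real.norm_of_nonneg (by positivity)]
  have n2 : ‖g (r ^ 2) • dσ x‖ ≤ g₁ * r := by
    rw [norm_smul, Real.norm_of_nonneg hg.pos₀.le]
    calc g (r ^ 2) * ‖dσ x‖ ≤ (4 * r ^ 2 * g₁) * C := by
          gcongr
          · exact hg.val_le
          · exact hB.norm_le x hx
      _ = (16 * C * r) * (g₁ * r) / 4 := by ring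
      _ ≤ 1 * (g₁ * r) / 4 := by gcongr
      _ ≤ g₁ * r := by nlinarith [mul_nonneg h5.le hr0]
  have lo : 2 * (g₁ * r) ≤ 2 * (1 + σ x + σ y) * g₁ * r := by
    have : 2 * 1 * g₁ * r ≤ 2 * (1 + σ x + σ y) * g₁ * r := by gcongr; linarith
    linarith
  have up : 2 * (1 + σ x + σ y) * g₁ * r ≤ 6 * (g₁ * r) := by
    have : 2 * (1 + σ x + σ y) * g₁ * r ≤ 2 * 3 * g₁ * r := by gcongr; linarith
    linarith
  constructor
  · have := norm_sub_le_norm_add ((2 * (1 + σ x + σ y) * g₁) • (x - y)) (g (r ^ 2) • dσ x)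
    rw [penGrad]
    linarith
  · have := norm_add_le ((2 * (1 + σ x + σ y) * g₁) • (x - y)) (g (r ^ 2) • dσ x)
    rw [penGrad]
    linarith

lemma penGrad_add (hB : IsBarrier Ω ρ m σ dσ C) {x y : EN N}
    (hx : x ∈ closure Ω) (hy : y ∈ closure Ω) {g : ℝ → ℝ} {g₁ g₂ : ℝ}
    (hg : IsProfile g g₁ g₂ m ‖x - y‖) :
    ‖penGrad σ dσ (g (‖x - y‖ ^ 2)) g₁ x y + penGrad σ dσ (g (‖x - y‖ ^ 2)) g₁ y x‖
      ≤ 8 * C * ‖x - y‖ * (g₁ * ‖x - y‖) := by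
  have hC : 0 ≤ C := zero_le_one.trans hB.one_le
  have e : penGrad σ dσ (g (‖x - y‖ ^ 2)) g₁ x y + penGrad σ dσ (g (‖x - y‖ ^ 2)) g₁ y x
      = g (‖x - y‖ ^ 2) • (dσ x + dσ y) := by
    rw [penGrad, penGrad, show 1 + σ y + σ x = 1 + σ x + σ y by ring]
    module
  rw [e, norm_smul, Real.norm_of_nonneg hg.pos₀.le]
  have := norm_add_le (dσ x) (dσ y)
  have h1 := hB.norm_le x hx
  have h2 := hB.norm_le y hy
  have h5 := hg.pos₁
  calc _ ≤ (4 * ‖x - y‖ ^ 2 * g₁) * (2 * C) := by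
        gcongr
        · exact hg.val_le
        · linarith
    _ = _ := by ring

/-- The coefficient operator and constant in the expansion of the penalty, with the free parameter
of the expansion chosen as `4 C √r`. -/
lemma penalty_expansion' (hm : 1 ≤ m) (hB : IsBarrier Ω ρ m σ dσ C) {x y : EN N}
    (hx : x ∈ closure Ω) (hy : y ∈ closure Ω) (hxy : x ≠ y) {g : ℝ → ℝ} {g₁ g₂ : ℝ}
    (hg : IsProfile g g₁ g₂ m ‖x - y‖) (hr1 : ‖x - y‖ ≤ 1) :
    ∃ (S : EN N →L[ℝ] EN N) (κ : ℝ), SymOp S ∧ ‖S‖ ≤ 20 * m * g₁ ∧ 0 ≤ κ ∧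
      κ ≤ (16 * C + 16 * C ^ 2) * ‖x - y‖ ^ (3 / 2 : ℝ) * g₁ ∧
      (g₁ + 2 * g₂ * ‖x - y‖ ^ 2 ≤ 0 → ∃ e : EN N, ‖e‖ = 1 ∧
        -(8 * (g₁ + 2 * g₂ * ‖x - y‖ ^ 2)) - 2 * g₁ * √‖x - y‖ ≤ -(4 * ⟪S e, e⟫)) ∧
      ∀ᶠ z in 𝓝 (0 : EN N × EN N), x + z.1 ∈ closure Ω → y + z.2 ∈ closure Ω →
        (1 + σ (x + z.1) + σ (y + z.2)) * g (‖(x + z.1) - (y + z.2)‖ ^ 2)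
          ≤ (1 + σ x + σ y) * g (‖x - y‖ ^ 2)
            + ⟪penGrad σ dσ (g (‖x - y‖ ^ 2)) g₁ x y, z.1⟫
            + ⟪penGrad σ dσ (g (‖x - y‖ ^ 2)) g₁ y x, z.2⟫
            + 1 / 2 * (⟪S (z.1 - z.2), z.1 - z.2⟫ + κ * (‖z.1‖ ^ 2 + ‖z.2‖ ^ 2)) := by
  have hC1 := hB.one_le
  have hC : 0 < C := by linarith
  have hr : 0 < ‖x - y‖ := norm_pos_iff.2 (sub_ne_zero.2 hxy)
  have g1p := hg.pos₁
  have g0p := hg.pos₀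
  have h1 := hB.pos x hx
  have h2 := hB.pos y hy
  have h3 := hB.le_one x hx
  have h4 := hB.le_one y hy
  have hsq : 0 < √‖x - y‖ := Real.sqrt_pos.2 hr
  have hexp := penalty_expansion hB hx hy (g := g) (g₁ := g₁) (g₂ := g₂) g0p.le g1p.le hg.taylor
    (k := 4 * C * √‖x - y‖) (ε := g (‖x - y‖ ^ 2) * C) (by positivity) (by positivity)
  set r := ‖x - y‖ with hrdef
  set W := 1 + σ x + σ y with hW
  have hW1 : 1 ≤ W := by linarith
  have hW3 : W ≤ 3 := by linarith
  have hrs : r = √r * √r := (Real.mul_self_sqrt hr.le).symm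
  have hs1 : √r ≤ 1 := Real.sqrt_le_one.2 hr1
  have ecoef : 2 * C * g₁ * r / (4 * C * √r) = g₁ * √r / 2 := by
    rw [div_eq_div_iff (by positivity) (by positivity)]
    calc 2 * C * g₁ * r * 2 = 4 * C * g₁ * (√r * √r) := by rw [← hrs]; ring
      _ = _ := by ring
  rw [ecoef] at hexp
  have h32 : r ^ (3 / 2 : ℝ) = r * √r := by
    rw [show (3 / 2 : ℝ) = 1 + 1 / 2 by norm_num, Real.rpow_add hr, Real.rpow_one,
      ← Real.sqrt_eq_rpow]
  refine ⟨profOp (2 * W * g₁ + g₁ * √r / 2) (4 * W * g₂) (x - y),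
    2 * g (r ^ 2) * C + 4 * C * g₁ * r * (4 * C * √r) + 2 * (g (r ^ 2) * C),
    profOp_symm _ _ _, ?_, ?_, ?_, ?_, ?_⟩
  · refine (profOp_norm _ _ _).trans ?_
    rw [← hrdef, abs_of_nonneg (by positivity), abs_mul, abs_of_nonneg (by positivity : 0 ≤ 4 * W)]
    have i1 : 4 * W * |g₂| * r ^ 2 ≤ 12 * (m * g₁) := by
      calc 4 * W * |g₂| * r ^ 2 = 4 * W * (|g₂| * r ^ 2) := by ring
        _ ≤ 4 * 3 * (m * g₁) := by
          have := hg.snd_le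
          gcongr
        _ = _ := by ring
    have i2 : 2 * W * g₁ ≤ 2 * 3 * g₁ := by gcongr
    have i3 : g₁ * √r ≤ g₁ * 1 := by gcongr
    have i4 : 1 * g₁ ≤ m * g₁ := by gcongr
    linarith
  · positivity
  · rw [h32]
    have i1 := mul_le_mul_of_nonneg_right hg.val_le hC.le
    have i2 : r ^ 2 * (g₁ * C) ≤ r * √r * (g₁ * C) := by
      have : r * r ≤ r * √r := by
        gcongr
        calc r = √r * √r := hrs
          _ ≤ √r * 1 := by gcongr
          _ = √r := mul_one _
      rw [pow_two]
      gcongr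
    linarith
  · intro hneg
    refine ⟨r⁻¹ • (x - y), ?_, ?_⟩
    · rw [norm_smul, norm_inv, Real.norm_of_nonneg hr.le, ← hrdef, inv_mul_cancel₀ hr.ne']
    · rw [profOp_inner, inner_smul_right, real_inner_self_eq_norm_sq, norm_smul, norm_inv,
        Real.norm_of_nonneg hr.le, ← hrdef, inv_mul_cancel₀ hr.ne']
      have e1 : r⁻¹ * r ^ 2 = r := by field_simp
      rw [e1]
      have := mul_le_mul_of_nonpos_right hW1 hneg
      linarith
  · filter_upwards [hexp] with z hz hzx hzy
    refine (hz hzx hzy).trans (le_of_eq ?_)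
    have e : 1 + σ y + σ x = W := by rw [hW]; ring
    simp only [penGrad, e, ← hW]

end KeyInequality

section KeyInequality2

variable {N : ℕ} {Ω : Set (EN N)} {α a A C₁ θ C₂ ν : ℝ}
  {ρ : EN N → ℝ} {m : ℝ} {σ : EN N → ℝ} {dσ : EN N → EN N} {C : ℝ}
  {H : EN N → EN N → (EN N →L[ℝ] EN N) → ℝ} {b : EN N → EN N} {c₁ c₂ : EN N → ℝ → ℝ}
  {u₁ u₂ : EN N → ℝ}

/-- The basic inequality of the doubling method: at an off-diagonal local maximum of
`u₁ x + u₂ y - (1 + σ x + σ y) g(|x - y|²)`, the second order terms are bounded by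
`|p|^α (-(a/2) t + Cs r^β g₁)` with `β > 1`, where `t` sees the concavity of the profile. -/
lemma key_ineq (hP : PairData Ω ρ α a A C₁ θ C₂ ν H b c₁ c₂ u₁ u₂) (hm : 1 ≤ m)
    (hB : IsBarrier Ω ρ m σ dσ C) :
    ∃ r₀ > (0 : ℝ), r₀ ≤ 1 / 9 ∧ 16 * C * r₀ ≤ 1 ∧ ∃ Cs > (0 : ℝ), ∃ β > (1 : ℝ),
      ∀ x ∈ closure Ω, ∀ y ∈ closure Ω, x ≠ y → ‖x - y‖ ≤ r₀ → ∀ (g : ℝ → ℝ) (g₁ g₂ : ℝ),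
      IsProfile g g₁ g₂ m ‖x - y‖ →
      (∀ᶠ z in 𝓝 (0 : EN N × EN N), x + z.1 ∈ closure Ω → y + z.2 ∈ closure Ω →
        u₁ (x + z.1) + u₂ (y + z.2)
            - (1 + σ (x + z.1) + σ (y + z.2)) * g (‖(x + z.1) - (y + z.2)‖ ^ 2)
          ≤ u₁ x + u₂ y - (1 + σ x + σ y) * g (‖x - y‖ ^ 2)) →
      ∃ t : ℝ, 0 ≤ t ∧
        (g₁ + 2 * g₂ * ‖x - y‖ ^ 2 ≤ 0 →
          -(8 * (g₁ + 2 * g₂ * ‖x - y‖ ^ 2)) - 2 * g₁ * √‖x - y‖ ≤ t) ∧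
        0 ≤ ‖penGrad σ dσ (g (‖x - y‖ ^ 2)) g₁ y x‖ ^ α
              * (-(a / 2) * t + Cs * ‖x - y‖ ^ β * g₁)
          + ⟪b x, penGrad σ dσ (g (‖x - y‖ ^ 2)) g₁ x y⟫
              * ‖penGrad σ dσ (g (‖x - y‖ ^ 2)) g₁ x y‖ ^ α
          + ⟪b y, penGrad σ dσ (g (‖x - y‖ ^ 2)) g₁ y x⟫
              * ‖penGrad σ dσ (g (‖x - y‖ ^ 2)) g₁ y x‖ ^ α
          + c₁ x (u₁ x) + c₂ y (u₂ y) := by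
  have ha := hP.ell.a_pos
  have hA : 0 < A := ha.trans_le hP.ell.a_le
  have hC1 := hB.one_le
  have hC : 0 < C := by linarith
  have hC₁ := hP.ell.C₁_pos
  have hC₂ := hP.ell.C₂_pos
  obtain ⟨hθ1, hθ2⟩ := hP.ell.θ_mem
  obtain ⟨hν1, hν2⟩ := hP.ell.ν_mem
  set θ' := min θ ν with hθ'
  have hθ'1 : 1 / 2 < θ' := lt_min hθ1 hν1
  set CE := C₁ + C₂ * (8 * C) ^ ν with hCE
  have hCE0 : 0 < CE := by positivity
  set r₀ := min (1 / 9) (min (1 / (16 * C)) ((a / (2 * CE)) ^ 2)) with hr₀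
  have hr₀0 : 0 < r₀ := by positivity
  have hr₀1 : r₀ ≤ 1 / 9 := min_le_left _ _
  have hr₀2 : r₀ ≤ 1 / (16 * C) := (min_le_right _ _).trans (min_le_left _ _)
  have hr₀3 : r₀ ≤ (a / (2 * CE)) ^ 2 := (min_le_right _ _).trans (min_le_right _ _)
  have hr₀4 : 16 * C * r₀ ≤ 1 := by
    rw [le_div_iff₀ (by positivity)] at hr₀2; linarith
  set β := min (2 * θ') (3 / 2) with hβ
  have hβ1 : 1 < β := lt_min (by linarith) (by norm_num)
  set Cs := 2 / a * CE ^ 2 * (20 * m) + (2 * A * N + A) * (16 * C + 16 * C ^ 2 + 1) + 2 with hCs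
  have hCs0 : 0 < Cs := by positivity
  refine ⟨r₀, hr₀0, hr₀1, hr₀4, Cs, hCs0, β, hβ1, ?_⟩
  intro x hx y hy hxy hr g g₁ g₂ hg hmax
  obtain ⟨S, κ, hS, hSn, hκ0, hκ, hconc, hexp⟩ :=
    penalty_expansion' hm hB hx hy hxy hg (by linarith)
  have hxr : 0 < ‖x - y‖ := norm_pos_iff.2 (sub_ne_zero.2 hxy)
  have hsw : ‖y - x‖ = ‖x - y‖ := norm_sub_rev y x
  have hg' : IsProfile g g₁ g₂ m ‖y - x‖ := hsw ▸ hg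
  have hCr : 16 * C * ‖x - y‖ ≤ 1 := by
    have : 16 * C * ‖x - y‖ ≤ 16 * C * r₀ := by gcongr
    linarith
  have n1 := penGrad_norm hB hx hy hg hCr
  have n2 := penGrad_norm hB hy hx hg' (by rw [hsw]; exact hCr)
  have s1 := penGrad_side hP.isOpen hB hx hy hg
  have s2 := penGrad_side hP.isOpen hB hy hx hg'
  have nq := penGrad_add hB hx hy hg
  rw [hsw] at n2 s2
  have g1p := hg.pos₁
  set r := ‖x - y‖ with hrdef
  set p₁ := penGrad σ dσ (g (r ^ 2)) g₁ x y with hp₁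
  set p₂ := penGrad σ dσ (g (r ^ 2)) g₁ y x with hp₂
  have hgr : 0 < g₁ * r := by positivity
  have hp₁0 : 0 < ‖p₁‖ := hgr.trans_le n1.1
  have hp₂0 : 0 < ‖p₂‖ := hgr.trans_le n2.1
  have hpα : 0 < ‖p₂‖ ^ α := Real.rpow_pos_of_pos hp₂0 α
  have hrβ : 0 < r ^ β := Real.rpow_pos_of_pos hxr β
  set s := min (g₁ * r ^ β) (‖p₂‖ ^ α * (g₁ * r ^ β)) with hs
  have hs0 : 0 < s := by positivity
  have hs1 : s ≤ g₁ * r ^ β := min_le_left _ _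
  have hs2 : s ≤ ‖p₂‖ ^ α * (g₁ * r ^ β) := min_le_right _ _
  have hmax' : ∀ᶠ z in 𝓝 (0 : EN N × EN N), x + z.1 ∈ closure Ω → y + z.2 ∈ closure Ω →
      u₁ (x + z.1) + u₂ (y + z.2) ≤ u₁ x + u₂ y + ⟪p₁, z.1⟫ + ⟪p₂, z.2⟫
        + 1 / 2 * (⟪S (z.1 - z.2), z.1 - z.2⟫ + κ * (‖z.1‖ ^ 2 + ‖z.2‖ ^ 2)) := by
    filter_upwards [hmax, hexp] with z h1 h2 hzx hzy
    linarith [h1 hzx hzy, h2 hzx hzy]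
  obtain ⟨X₁, X₂, hX₁, hX₂, hform, i1, i2⟩ := sums_ineq hP.ell hP.ell.dual hP.hα hP.isOpen hP.bdd
    hP.hρ hP.hb hP.hc₁ hP.hc₂ hP.usc₁ hP.usc₂ hP.jet₁ hP.jet₂ hx hy (norm_pos_iff.1 hp₁0)
    (norm_pos_iff.1 hp₂0) s1 s2 hS hmax' hs0
  have hq : ‖p₁ + p₂‖ ≤ 8 * C * r * ‖p₂‖ := nq.trans (by gcongr; exact n2.1)
  have hr1 : r ≤ 1 := by linarith
  have hE1 : C₁ * r ^ θ + C₂ * (‖p₁ + p₂‖ / ‖-p₂‖) ^ ν ≤ CE * r ^ θ' := by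
    have j1 : r ^ θ ≤ r ^ θ' := Real.rpow_le_rpow_of_exponent_ge hxr hr1 (min_le_left _ _)
    have j2 : r ^ ν ≤ r ^ θ' := Real.rpow_le_rpow_of_exponent_ge hxr hr1 (min_le_right _ _)
    have j3 : ‖p₁ + p₂‖ / ‖-p₂‖ ≤ 8 * C * r := by
      rw [norm_neg, div_le_iff₀ hp₂0]; exact hq
    have j4 : (‖p₁ + p₂‖ / ‖-p₂‖) ^ ν ≤ (8 * C) ^ ν * r ^ ν := by
      rw [← Real.mul_rpow (by positivity) hxr.le]
      exact Real.rpow_le_rpow (by positivity) j3 (by linarith)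
    calc C₁ * r ^ θ + C₂ * (‖p₁ + p₂‖ / ‖-p₂‖) ^ ν
        ≤ C₁ * r ^ θ' + C₂ * ((8 * C) ^ ν * r ^ θ') := by
          gcongr
          exact j4.trans (by gcongr)
      _ = CE * r ^ θ' := by rw [hCE]; ring
  have hEa : CE * r ^ θ' ≤ a / 2 := by
    have k1 : r ^ θ' ≤ a / (2 * CE) := by
      calc r ^ θ' ≤ r ^ (1 / 2 : ℝ) := Real.rpow_le_rpow_of_exponent_ge hxr hr1 hθ'1.le
        _ = √r := (Real.sqrt_eq_rpow r).symm
        _ ≤ a / (2 * CE) := by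
          rw [Real.sqrt_le_left (by positivity)]
          exact hr.trans hr₀3
    calc CE * r ^ θ' ≤ CE * (a / (2 * CE)) := by gcongr
      _ = a / 2 := by field_simp
  obtain ⟨t, ht0, ht, hcmp⟩ := ell_compare hP.ell hx hy (p := -p₂) (q := p₁ + p₂)
    (X := X₁) (Y := -X₂) (S := S) (κ := κ + s) (E := CE * r ^ θ')
    (neg_ne_zero.2 (norm_pos_iff.1 hp₂0))
    (by
      rw [norm_neg]
      refine hq.trans ?_
      have : 16 * C * r * ‖p₂‖ ≤ 1 * ‖p₂‖ := by gcongr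
      linarith) hX₁ hX₂.neg (by positivity) (by positivity) hEa hE1
    (by intro ξ η; rw [neg_neg]; exact hform ξ η)
  refine ⟨t, ht0, ?_, ?_⟩
  · intro hneg
    obtain ⟨e, he, h⟩ := hconc hneg
    exact h.trans (ht e he)
  · rw [show -p₂ + (p₁ + p₂) = p₁ by abel, norm_neg] at hcmp
    have i2' : -s ≤ - H y (-p₂) (-X₂) + ⟪b y, p₂⟫ * ‖p₂‖ ^ α + c₂ y (u₂ y) := i2
    have e1 : (CE * r ^ θ') ^ 2 ≤ CE ^ 2 * r ^ β := by
      rw [mul_pow, ← Real.rpow_natCast (r ^ θ') 2, ← Real.rpow_mul hxr.le]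
      refine mul_le_mul_of_nonneg_left ?_ (by positivity)
      refine Real.rpow_le_rpow_of_exponent_ge hxr hr1 ((min_le_left _ _).trans ?_)
      rw [mul_comm]; norm_num
    have e2 : r ^ (3 / 2 : ℝ) ≤ r ^ β :=
      Real.rpow_le_rpow_of_exponent_ge hxr hr1 (min_le_right _ _)
    have e3 : 2 / a * (CE * r ^ θ') ^ 2 * ‖S‖ ≤ 2 / a * (CE ^ 2 * r ^ β) * (20 * m * g₁) := by
      gcongr
    have e4 : (2 * A * N + A) * (κ + s)
        ≤ (2 * A * N + A) * ((16 * C + 16 * C ^ 2) * r ^ β * g₁ + g₁ * r ^ β) := by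
      gcongr
      refine hκ.trans ?_
      gcongr
    have e5 : -(a / 2) * t + 2 / a * (CE * r ^ θ') ^ 2 * ‖S‖ + (2 * A * N + A) * (κ + s)
        ≤ -(a / 2) * t + Cs * r ^ β * g₁ - 2 * (g₁ * r ^ β) := by
      refine le_trans (add_le_add (add_le_add le_rfl e3) e4) (le_of_eq ?_)
      rw [hCs]; ring
    have e6 := mul_le_mul_of_nonneg_left e5 hpα.le
    rw [mul_sub] at e6
    linarith

end KeyInequality2

/-! ### Maxima on the diagonal -/

section Diagonal

variable {N : ℕ} {Ω : Set (EN N)} {α a A C₁ θ C₂ ν : ℝ}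
  {ρ : EN N → ℝ} {m : ℝ} {σ : EN N → ℝ} {dσ : EN N → EN N} {C : ℝ}

lemma IsBarrier.continuousOn (hB : IsBarrier Ω ρ m σ dσ C) : ContinuousOn σ (closure Ω) := by
  intro x hx
  rw [ContinuousWithinAt, tendsto_iff_norm_sub_tendsto_zero]
  have hn : Tendsto (fun y => C * ‖y - x‖ + C * ‖y - x‖ ^ 2) (𝓝[closure Ω] x) (𝓝 0) := by
    have hc : Continuous fun y => C * ‖y - x‖ + C * ‖y - x‖ ^ 2 := by fun_prop
    have := hc.tendsto x
    simp only [sub_self, norm_zero, mul_zero, ne_eq, OfNat.ofNat_ne_zero, not_false_eq_true,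
      zero_pow, add_zero] at this
    exact this.mono_left nhdsWithin_le_nhds
  refine squeeze_zero' (Eventually.of_forall fun y => norm_nonneg _) ?_ hn
  filter_upwards [self_mem_nhdsWithin] with y hy
  have h1 := hB.taylor x hx y hy
  have h2 : |⟪dσ x, y - x⟫| ≤ C * ‖y - x‖ :=
    (abs_real_inner_le_norm _ _).trans (by gcongr; exact hB.norm_le x hx)
  rw [Real.norm_eq_abs]
  have h3 := abs_add_le (σ y - σ x - ⟪dσ x, y - x⟫) ⟪dσ x, y - x⟫
  rw [sub_add_cancel] at h3
  linarith

/-- Pure powers are admissible penalty profiles. -/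
lemma isProfile_pow {n : ℕ} (hn : 2 ≤ n) (hnm : (n : ℝ) ≤ m) {K r : ℝ} (hK : 0 < K) (hr : 0 < r) :
    IsProfile (fun s => K * s ^ n) (K * (n * (r ^ 2) ^ (n - 1)))
      (K * (n * ((n - 1 : ℕ) * (r ^ 2) ^ (n - 1 - 1)))) m r := by
  have hn0 : (0 : ℝ) < n := by positivity
  have hn1 : (1 : ℝ) ≤ n := by exact_mod_cast (by omega : 1 ≤ n)
  have e1 : (r ^ 2) ^ n = r ^ 2 * (r ^ 2) ^ (n - 1) := by
    rw [← pow_succ', Nat.sub_add_cancel (by omega)]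
  have e2 : (r ^ 2) ^ (n - 1) = r ^ 2 * (r ^ 2) ^ (n - 1 - 1) := by
    rw [← pow_succ', Nat.sub_add_cancel (by omega)]
  have hq : 0 < (r ^ 2) ^ (n - 1) := by positivity
  refine ⟨by positivity, by positivity, ?_, ?_, ?_, ?_⟩
  · have : r ^ 2 * (K * (n * (r ^ 2) ^ (n - 1))) = n * (K * (r ^ 2) ^ n) := by rw [e1]; ring
    rw [this]
    gcongr
  · have : 4 * r ^ 2 * (K * (n * (r ^ 2) ^ (n - 1))) = 4 * n * (K * (r ^ 2) ^ n) := by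
      rw [e1]; ring
    rw [this]
    have h0 : 0 ≤ K * (r ^ 2) ^ n := by positivity
    have : 1 * (K * (r ^ 2) ^ n) ≤ (4 * n) * (K * (r ^ 2) ^ n) := by gcongr; linarith
    linarith
  · rw [abs_of_nonneg (by positivity)]
    have : K * (n * ((n - 1 : ℕ) * (r ^ 2) ^ (n - 1 - 1))) * r ^ 2
        = ((n - 1 : ℕ) : ℝ) * (K * (n * (r ^ 2) ^ (n - 1))) := by rw [e2]; ring
    rw [this]
    gcongr
    exact le_trans (by exact_mod_cast Nat.sub_le _ _) hnm
  · intro ε hε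
    have h1 : ∀ s : ℝ, HasDerivAt (fun s : ℝ => K * s ^ n) (K * (n * s ^ (n - 1))) s :=
      fun s => (hasDerivAt_pow n s).const_mul K
    have h2 : HasDerivAt (fun s : ℝ => K * (n * s ^ (n - 1)))
        (K * (n * ((n - 1 : ℕ) * (r ^ 2) ^ (n - 1 - 1)))) (r ^ 2) :=
      ((hasDerivAt_pow (n - 1) (r ^ 2)).const_mul (n : ℝ)).const_mul K
    exact taylor_two_real (Eventually.of_forall h1) h2 hε

lemma EllOp.le_of_form_le {H : EN N → EN N → (EN N →L[ℝ] EN N) → ℝ}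
    (h : EllOp Ω α a A C₁ θ C₂ ν H) {x p : EN N} (hx : x ∈ closure Ω) (hp : p ≠ 0)
    {T : EN N →L[ℝ] EN N} (hT : SymOp T) {k : ℝ} (hk : 0 ≤ k)
    (hTk : ∀ ξ, ⟪T ξ, ξ⟫ ≤ k * ‖ξ‖ ^ 2) : H x p T ≤ A * ‖p‖ ^ α * (k * N) := by
  have hpa : 0 < ‖p‖ ^ α := Real.rpow_pos_of_pos (norm_pos_iff.2 hp) α
  set I : EN N →L[ℝ] EN N := ContinuousLinearMap.id ℝ (EN N)
  have hI : SymOp (k • I) := symOp_id.smul k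
  have hform : ∀ ξ, ⟪(k • I) ξ, ξ⟫ = k * ‖ξ‖ ^ 2 := fun ξ => by
    rw [smul_apply, inner_smul_left, conj_trivial]
    exact congrArg (k * ·) (real_inner_self_eq_norm_sq ξ)
  have hpos : ∀ ξ, 0 ≤ ⟪(k • I - T) ξ, ξ⟫ := fun ξ => by
    rw [sub_apply, inner_sub_left, hform]; linarith [hTk ξ]
  have h1 := (h.ell x hx p hp T (k • I - T) hT (hI.sub hT) hpos).1
  have h2 := (h.ell x hx p hp 0 (k • I) (fun _ _ => by simp) hI
    (fun ξ => by rw [hform]; positivity)).2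
  rw [add_sub_cancel] at h1
  rw [zero_add, h.zero x hx p hp, sub_zero, trOp_smul_id] at h2
  have h3 := trOp_nonneg hpos
  have h4 : 0 ≤ a * ‖p‖ ^ α * trOp (k • I - T) := by
    have := h.a_pos
    positivity
  linarith

lemma add_sq_pow_le (n : ℕ) {s t : ℝ} (hs : 0 ≤ s) (ht : 0 ≤ t) :
    ((s + t) ^ 2) ^ n ≤ 4 ^ n * ((s ^ 2) ^ n + (t ^ 2) ^ n) := by
  wlog h : s ≤ t generalizing s t
  · rw [add_comm s t, add_comm ((s ^ 2) ^ n)]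
    exact this ht hs (le_of_not_ge h)
  calc ((s + t) ^ 2) ^ n ≤ ((2 * t) ^ 2) ^ n := by gcongr; linarith
    _ = 4 ^ n * (t ^ 2) ^ n := by rw [← mul_pow]; congr 1; ring
    _ ≤ _ := by
      gcongr
      have : 0 ≤ (s ^ 2) ^ n := by positivity
      linarith

/-- A function whose increments are at most quadratic on a ball is constant there. -/
lemma const_of_sq_bound {u : EN N → ℝ} {z : EN N} {δ K : ℝ}
    (h : ∀ x ∈ ball z δ, ∀ y ∈ ball z δ, |u x - u y| ≤ K * ‖x - y‖ ^ 2) :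
    ∀ x ∈ ball z δ, ∀ y ∈ ball z δ, u x = u y := by
  have hd : ∀ y ∈ ball z δ, HasFDerivAt u (0 : EN N →L[ℝ] ℝ) y := by
    intro y hy
    rw [hasFDerivAt_iff_isLittleO]
    have hO : (fun x => u x - u y - (0 : EN N →L[ℝ] ℝ) (x - y)) =O[𝓝 y]
        fun x => ‖x - y‖ ^ 2 := by
      refine Asymptotics.IsBigO.of_bound K ?_
      filter_upwards [isOpen_ball.mem_nhds hy] with x hx
      have := h x hx y hy
      simpa using this
    refine hO.trans_isLittleO ?_
    have h2 : Tendsto (fun x => ‖x - y‖) (𝓝 y) (𝓝 0) := by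
      have hc : Continuous fun x => ‖x - y‖ := by fun_prop
      simpa using hc.tendsto y
    have h3 : (fun x => ‖x - y‖) =o[𝓝 y] fun _ => (1 : ℝ) :=
      (Asymptotics.isLittleO_one_iff ℝ).2 h2
    have h4 := h3.mul_isBigO (Asymptotics.isBigO_refl (fun x => ‖x - y‖) (𝓝 y))
    simp only [one_mul, ← pow_two] at h4
    exact h4.of_norm_right
  intro x hx y hy
  refine (convex_ball z δ).is_const_of_fderivWithin_eq_zero (𝕜 := ℝ)
    (fun w hw => (hd w hw).differentiableAt.differentiableWithinAt) (fun w hw => ?_) hx hy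
  rw [fderivWithin_of_isOpen isOpen_ball hw]
  exact (hd w hw).fderiv

end Diagonal

section Diagonal2

variable {N : ℕ} {Ω : Set (EN N)} {α a A C₁ θ C₂ ν : ℝ}
  {ρ : EN N → ℝ} {m : ℝ} {σ : EN N → ℝ} {dσ : EN N → EN N} {C : ℝ}

/-- The case of `diagonal_ineq` in which `u` cannot be touched off the diagonal: `u` is then
locally constant inside `Ω` near `z`. -/
lemma diagonal_const (hΩ : IsOpen Ω) {c₀ : EN N → ℝ → ℝ}
    (hc : ContinuousOn (fun w : EN N × ℝ => c₀ w.1 w.2) (closure Ω ×ˢ univ)) {u : EN N → ℝ}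
    (hu : ∀ x ∈ Ω, (∀ᶠ x' in 𝓝 x, u x' = u x) → 0 ≤ c₀ x (u x)) {z : EN N} (hz : z ∈ closure Ω)
    {n : ℕ} (hn : 2 ≤ n) {K : ℝ} (hK : 0 ≤ K)
    (h : ∀ᶠ y in 𝓝[closure Ω] z, ∀ x ∈ closure Ω, u x ≤ u y + K * (‖x - y‖ ^ 2) ^ n) :
    0 ≤ c₀ z (u z) := by
  obtain ⟨δ, hδ, hb⟩ := Metric.eventually_nhds_iff.1 (eventually_nhdsWithin_iff.1 h)
  have habs : ∀ x ∈ closure Ω, ∀ y ∈ closure Ω, dist x z < δ → dist y z < δ →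
      |u x - u y| ≤ K * (‖x - y‖ ^ 2) ^ n := by
    intro x hx y hy hxz hyz
    have h1 := hb hyz hy x hx
    have h2 := hb hxz hx y hy
    rw [norm_sub_rev y x] at h2
    rw [abs_le]; constructor <;> linarith
  have hcl : ∀ y ∈ Ω, dist y z < δ → 0 ≤ c₀ y (u y) := by
    intro y hy hyz
    obtain ⟨ε, hε, hεb⟩ := Metric.isOpen_iff.1 (hΩ.inter (isOpen_ball (x := z) (ε := δ))) y
      ⟨hy, hyz⟩
    have hconst := const_of_sq_bound (u := u) (z := y) (δ := min ε (1 / 2)) (K := K) (by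
      intro x hx x' hx'
      have h1 := hεb (ball_subset_ball (min_le_left _ _) hx)
      have h2 := hεb (ball_subset_ball (min_le_left _ _) hx')
      refine (habs x (subset_closure h1.1) x' (subset_closure h2.1) h1.2 h2.2).trans ?_
      have h3 : dist x y < 1 / 2 := lt_of_lt_of_le hx (min_le_right _ _)
      have h4 : dist x' y < 1 / 2 := lt_of_lt_of_le hx' (min_le_right _ _)
      have h5 := dist_triangle_right x x' y
      rw [dist_eq_norm x x'] at h5
      gcongr
      refine pow_le_of_le_one (by positivity) ?_ (by omega)
      exact pow_le_one₀ (norm_nonneg _) (by linarith))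
    have hδ' : 0 < min ε (1 / 2) := by positivity
    refine hu y hy ?_
    filter_upwards [ball_mem_nhds y hδ'] with x hx
    exact hconst x hx y (mem_ball_self hδ')
  have hut : Tendsto u (𝓝[Ω] z) (𝓝 (u z)) := by
    rw [tendsto_iff_norm_sub_tendsto_zero]
    have hn0 : Tendsto (fun y => K * (‖y - z‖ ^ 2) ^ n) (𝓝[Ω] z) (𝓝 0) := by
      have hcn : Continuous fun y => K * (‖y - z‖ ^ 2) ^ n := by fun_prop
      have := hcn.tendsto z
      rw [sub_self, norm_zero, zero_pow two_ne_zero, zero_pow (by omega), mul_zero] at this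
      exact this.mono_left nhdsWithin_le_nhds
    refine squeeze_zero' (Eventually.of_forall fun y => norm_nonneg _) ?_ hn0
    filter_upwards [self_mem_nhdsWithin, mem_nhdsWithin_of_mem_nhds (ball_mem_nhds z hδ)]
      with y hy hyz
    exact habs y (subset_closure hy) z hz hyz (by simpa using hδ)
  have hne : (𝓝[Ω] z).NeBot := mem_closure_iff_nhdsWithin_neBot.1 hz
  have hpair : Tendsto (fun y => (y, u y)) (𝓝[Ω] z) (𝓝[closure Ω ×ˢ univ] (z, u z)) := by
    refine tendsto_nhdsWithin_iff.2 ⟨(tendsto_id.mono_left nhdsWithin_le_nhds).prodMk_nhds hut, ?_⟩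
    filter_upwards [self_mem_nhdsWithin] with y hy
    exact ⟨subset_closure hy, mem_univ _⟩
  have hlim := (hc (z, u z) ⟨hz, mem_univ _⟩).tendsto.comp hpair
  refine ge_of_tendsto hlim ?_
  filter_upwards [self_mem_nhdsWithin, mem_nhdsWithin_of_mem_nhds (ball_mem_nhds z hδ)]
    with y hy hyz
  exact hcl y hy hyz

/-- At an off-diagonal maximum in the first variable of `u x - (1 + σ x + σ y) K |x - y|^(2n)` the
equation bounds the zeroth order term by vanishing powers of `|x - y|`. -/
lemma touch_ineq {H : EN N → EN N → (EN N →L[ℝ] EN N) → ℝ} (hH : EllOp Ω α a A C₁ θ C₂ ν H)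
    (hα : -1 < α) (hΩ : IsOpen Ω) {b : EN N → EN N} {c₀ : EN N → ℝ → ℝ} {u : EN N → ℝ}
    (hu : JetSub Ω ρ H b α c₀ u) (hm : 1 ≤ m) (hB : IsBarrier Ω ρ m σ dσ C) {n : ℕ} (hn : 2 ≤ n)
    (hnm : (n : ℝ) ≤ m) {K M : ℝ} (hK : 0 < K) (hM : 0 ≤ M) {x y : EN N} (hx : x ∈ closure Ω)
    (hy : y ∈ closure Ω) (hxy : x ≠ y) (hbM : ‖b x‖ ≤ M) (hr : 16 * C * ‖x - y‖ ≤ 1)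
    (hmax : ∀ x' ∈ closure Ω, u x' - (1 + σ x' + σ y) * (K * (‖x' - y‖ ^ 2) ^ n)
      ≤ u x - (1 + σ x + σ y) * (K * (‖x - y‖ ^ 2) ^ n)) :
    0 ≤ (A * ((20 * m + (16 * C + 16 * C ^ 2)) * N) + M) * (7 * (K * n)) ^ (α + 1)
      * ‖x - y‖ ^ ((2 * n - 1) * (α + 1) - 1) + c₀ x (u x) := by
  have hC1 := hB.one_le
  have hA : 0 < A := hH.a_pos.trans_le hH.a_le
  have hxr : 0 < ‖x - y‖ := norm_pos_iff.2 (sub_ne_zero.2 hxy)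
  have hr1 : ‖x - y‖ ≤ 1 := by nlinarith
  have hg := isProfile_pow hn hnm hK hxr
  obtain ⟨S, κ, hS, hSn, hκ0, hκ, -, hexp⟩ := penalty_expansion' hm hB hx hy hxy hg hr1
  have n1 := penGrad_norm hB hx hy hg hr
  have s1 := penGrad_side hΩ hB hx hy hg
  have g1p := hg.pos₁
  set r := ‖x - y‖ with hrdef
  set g₁ := K * (n * (r ^ 2) ^ (n - 1)) with hg₁
  set p := penGrad σ dσ ((fun s => K * s ^ n) (r ^ 2)) g₁ x y with hp
  have hgr : 0 < g₁ * r := by positivity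
  have hp0 : 0 < ‖p‖ := hgr.trans_le n1.1
  set T := S + κ • ContinuousLinearMap.id ℝ (EN N) with hT
  have hTs : SymOp T := hS.add (symOp_id.smul κ)
  have eT : ∀ ξ, ⟪T ξ, ξ⟫ = ⟪S ξ, ξ⟫ + κ * ‖ξ‖ ^ 2 := fun ξ => by
    rw [hT, add_apply, smul_apply, inner_add_left, inner_smul_left, conj_trivial]
    exact congrArg (⟪S ξ, ξ⟫ + κ * ·) (real_inner_self_eq_norm_sq ξ)
  have hjet : ∀ᶠ ξ in 𝓝 (0 : EN N), x + ξ ∈ closure Ω →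
      u (x + ξ) ≤ u x + ⟪p, ξ⟫ + 1 / 2 * ⟪T ξ, ξ⟫ := by
    have ht : Tendsto (fun ξ : EN N => (ξ, (0 : EN N))) (𝓝 0) (𝓝 (0 : EN N × EN N)) := by
      have hcn : Continuous fun ξ : EN N => (ξ, (0 : EN N)) := by fun_prop
      exact hcn.tendsto 0
    filter_upwards [ht.eventually hexp] with ξ hξ hxξ
    have h1 := hξ hxξ (by simpa using hy)
    simp only [add_zero, sub_zero, norm_zero, inner_zero_right] at h1
    have h2 := hmax (x + ξ) hxξ
    rw [eT]
    simp only [ne_eq, OfNat.ofNat_ne_zero, not_false_eq_true, zero_pow, add_zero] at h1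
    linarith
  have hmain := hu.1 x hx p (norm_pos_iff.1 hp0) T hTs hjet s1
  have hk : ‖S‖ + κ ≤ (20 * m + (16 * C + 16 * C ^ 2)) * g₁ := by
    have h32 : r ^ (3 / 2 : ℝ) ≤ 1 := Real.rpow_le_one hxr.le hr1 (by norm_num)
    have : (16 * C + 16 * C ^ 2) * r ^ (3 / 2 : ℝ) * g₁ ≤ (16 * C + 16 * C ^ 2) * 1 * g₁ := by
      gcongr
    linarith
  have hH1 := hH.le_of_form_le hx (norm_pos_iff.1 hp0) hTs
    (k := (20 * m + (16 * C + 16 * C ^ 2)) * g₁) (by positivity) (fun ξ => by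
      rw [eT]
      have h1 := inner_apply_le_opNorm S ξ ξ
      have h2 : (‖S‖ + κ) * ‖ξ‖ ^ 2 ≤ (20 * m + (16 * C + 16 * C ^ 2)) * g₁ * ‖ξ‖ ^ 2 := by
        gcongr
      nlinarith)
  -- all the powers are reduced to `r`
  set Q := (7 * (K * n)) ^ (α + 1) * r ^ ((2 * n - 1) * (α + 1) - 1) with hQ
  have hpow : ‖p‖ ^ (α + 1) ≤ Q * r := by
    have e1 : g₁ * r = K * n * r ^ ((2 * n - 1 : ℝ)) := by
      rw [hg₁, ← pow_mul, mul_assoc, mul_assoc, mul_assoc, ← pow_succ, ← Real.rpow_natCast]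
      congr 4
      have : (2 * (n - 1) + 1 : ℕ) + 1 = 2 * n := by omega
      have h' : (((2 * (n - 1) + 1 : ℕ) : ℝ)) + 1 = 2 * n := by exact_mod_cast this
      linarith
    calc ‖p‖ ^ (α + 1) ≤ (7 * (g₁ * r)) ^ (α + 1) :=
          Real.rpow_le_rpow hp0.le n1.2 (by linarith)
      _ = (7 * (K * n)) ^ (α + 1) * r ^ ((2 * n - 1) * (α + 1)) := by
          rw [e1, Real.rpow_mul hxr.le, ← Real.mul_rpow (by positivity) (by positivity)]
          congr 1; ring
      _ = Q * r := by
          rw [hQ, mul_assoc, ← Real.rpow_add_one hxr.ne']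
          congr 2; ring
  have hpp : ‖p‖ ^ (α + 1) = ‖p‖ ^ α * ‖p‖ := Real.rpow_add_one hp0.ne' α
  have hpα : 0 < ‖p‖ ^ α := Real.rpow_pos_of_pos hp0 α
  have hQ0 : 0 ≤ Q := by positivity
  have i1 : ‖p‖ ^ α * g₁ ≤ Q := by
    have : ‖p‖ ^ α * (g₁ * r) ≤ Q * r := by
      rw [hpp] at hpow
      exact le_trans (by gcongr; exact n1.1) hpow
    rw [← mul_assoc] at this
    exact le_of_mul_le_mul_right this hxr
  have i2 : ⟪b x, p⟫ * ‖p‖ ^ α ≤ M * Q := by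
    have h1 : ⟪b x, p⟫ ≤ M * ‖p‖ := (real_inner_le_norm _ _).trans (by gcongr)
    calc ⟪b x, p⟫ * ‖p‖ ^ α ≤ M * ‖p‖ * ‖p‖ ^ α := by gcongr
      _ = M * (‖p‖ ^ α * ‖p‖) := by ring
      _ ≤ M * Q := by
        rw [← hpp]
        gcongr
        exact hpow.trans (mul_le_of_le_one_right hQ0 hr1)
  have i3 : A * ‖p‖ ^ α * ((20 * m + (16 * C + 16 * C ^ 2)) * g₁ * N)
      ≤ A * ((20 * m + (16 * C + 16 * C ^ 2)) * N) * Q := by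
    calc _ = A * ((20 * m + (16 * C + 16 * C ^ 2)) * N) * (‖p‖ ^ α * g₁) := by ring
      _ ≤ _ := by gcongr
  have e : (A * ((20 * m + (16 * C + 16 * C ^ 2)) * N) + M) * (7 * (K * n)) ^ (α + 1)
      * r ^ ((2 * n - 1) * (α + 1) - 1)
      = A * ((20 * m + (16 * C + 16 * C ^ 2)) * N) * Q + M * Q := by rw [hQ]; ring
  rw [e]
  linarith

end Diagonal2

section Diagonal3

variable {N : ℕ} {Ω : Set (EN N)} {α a A C₁ θ C₂ ν : ℝ}
  {ρ : EN N → ℝ} {m : ℝ} {σ : EN N → ℝ} {dσ : EN N → EN N} {C : ℝ}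

/-- If a subsolution `u` is touched from above at `z` by a flat function `u z + C₀ |x - z|^(2n)`,
then the equation holds at `z` with vanishing gradient and second order terms, although such test
functions are excluded by the definition of viscosity solutions. -/
lemma diagonal_ineq {H : EN N → EN N → (EN N →L[ℝ] EN N) → ℝ} (hH : EllOp Ω α a A C₁ θ C₂ ν H)
    (hα : -1 < α) (hΩ : IsOpen Ω) (hΩb : Bornology.IsBounded Ω) {b : EN N → EN N}
    (hb : ContinuousOn b (closure Ω)) {c₀ : EN N → ℝ → ℝ}
    (hc : ContinuousOn (fun w : EN N × ℝ => c₀ w.1 w.2) (closure Ω ×ˢ univ)) {u : EN N → ℝ}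
    (husc : UpperSemicontinuousOn u (closure Ω))
    (hu : JetSub Ω ρ H b α c₀ u) (hm : 1 ≤ m) (hB : IsBarrier Ω ρ m σ dσ C) {n : ℕ} (hn : 2 ≤ n)
    (hnm : (n : ℝ) ≤ m) (hnα : 1 < (2 * n - 1) * (α + 1)) {z : EN N} (hz : z ∈ closure Ω)
    {C₀ : ℝ} (hC₀ : 0 ≤ C₀) (htouch : ∀ x ∈ closure Ω, u x ≤ u z + C₀ * (‖x - z‖ ^ 2) ^ n) :
    0 ≤ c₀ z (u z) := by
  have hcpt : IsCompact (closure Ω) := Metric.isCompact_of_isClosed_isBounded isClosed_closure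
    hΩb.closure
  have hC1 := hB.one_le
  have hn0 : n ≠ 0 := by omega
  set K := 4 ^ n * C₀ + 1 with hKdef
  have hKC : 0 ≤ 4 ^ n * C₀ := by positivity
  have hK1 : 1 ≤ K := by linarith
  have hK : 0 < K := by linarith
  have hW : ∀ x ∈ closure Ω, ∀ y ∈ closure Ω, 1 ≤ 1 + σ x + σ y ∧ 1 + σ x + σ y ≤ 3 := by
    intro x hx y hy
    constructor <;> linarith [hB.pos x hx, hB.pos y hy, hB.le_one x hx, hB.le_one y hy]
  obtain ⟨M, hM⟩ := hcpt.exists_bound_of_continuousOn hb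
  have hM0 : 0 ≤ M := (norm_nonneg _).trans (hM z hz)
  by_cases hcase : ∀ᶠ y in 𝓝[closure Ω] z, ∀ x ∈ closure Ω,
      u x ≤ u y + (1 + σ x + σ y) * (K * (‖x - y‖ ^ 2) ^ n)
  · refine diagonal_const hΩ hc hu.2 hz hn (K := 3 * K) (by positivity) ?_
    filter_upwards [hcase, self_mem_nhdsWithin] with y hy hyΩ x hx
    refine (hy x hx).trans ?_
    rw [mul_assoc]
    gcongr
    exact (hW x hx y hyΩ).2
  · obtain ⟨y, hyz, hfreq⟩ := exists_seq_forall_of_frequently (not_eventually.1 hcase)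
    have hyz' := tendsto_nhdsWithin_iff.1 hyz
    obtain ⟨k₀, hk₀⟩ := eventually_atTop.1 hyz'.2
    have hex : ∀ k, ∃ x ∈ closure Ω, x ≠ y (k + k₀) ∧ ∀ x' ∈ closure Ω,
        u x' - (1 + σ x' + σ (y (k + k₀))) * (K * (‖x' - y (k + k₀)‖ ^ 2) ^ n)
          ≤ u x - (1 + σ x + σ (y (k + k₀))) * (K * (‖x - y (k + k₀)‖ ^ 2) ^ n) := by
      intro k
      have hcont : ContinuousOn (fun x => -((1 + σ x + σ (y (k + k₀)))
          * (K * (‖x - y (k + k₀)‖ ^ 2) ^ n))) (closure Ω) := by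
        have := hB.continuousOn
        fun_prop
      obtain ⟨x, hx, hxmax⟩ := UpperSemicontinuousOn.exists_isMaxOn ⟨z, hz⟩ hcpt
        (husc.add hcont.upperSemicontinuousOn)
      have hxm : ∀ x' ∈ closure Ω,
          u x' - (1 + σ x' + σ (y (k + k₀))) * (K * (‖x' - y (k + k₀)‖ ^ 2) ^ n)
          ≤ u x - (1 + σ x + σ (y (k + k₀))) * (K * (‖x - y (k + k₀)‖ ^ 2) ^ n) := by
        intro x' hx'
        have := hxmax hx'
        simp only [mem_ofPred_eq] at this
        linarith
      refine ⟨x, hx, ?_, hxm⟩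
      intro hxy
      have h1 := hfreq (k + k₀)
      push Not at h1
      obtain ⟨x', hx', h2⟩ := h1
      have h3 := hxm x' hx'
      rw [hxy, sub_self, norm_zero, zero_pow two_ne_zero, zero_pow hn0, mul_zero, mul_zero,
        sub_zero] at h3
      linarith
    choose x hxΩ hxy hxmax using hex
    set y' := fun k => y (k + k₀) with hy'
    have hyΩ : ∀ k, y' k ∈ closure Ω := fun k => hk₀ _ (by omega)
    have hyt : Tendsto y' atTop (𝓝 z) := hyz'.1.comp (tendsto_add_atTop_nat k₀)
    have hyn : Tendsto (fun k => ‖y' k - z‖) atTop (𝓝 0) :=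
      tendsto_iff_norm_sub_tendsto_zero.1 hyt
    have hbase : ∀ k, (‖x k - y' k‖ ^ 2) ^ n ≤ 4 * K * (‖y' k - z‖ ^ 2) ^ n ∧
        u z - 3 * K * (‖y' k - z‖ ^ 2) ^ n ≤ u (x k) := by
      intro k
      have h1 := hxmax k z hz
      have h2 := htouch (x k) (hxΩ k)
      have w1 := hW (x k) (hxΩ k) (y' k) (hyΩ k)
      have w2 := hW z hz (y' k) (hyΩ k)
      have q1 : 0 ≤ (‖x k - y' k‖ ^ 2) ^ n := by positivity
      have q2 : 0 ≤ (‖y' k - z‖ ^ 2) ^ n := by positivity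
      have h3 : (‖x k - z‖ ^ 2) ^ n ≤ 4 ^ n * ((‖x k - y' k‖ ^ 2) ^ n + (‖y' k - z‖ ^ 2) ^ n) := by
        refine le_trans ?_ (add_sq_pow_le n (norm_nonneg _) (norm_nonneg _))
        gcongr
        exact norm_sub_le_norm_sub_add_norm_sub _ _ _
      have h4 := mul_le_mul_of_nonneg_left h3 hC₀
      have h5 : 1 * (K * (‖x k - y' k‖ ^ 2) ^ n)
          ≤ (1 + σ (x k) + σ (y' k)) * (K * (‖x k - y' k‖ ^ 2) ^ n) := by
        gcongr; exact w1.1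
      have h6 : (1 + σ z + σ (y' k)) * (K * (‖z - y' k‖ ^ 2) ^ n)
          ≤ 3 * (K * (‖y' k - z‖ ^ 2) ^ n) := by
        rw [norm_sub_rev z]
        gcongr; exact w2.2
      have q3 : 0 ≤ K * (‖x k - y' k‖ ^ 2) ^ n := by positivity
      have e1 : C₀ * (4 ^ n * ((‖x k - y' k‖ ^ 2) ^ n + (‖y' k - z‖ ^ 2) ^ n))
          = (K - 1) * (‖x k - y' k‖ ^ 2) ^ n + (K - 1) * (‖y' k - z‖ ^ 2) ^ n := by
        rw [hKdef]; ring
      constructor <;> linarith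
    have hlip : ∀ k, ‖x k - y' k‖ ≤ 4 * K * ‖y' k - z‖ := by
      intro k
      have h1 := (hbase k).1
      have h2 : (‖x k - y' k‖ ^ 2) ^ n ≤ ((4 * K * ‖y' k - z‖) ^ 2) ^ n := by
        refine h1.trans ?_
        rw [mul_pow, mul_pow]
        gcongr
        rw [← pow_mul]
        exact le_self_pow₀ (by linarith) (by omega)
      rw [← pow_mul, ← pow_mul] at h2
      exact le_of_pow_le_pow_left₀ (by omega) (by positivity) h2
    have hrt : Tendsto (fun k => ‖x k - y' k‖) atTop (𝓝 0) := by
      refine squeeze_zero (fun k => norm_nonneg _) hlip ?_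
      simpa using hyn.const_mul (4 * K)
    have hxz : Tendsto (fun k => ‖x k - z‖) atTop (𝓝 0) := by
      refine squeeze_zero (fun k => norm_nonneg _)
        (fun k => norm_sub_le_norm_sub_add_norm_sub (x k) (y' k) z) ?_
      simpa using hrt.add hyn
    have hut : Tendsto (fun k => u (x k)) atTop (𝓝 (u z)) := by
      have l1 : Tendsto (fun k => u z - 3 * K * (‖y' k - z‖ ^ 2) ^ n) atTop (𝓝 (u z)) := by
        have := (((hyn.pow 2).pow n).const_mul (3 * K)).const_sub (u z)
        simpa [hn0] using this
      have l2 : Tendsto (fun k => u z + C₀ * (‖x k - z‖ ^ 2) ^ n) atTop (𝓝 (u z)) := by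
        have := (((hxz.pow 2).pow n).const_mul C₀).const_add (u z)
        simpa [hn0] using this
      exact tendsto_of_tendsto_of_tendsto_of_le_of_le l1 l2 (fun k => (hbase k).2)
        (fun k => htouch _ (hxΩ k))
    have hct : Tendsto (fun k => c₀ (x k) (u (x k))) atTop (𝓝 (c₀ z (u z))) := by
      have hpair : Tendsto (fun k => (x k, u (x k))) atTop (𝓝[closure Ω ×ˢ univ] (z, u z)) := by
        refine tendsto_nhdsWithin_iff.2
          ⟨(tendsto_iff_norm_sub_tendsto_zero.2 hxz).prodMk_nhds hut, ?_⟩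
        exact Eventually.of_forall fun k => ⟨hxΩ k, mem_univ _⟩
      exact (hc (z, u z) ⟨hz, mem_univ _⟩).tendsto.comp hpair
    set γ := (2 * n - 1) * (α + 1) - 1 with hγ
    have hγ0 : 0 < γ := by linarith
    have hrγ : Tendsto (fun k => ‖x k - y' k‖ ^ γ) atTop (𝓝 0) := by
      have := hrt.rpow_const (p := γ) (Or.inr hγ0.le)
      rwa [Real.zero_rpow hγ0.ne'] at this
    have hlim : Tendsto (fun k => (A * ((20 * m + (16 * C + 16 * C ^ 2)) * N) + M)
        * (7 * (K * n)) ^ (α + 1) * ‖x k - y' k‖ ^ γ + c₀ (x k) (u (x k))) atTop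
        (𝓝 (c₀ z (u z))) := by
      have := (hrγ.const_mul ((A * ((20 * m + (16 * C + 16 * C ^ 2)) * N) + M)
        * (7 * (K * n)) ^ (α + 1))).add hct
      simpa using this
    refine ge_of_tendsto hlim ?_
    have hCr : Tendsto (fun k => 16 * C * ‖x k - y' k‖) atTop (𝓝 0) := by
      simpa using hrt.const_mul (16 * C)
    filter_upwards [hCr.eventually_le_const one_pos] with k hk
    exact touch_ineq hH hα hΩ hu hm hB hn hnm hK hM0 (hxΩ k) (hyΩ k) (hxy k) (hM _ (hxΩ k)) hk
      (hxmax k)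

end Diagonal3

/-! ### The one-sided Lipschitz estimate -/

section LipschitzEstimate

variable {N : ℕ} {Ω : Set (EN N)} {α a A C₁ θ C₂ ν : ℝ}
  {ρ : EN N → ℝ} {m : ℝ} {σ : EN N → ℝ} {dσ : EN N → EN N} {C : ℝ}
  {H : EN N → EN N → (EN N →L[ℝ] EN N) → ℝ} {b : EN N → EN N} {c₁ c₂ : EN N → ℝ → ℝ}
  {u₁ u₂ : EN N → ℝ}

lemma sqrtProfile_eq {M q : ℝ} (hq : 0 ≤ q) :
    M * (((q ^ 2) ^ 2) ^ (1 / 2 : ℝ) - ((q ^ 2) ^ 2) ^ (3 / 4 : ℝ)) = M * (q ^ 2 - q ^ 3) := by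
  have e : ∀ γ : ℝ, ((q ^ 2) ^ 2) ^ γ = q ^ (4 * γ) := fun γ => by
    rw [← pow_mul, ← Real.rpow_natCast, ← Real.rpow_mul hq]; norm_num
  rw [e, e, show (4 * (1 / 2) : ℝ) = (2 : ℕ) by norm_num,
    show (4 * (3 / 4) : ℝ) = (3 : ℕ) by norm_num, Real.rpow_natCast, Real.rpow_natCast]

/-- The strictly concave profile `r ↦ M (r - r^(3/2))`, written as a function of `r²`; the
distance is parametrised as `r = q²`. -/
lemma isProfile_sqrt (hm : 1 ≤ m) {M q : ℝ} (hM : 0 < M) (hq : 0 < q) (hq3 : q ≤ 1 / 3) :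
    IsProfile (fun s => M * (s ^ (1 / 2 : ℝ) - s ^ (3 / 4 : ℝ)))
      (M * (1 / 2 * (q ^ 2)⁻¹ - 3 / 4 * q⁻¹))
      (M * (-(1 / 4) * (q ^ 6)⁻¹ + 3 / 16 * (q ^ 5)⁻¹)) m (q ^ 2) := by
  have h0 : 0 < q ^ 2 - q ^ 3 := by
    have : q ^ 3 = q ^ 2 * q := by ring
    rw [this]; nlinarith [pow_pos hq 2]
  have g1 : 1 / 2 * (q ^ 2)⁻¹ - 3 / 4 * q⁻¹ = (1 / 2 - 3 / 4 * q) * (q ^ 2)⁻¹ := by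
    field_simp
  have g2 : -(1 / 4) * (q ^ 6)⁻¹ + 3 / 16 * (q ^ 5)⁻¹
      = -((1 / 4 - 3 / 16 * q) * (q ^ 6)⁻¹) := by
    field_simp; ring
  have p1 : 0 < 1 / 2 - 3 / 4 * q := by linarith
  have p2 : 0 < 1 / 4 - 3 / 16 * q := by linarith
  refine ⟨?_, ?_, ?_, ?_, ?_, ?_⟩
  · simp only [sqrtProfile_eq hq.le]; positivity
  · rw [g1]; positivity
  · simp only [sqrtProfile_eq hq.le]
    have e : (q ^ 2) ^ 2 * (M * (1 / 2 * (q ^ 2)⁻¹ - 3 / 4 * q⁻¹))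
        = M * (1 / 2 * q ^ 2 - 3 / 4 * q ^ 3) := by field_simp
    rw [e]
    have h1 : M * (1 / 2 * q ^ 2 - 3 / 4 * q ^ 3) ≤ 1 * (M * (q ^ 2 - q ^ 3)) := by
      rw [one_mul]
      refine mul_le_mul_of_nonneg_left ?_ hM.le
      have : q ^ 3 = q ^ 2 * q := by ring
      rw [this]; nlinarith [pow_pos hq 2]
    refine h1.trans ?_
    gcongr
  · simp only [sqrtProfile_eq hq.le]
    have e : 4 * (q ^ 2) ^ 2 * (M * (1 / 2 * (q ^ 2)⁻¹ - 3 / 4 * q⁻¹))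
        = M * (2 * q ^ 2 - 3 * q ^ 3) := by field_simp; ring
    rw [e]
    gcongr ?_ * ?_
    have : q ^ 3 = q ^ 2 * q := by ring
    rw [this]; nlinarith [pow_pos hq 2]
  · rw [g1, g2, mul_neg, abs_neg, abs_of_nonneg (by positivity)]
    have e : M * ((1 / 4 - 3 / 16 * q) * (q ^ 6)⁻¹) * (q ^ 2) ^ 2
        = M * ((1 / 4 - 3 / 16 * q) * (q ^ 2)⁻¹) := by field_simp
    rw [e]
    have h1 : M * ((1 / 4 - 3 / 16 * q) * (q ^ 2)⁻¹)
        ≤ 1 * (M * ((1 / 2 - 3 / 4 * q) * (q ^ 2)⁻¹)) := by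
      rw [one_mul]; gcongr M * (?_ * _)
      linarith
    refine h1.trans ?_
    gcongr
  · intro ε hε
    have hs : 0 < (q ^ 2) ^ 2 := by positivity
    have e : ∀ γ : ℝ, ((q ^ 2) ^ 2) ^ γ = q ^ (4 * γ) := fun γ => by
      rw [← pow_mul, ← Real.rpow_natCast, ← Real.rpow_mul hq.le]; norm_num
    have h1 : ∀ s : ℝ, 0 < s → HasDerivAt (fun s : ℝ => M * (s ^ (1 / 2 : ℝ) - s ^ (3 / 4 : ℝ)))
        (M * (1 / 2 * s ^ (1 / 2 - 1 : ℝ) - 3 / 4 * s ^ (3 / 4 - 1 : ℝ))) s := fun s hs =>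
      ((Real.hasDerivAt_rpow_const (Or.inl hs.ne')).sub
        (Real.hasDerivAt_rpow_const (Or.inl hs.ne'))).const_mul M
    have h2 : ∀ s : ℝ, 0 < s → HasDerivAt
        (fun s : ℝ => M * (1 / 2 * s ^ (1 / 2 - 1 : ℝ) - 3 / 4 * s ^ (3 / 4 - 1 : ℝ)))
        (M * (1 / 2 * ((1 / 2 - 1) * s ^ (1 / 2 - 1 - 1 : ℝ))
          - 3 / 4 * ((3 / 4 - 1) * s ^ (3 / 4 - 1 - 1 : ℝ)))) s := fun s hs =>
      (((Real.hasDerivAt_rpow_const (Or.inl hs.ne')).const_mul (1 / 2 : ℝ)).sub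
        ((Real.hasDerivAt_rpow_const (Or.inl hs.ne')).const_mul (3 / 4 : ℝ))).const_mul M
    have ev : ∀ᶠ s in 𝓝 ((q ^ 2) ^ 2), HasDerivAt
        (fun s : ℝ => M * (s ^ (1 / 2 : ℝ) - s ^ (3 / 4 : ℝ)))
        (M * (1 / 2 * s ^ (1 / 2 - 1 : ℝ) - 3 / 4 * s ^ (3 / 4 - 1 : ℝ))) s := by
      filter_upwards [lt_mem_nhds hs] with s hs
      exact h1 s hs
    have := taylor_two_real ev (h2 _ hs) hε
    rw [e (1 / 2 - 1), e (3 / 4 - 1), e (1 / 2 - 1 - 1), e (3 / 4 - 1 - 1),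
      show (4 * (1 / 2 - 1) : ℝ) = -(2 : ℕ) by norm_num,
      show (4 * (3 / 4 - 1) : ℝ) = -(1 : ℕ) by norm_num,
      show (4 * (1 / 2 - 1 - 1) : ℝ) = -(6 : ℕ) by norm_num,
      show (4 * (3 / 4 - 1 - 1) : ℝ) = -(5 : ℕ) by norm_num, Real.rpow_neg hq.le,
      Real.rpow_neg hq.le, Real.rpow_neg hq.le, Real.rpow_neg hq.le, Real.rpow_natCast,
      Real.rpow_natCast, Real.rpow_natCast, Real.rpow_natCast, pow_one] at this
    filter_upwards [this] with δ hδ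
    refine le_trans (le_of_eq ?_) hδ
    congr 2
    ring

end LipschitzEstimate

section LipschitzEstimate2

variable {N : ℕ} {Ω : Set (EN N)} {α a A C₁ θ C₂ ν : ℝ}
  {ρ : EN N → ℝ} {m : ℝ} {σ : EN N → ℝ} {dσ : EN N → EN N} {C : ℝ}
  {H : EN N → EN N → (EN N →L[ℝ] EN N) → ℝ} {b : EN N → EN N} {c₁ c₂ : EN N → ℝ → ℝ}
  {u₁ u₂ : EN N → ℝ}

lemma exists_pair_max (hu₁ : UpperSemicontinuousOn u₁ (closure Ω))
    (hu₂ : UpperSemicontinuousOn u₂ (closure Ω)) (hσ : ContinuousOn σ (closure Ω)) {g : ℝ → ℝ}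
    (hg : Continuous g) {D : Set (EN N × EN N)} (hD : IsCompact D) (hne : D.Nonempty)
    (hsub : D ⊆ closure Ω ×ˢ closure Ω) :
    ∃ w ∈ D, ∀ w' ∈ D, u₁ w'.1 + u₂ w'.2 - (1 + σ w'.1 + σ w'.2) * g (‖w'.1 - w'.2‖ ^ 2)
      ≤ u₁ w.1 + u₂ w.2 - (1 + σ w.1 + σ w.2) * g (‖w.1 - w.2‖ ^ 2) := by
  have m1 : MapsTo Prod.fst D (closure Ω) := fun w hw => (hsub hw).1
  have m2 : MapsTo Prod.snd D (closure Ω) := fun w hw => (hsub hw).2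
  have s1 : ContinuousOn (fun w : EN N × EN N => σ w.1) D := hσ.comp continuousOn_fst m1
  have s2 : ContinuousOn (fun w : EN N × EN N => σ w.2) D := hσ.comp continuousOn_snd m2
  have s3 : ContinuousOn (fun w : EN N × EN N => g (‖w.1 - w.2‖ ^ 2)) D :=
    (hg.comp (by fun_prop : Continuous fun w : EN N × EN N => ‖w.1 - w.2‖ ^ 2)).continuousOn
  have hcont : ContinuousOn (fun w : EN N × EN N =>
      -((1 + σ w.1 + σ w.2) * g (‖w.1 - w.2‖ ^ 2))) D := by fun_prop
  have v1 : UpperSemicontinuousOn (fun w : EN N × EN N => u₁ w.1) D :=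
    hu₁.comp (g := Prod.fst) continuousOn_fst m1
  have v2 : UpperSemicontinuousOn (fun w : EN N × EN N => u₂ w.2) D :=
    hu₂.comp (g := Prod.snd) continuousOn_snd m2
  obtain ⟨w, hw, hmax⟩ := UpperSemicontinuousOn.exists_isMaxOn hne hD
    ((v1.add v2).add hcont.upperSemicontinuousOn)
  refine ⟨w, hw, fun w' hw' => ?_⟩
  have := hmax hw'
  simp only [mem_ofPred_eq] at this
  linarith

/-- Bounds for `PairData` on the set where `u₁ x + u₂ y ≥ 0`. -/
lemma PairData.bounds (hP : PairData Ω ρ α a A C₁ θ C₂ ν H b c₁ c₂ u₁ u₂)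
    (hne : (closure Ω).Nonempty) :
    ∃ R > (0 : ℝ), (∀ x ∈ closure Ω, ‖b x‖ ≤ R) ∧ (∀ x ∈ closure Ω, u₁ x ≤ R) ∧
      (∀ x ∈ closure Ω, u₂ x ≤ R) ∧
      ∀ x ∈ closure Ω, ∀ y ∈ closure Ω, 0 ≤ u₁ x + u₂ y → c₁ x (u₁ x) + c₂ y (u₂ y) ≤ R := by
  have hcpt : IsCompact (closure Ω) := Metric.isCompact_of_isClosed_isBounded isClosed_closure
    hP.bdd.closure
  obtain ⟨B, hB⟩ := hcpt.exists_bound_of_continuousOn hP.hb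
  obtain ⟨x₁, -, h1⟩ := UpperSemicontinuousOn.exists_isMaxOn hne hcpt hP.usc₁
  obtain ⟨x₂, -, h2⟩ := UpperSemicontinuousOn.exists_isMaxOn hne hcpt hP.usc₂
  set R := max (u₁ x₁) (u₂ x₂) with hR
  have r1 : ∀ x ∈ closure Ω, u₁ x ≤ R := fun x hx => (h1 hx).trans (le_max_left _ _)
  have r2 : ∀ x ∈ closure Ω, u₂ x ≤ R := fun x hx => (h2 hx).trans (le_max_right _ _)
  have hc2 : IsCompact (closure Ω ×ˢ Icc (-R) R) := hcpt.prod isCompact_Icc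
  have hsub : closure Ω ×ˢ Icc (-R) R ⊆ closure Ω ×ˢ univ := prod_mono le_rfl (subset_univ _)
  obtain ⟨B₁, hB₁⟩ := hc2.exists_bound_of_continuousOn (hP.hc₁.mono hsub)
  obtain ⟨B₂, hB₂⟩ := hc2.exists_bound_of_continuousOn (hP.hc₂.mono hsub)
  refine ⟨|B| + |R| + |B₁| + |B₂| + 1, by positivity, fun x hx => ?_, fun x hx => ?_,
    fun x hx => ?_, fun x hx y hy hxy => ?_⟩
  · linarith [hB x hx, le_abs_self B, abs_nonneg R, abs_nonneg B₁, abs_nonneg B₂]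
  · linarith [r1 x hx, le_abs_self R, abs_nonneg B, abs_nonneg B₁, abs_nonneg B₂]
  · linarith [r2 x hx, le_abs_self R, abs_nonneg B, abs_nonneg B₁, abs_nonneg B₂]
  · have i1 := hB₁ (x, u₁ x) ⟨hx, by simp only [mem_Icc]; constructor <;> linarith [r1 x hx, r2 y hy]⟩
    have i2 := hB₂ (y, u₂ y) ⟨hy, by simp only [mem_Icc]; constructor <;> linarith [r1 x hx, r2 y hy]⟩
    have j1 := (Real.le_norm_self _).trans i1
    have j2 := (Real.le_norm_self _).trans i2
    simp only at j1 j2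
    linarith [le_abs_self B₁, le_abs_self B₂, abs_nonneg R, abs_nonneg B]

/-- One-sided Lipschitz estimate: if `u₁ + u₂ ≤ 0` on the diagonal then `u₁ x + u₂ y` is bounded
by a multiple of `|x - y|`. The concavity of the profile `M (r - r^(3/2))` produces the term
`-|p|^α M r^(-1/2)`, which beats all the others at short distance. -/
lemma lipschitz_est (hP : PairData Ω ρ α a A C₁ θ C₂ ν H b c₁ c₂ u₁ u₂) (hm : 1 ≤ m)
    (hB : IsBarrier Ω ρ m σ dσ C) (hdiag : ∀ x ∈ closure Ω, u₁ x + u₂ x ≤ 0) :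
    ∃ L : ℝ, 0 ≤ L ∧ ∀ x ∈ closure Ω, ∀ y ∈ closure Ω, u₁ x + u₂ y ≤ L * ‖x - y‖ := by
  rcases (closure Ω).eq_empty_or_nonempty with hemp | hne
  · exact ⟨0, le_rfl, fun x hx => by simp [hemp] at hx⟩
  have hcpt : IsCompact (closure Ω) := Metric.isCompact_of_isClosed_isBounded isClosed_closure
    hP.bdd.closure
  obtain ⟨R, hR, hbR, hu₁R, hu₂R, hcR⟩ := hP.bounds hne
  obtain ⟨r₀, hr₀, hr₀9, hCr₀, Cs, hCs, β, hβ, hkey⟩ := key_ineq hP hm hB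
  have ha := hP.ell.a_pos
  have hα1 : 0 < α + 1 := by linarith [hP.hα]
  set D := Cs / 2 + R * (7 ^ (α + 1) * (7 / 2)) + R * (7 / 2) with hD
  have hD0 : 0 < D := by positivity
  set r₁ := min r₀ ((a / (D + 1)) ^ 2) with hr₁
  have hr₁0 : 0 < r₁ := by positivity
  have hr₁r₀ : r₁ ≤ r₀ := min_le_left _ _
  obtain ⟨M, hM1, hM2⟩ : ∃ M : ℝ, 3 * R / r₁ < M ∧ R < 2 / 7 * (M / 4) ^ (α + 1) := by
    have t1 : Tendsto (fun M : ℝ => 2 / 7 * (M / 4) ^ (α + 1)) atTop atTop :=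
      ((tendsto_rpow_atTop hα1).comp (tendsto_id.atTop_div_const (by norm_num))).const_mul_atTop
        (by norm_num)
    exact ((eventually_gt_atTop (3 * R / r₁)).and (t1.eventually_gt_atTop R)).exists
  have hM0 : 0 < M := lt_trans (by positivity) hM1
  have hM1' : 3 * R < M * r₁ := (div_lt_iff₀ hr₁0).1 hM1
  set g : ℝ → ℝ := fun s => M * (s ^ (1 / 2 : ℝ) - s ^ (3 / 4 : ℝ)) with hg
  have hgc : Continuous g := by
    have k1 : Continuous fun s : ℝ => s ^ (1 / 2 : ℝ) := Real.continuous_rpow_const (by norm_num)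
    have k2 : Continuous fun s : ℝ => s ^ (3 / 4 : ℝ) := Real.continuous_rpow_const (by norm_num)
    exact continuous_const.mul (k1.sub k2)
  have hW : ∀ x ∈ closure Ω, ∀ y ∈ closure Ω, 1 ≤ 1 + σ x + σ y ∧ 1 + σ x + σ y ≤ 3 := by
    intro x hx y hy
    constructor <;> linarith [hB.pos x hx, hB.pos y hy, hB.le_one x hx, hB.le_one y hy]
  have hgval : ∀ r : ℝ, 0 ≤ r → g (r ^ 2) = M * (r - r * √r) := fun r hr => by
    have h1 : (√r) ^ 2 = r := Real.sq_sqrt hr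
    have h2 := sqrtProfile_eq (M := M) (Real.sqrt_nonneg r)
    rw [show (√r) ^ 3 = (√r) ^ 2 * √r by ring, h1] at h2
    exact h2
  set Dset := (closure Ω ×ˢ closure Ω) ∩ {w : EN N × EN N | ‖w.1 - w.2‖ ≤ r₁} with hDset
  have hDc : IsCompact Dset := (hcpt.prod hcpt).inter_right
    (isClosed_le (by fun_prop) continuous_const)
  obtain ⟨x₀, hx₀⟩ := hne
  obtain ⟨⟨x, y⟩, ⟨⟨hx, hy⟩, hxyr⟩, hmax⟩ := exists_pair_max hP.usc₁ hP.usc₂ hB.continuousOn hgc hDc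
    ⟨(x₀, x₀), ⟨hx₀, hx₀⟩, by simpa using hr₁0.le⟩ inter_subset_left
  simp only at hx hy hmax
  have hxyr' : ‖x - y‖ ≤ r₁ := hxyr
  -- the maximum is nonpositive
  have hnonpos : u₁ x + u₂ y - (1 + σ x + σ y) * g (‖x - y‖ ^ 2) ≤ 0 := by
    by_contra! hpos
    have hxy : x ≠ y := by
      rintro rfl
      rw [hgval _ (norm_nonneg _), sub_self, norm_zero] at hpos
      simp only [zero_mul, sub_zero, mul_zero] at hpos
      linarith [hdiag x hx]
    have hr : 0 < ‖x - y‖ := norm_pos_iff.2 (sub_ne_zero.2 hxy)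
    have hgx := hgval _ hr.le
    obtain ⟨hW1, hW3⟩ := hW x hx y hy
    set q := √‖x - y‖ with hq
    have hq0 : 0 < q := Real.sqrt_pos.2 hr
    have hrq : ‖x - y‖ = q ^ 2 := (Real.sq_sqrt hr.le).symm
    have hq3 : q ≤ 1 / 3 := by
      rw [hq, Real.sqrt_le_left (by norm_num)]
      norm_num; linarith
    have hgpos : 0 ≤ g (‖x - y‖ ^ 2) := by
      rw [hgx]
      have : ‖x - y‖ * q ≤ ‖x - y‖ * 1 := by gcongr; linarith
      exact mul_nonneg hM0.le (by linarith)
    have hlt : ‖x - y‖ < r₁ := by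
      refine lt_of_le_of_ne hxyr' fun heq => ?_
      have h1 : 1 * g (‖x - y‖ ^ 2) ≤ (1 + σ x + σ y) * g (‖x - y‖ ^ 2) := by gcongr
      have h2 : M * (‖x - y‖ * (2 / 3)) ≤ g (‖x - y‖ ^ 2) := by
        rw [hgx]
        gcongr
        have : ‖x - y‖ * q ≤ ‖x - y‖ * (1 / 3) := by gcongr
        linarith
      rw [heq] at h2
      rw [heq] at h1 hpos
      linarith [hu₁R x hx, hu₂R y hy]
    have hloc : ∀ᶠ z in 𝓝 (0 : EN N × EN N), x + z.1 ∈ closure Ω → y + z.2 ∈ closure Ω →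
        u₁ (x + z.1) + u₂ (y + z.2)
            - (1 + σ (x + z.1) + σ (y + z.2)) * g (‖(x + z.1) - (y + z.2)‖ ^ 2)
          ≤ u₁ x + u₂ y - (1 + σ x + σ y) * g (‖x - y‖ ^ 2) := by
      have hcn : Continuous fun z : EN N × EN N => ‖(x + z.1) - (y + z.2)‖ := by fun_prop
      have ht := hcn.tendsto 0
      simp only [Prod.fst_zero, Prod.snd_zero, add_zero] at ht
      filter_upwards [ht.eventually (gt_mem_nhds hlt)] with z hz hzx hzy
      exact hmax (x + z.1, y + z.2) ⟨⟨hzx, hzy⟩, le_of_lt hz⟩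
    have hprof := isProfile_sqrt hm hM0 hq0 hq3
    rw [← hrq] at hprof
    have hr_le : ‖x - y‖ ≤ r₀ := hxyr'.trans hr₁r₀
    obtain ⟨t, ht0, ht, hfin⟩ := hkey x hx y hy hxy hr_le g _ _ hprof hloc
    have hCr : 16 * C * ‖x - y‖ ≤ 1 := by
      have := hB.one_le
      have : 16 * C * ‖x - y‖ ≤ 16 * C * r₀ := by gcongr
      linarith
    have n1 := penGrad_norm hB hx hy hprof hCr
    have hsw : ‖y - x‖ = ‖x - y‖ := norm_sub_rev y x
    have n2 := penGrad_norm hB hy hx (hsw.symm ▸ hprof) (by rw [hsw]; exact hCr)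
    rw [hsw] at n2
    have g1p := hprof.pos₁
    set g₁ := M * (1 / 2 * (‖x - y‖)⁻¹ - 3 / 4 * q⁻¹) with hg₁
    set g₂ := M * (-(1 / 4) * (q ^ 6)⁻¹ + 3 / 16 * (q ^ 5)⁻¹) with hg₂
    change g₁ * ‖x - y‖ ≤ ‖penGrad σ dσ (g (‖x - y‖ ^ 2)) g₁ x y‖ ∧
      ‖penGrad σ dσ (g (‖x - y‖ ^ 2)) g₁ x y‖ ≤ 7 * (g₁ * ‖x - y‖) at n1
    change g₁ * ‖x - y‖ ≤ ‖penGrad σ dσ (g (‖x - y‖ ^ 2)) g₁ y x‖ ∧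
      ‖penGrad σ dσ (g (‖x - y‖ ^ 2)) g₁ y x‖ ≤ 7 * (g₁ * ‖x - y‖) at n2
    set p₁ := penGrad σ dσ (g (‖x - y‖ ^ 2)) g₁ x y with hp₁
    set p₂ := penGrad σ dσ (g (‖x - y‖ ^ 2)) g₁ y x with hp₂
    have hg₁r : g₁ * ‖x - y‖ = M * (1 / 2 - 3 / 4 * q) := by
      rw [hg₁, hrq]; field_simp
    have hlow : M / 4 ≤ g₁ * ‖x - y‖ := by
      rw [hg₁r]
      have : M * (1 / 4) ≤ M * (1 / 2 - 3 / 4 * q) := by gcongr; linarith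
      linarith
    have hup : g₁ * ‖x - y‖ ≤ M / 2 := by
      rw [hg₁r]
      have : M * (1 / 2 - 3 / 4 * q) ≤ M * (1 / 2) := by gcongr; linarith
      linarith
    have hsec : g₁ + 2 * g₂ * ‖x - y‖ ^ 2 = -(3 / 8 * M * q⁻¹) := by
      rw [hg₁, hg₂, hrq]; field_simp; ring
    have htlow : 2 * M * q⁻¹ ≤ t := by
      have h1 := ht (by rw [hsec]; have : 0 < 3 / 8 * M * q⁻¹ := by positivity
                        linarith)
      rw [hsec] at h1
      have h2 : g₁ * q = M * (1 / 2 * q⁻¹ - 3 / 4) := by rw [hg₁, hrq]; field_simp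
      rw [mul_assoc 2 g₁ q, h2] at h1
      linarith
    set P := ‖p₂‖ with hPdef
    have hP0 : 0 < P := lt_of_lt_of_le (by positivity) (hlow.trans n2.1)
    have hPα : 0 < P ^ α := Real.rpow_pos_of_pos hP0 α
    have hPM : P ≤ 7 / 2 * M := by linarith [n2.2]
    have hp₁0 : 0 < ‖p₁‖ := lt_of_lt_of_le (by positivity) (hlow.trans n1.1)
    have hr1 : ‖x - y‖ ≤ 1 := by linarith
    have b1 : Cs * ‖x - y‖ ^ β * g₁ ≤ Cs / 2 * M := by
      have h1 : ‖x - y‖ ^ β ≤ ‖x - y‖ := by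
        have := Real.rpow_le_rpow_of_exponent_ge hr hr1 hβ.le
        rwa [Real.rpow_one] at this
      calc Cs * ‖x - y‖ ^ β * g₁ ≤ Cs * ‖x - y‖ * g₁ := by gcongr
        _ = Cs * (g₁ * ‖x - y‖) := by ring
        _ ≤ Cs * (M / 2) := by gcongr
        _ = _ := by ring
    have b2 : ⟪b x, p₁⟫ * ‖p₁‖ ^ α ≤ P ^ α * (R * (7 ^ (α + 1) * (7 / 2)) * M) := by
      have h0 : 0 < ‖p₁‖ ^ α := Real.rpow_pos_of_pos hp₁0 α
      have h1 : ⟪b x, p₁⟫ ≤ R * ‖p₁‖ := (real_inner_le_norm _ _).trans (by gcongr; exact hbR x hx)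
      have h2 : ‖p₁‖ ≤ 7 * P := n1.2.trans (by gcongr; exact n2.1)
      calc ⟪b x, p₁⟫ * ‖p₁‖ ^ α ≤ R * ‖p₁‖ * ‖p₁‖ ^ α := by gcongr
        _ = R * ‖p₁‖ ^ (α + 1) := by rw [Real.rpow_add_one hp₁0.ne']; ring
        _ ≤ R * (7 * P) ^ (α + 1) := by gcongr
        _ = R * (7 ^ (α + 1) * (P ^ α * P)) := by
          rw [Real.mul_rpow (by norm_num) hP0.le, Real.rpow_add_one hP0.ne']
        _ ≤ R * (7 ^ (α + 1) * (P ^ α * (7 / 2 * M))) := by gcongr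
        _ = _ := by ring
    have b3 : ⟪b y, p₂⟫ * P ^ α ≤ P ^ α * (R * (7 / 2) * M) := by
      have h1 : ⟪b y, p₂⟫ ≤ R * P := (real_inner_le_norm _ _).trans (by gcongr; exact hbR y hy)
      calc ⟪b y, p₂⟫ * P ^ α ≤ R * P * P ^ α := by gcongr
        _ ≤ R * (7 / 2 * M) * P ^ α := by gcongr
        _ = _ := by ring
    have b4 : (D + 1) * M ≤ a / 2 * t := by
      have h1 : q ≤ a / (D + 1) := by
        rw [hq, Real.sqrt_le_left (by positivity)]
        exact hxyr'.trans (min_le_right _ _)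
      have h2 : D + 1 ≤ a * q⁻¹ := by
        rw [← div_eq_mul_inv, le_div_iff₀ hq0, mul_comm]
        exact (le_div_iff₀ (by positivity)).1 h1
      calc (D + 1) * M ≤ a * q⁻¹ * M := by gcongr
        _ = a / 2 * (2 * M * q⁻¹) := by ring
        _ ≤ a / 2 * t := by gcongr
    have b5 : P ^ α * (-(a / 2) * t + Cs * ‖x - y‖ ^ β * g₁)
        ≤ P ^ α * (-((D + 1) * M) + Cs / 2 * M) := by
      gcongr
      linarith
    have b6 := hcR x hx y hy (by
      have : 0 ≤ (1 + σ x + σ y) * g (‖x - y‖ ^ 2) := by positivity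
      linarith)
    have b7 : R < P ^ α * M := by
      have h1 : (M / 4) ^ (α + 1) ≤ P ^ (α + 1) :=
        Real.rpow_le_rpow (by positivity) (hlow.trans n2.1) hα1.le
      rw [Real.rpow_add_one hP0.ne' α] at h1
      have h2 : P ^ α * P ≤ P ^ α * (7 / 2 * M) := by gcongr
      linarith
    have e : P ^ α * (-((D + 1) * M) + Cs / 2 * M) + P ^ α * (R * (7 ^ (α + 1) * (7 / 2)) * M)
        + P ^ α * (R * (7 / 2) * M) = -(P ^ α * M) := by rw [hD]; ring
    linarith
  refine ⟨3 * M, by positivity, fun x' hx' y' hy' => ?_⟩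
  have hn0 := norm_nonneg (x' - y')
  by_cases hcl : ‖x' - y'‖ ≤ r₁
  · have h1 := (hmax (x', y') ⟨⟨hx', hy'⟩, hcl⟩).trans hnonpos
    simp only at h1
    have h2 : g (‖x' - y'‖ ^ 2) ≤ M * ‖x' - y'‖ := by
      rw [hgval _ hn0]
      gcongr
      have : 0 ≤ ‖x' - y'‖ * √‖x' - y'‖ := by positivity
      linarith
    obtain ⟨hW1, hW3⟩ := hW x' hx' y' hy'
    have h3 : (1 + σ x' + σ y') * g (‖x' - y'‖ ^ 2) ≤ (1 + σ x' + σ y') * (M * ‖x' - y'‖) := by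
      gcongr
    have h4 : (1 + σ x' + σ y') * (M * ‖x' - y'‖) ≤ 3 * (M * ‖x' - y'‖) := by gcongr
    linarith
  · push Not at hcl
    have h1 : M * r₁ ≤ M * ‖x' - y'‖ := by gcongr
    have : 0 ≤ M * ‖x' - y'‖ := by positivity
    linarith [hu₁R x' hx', hu₂R y' hy']

end LipschitzEstimate2

/-! ### The doubling argument -/

section Doubling

variable {N : ℕ} {Ω : Set (EN N)} {α a A C₁ θ C₂ ν : ℝ}
  {ρ : EN N → ℝ} {m : ℝ} {σ : EN N → ℝ} {dσ : EN N → EN N} {C : ℝ}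
  {H : EN N → EN N → (EN N →L[ℝ] EN N) → ℝ} {b : EN N → EN N} {c₁ c₂ : EN N → ℝ → ℝ}
  {u₁ u₂ : EN N → ℝ}

/-- An upper semicontinuous function dominates its limits along sequences. -/
lemma usc_ge_lim {s : Set (EN N)} {u : EN N → ℝ} (hu : UpperSemicontinuousOn u s) {z : EN N}
    (hz : z ∈ s) {x : ℕ → EN N} (hxs : ∀ k, x k ∈ s) (hx : Tendsto x atTop (𝓝 z)) {U : ℝ}
    (hU : Tendsto (fun k => u (x k)) atTop (𝓝 U)) : U ≤ u z := by
  refine le_of_forall_gt_imp_ge_of_dense fun t ht => ?_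
  have hx' : Tendsto x atTop (𝓝[s] z) := tendsto_nhdsWithin_iff.2 ⟨hx, Eventually.of_forall hxs⟩
  have := hx'.eventually (hu z hz t ht)
  exact le_of_tendsto hU (this.mono fun k hk => le_of_lt hk)

/-- The doubling argument: if `u₁ + u₂ ≤ 0` with equality somewhere, then at some contact point
the zeroth order terms have a nonnegative sum. -/
lemma doubling (hP : PairData Ω ρ α a A C₁ θ C₂ ν H b c₁ c₂ u₁ u₂) (hm : 1 ≤ m)
    (hB : IsBarrier Ω ρ m σ dσ C) {n : ℕ} (hn : 2 ≤ n) (hnm : (n : ℝ) ≤ m)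
    (hnα : 1 < (2 * n - 1) * (α + 1)) (hdiag : ∀ x ∈ closure Ω, u₁ x + u₂ x ≤ 0) {x₀ : EN N}
    (hx₀ : x₀ ∈ closure Ω) (hx₀e : u₁ x₀ + u₂ x₀ = 0) :
    ∃ z ∈ closure Ω, u₁ z + u₂ z = 0 ∧ 0 ≤ c₁ z (u₁ z) + c₂ z (u₂ z) := by
  have hcpt : IsCompact (closure Ω) := Metric.isCompact_of_isClosed_isBounded isClosed_closure
    hP.bdd.closure
  obtain ⟨R, hR, hbR, hu₁R, hu₂R, -⟩ := hP.bounds ⟨x₀, hx₀⟩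
  obtain ⟨L, hL, hLip⟩ := lipschitz_est hP hm hB hdiag
  obtain ⟨r₀, hr₀, hr₀9, hCr₀, Cs, hCs, β, hβ, hkey⟩ := key_ineq hP hm hB
  have hC1 := hB.one_le
  have hα1 : 0 < α + 1 := by linarith [hP.hα]
  have hn0 : n ≠ 0 := by omega
  have hnR : (0 : ℝ) < n := by positivity
  have hW : ∀ x ∈ closure Ω, ∀ y ∈ closure Ω, 1 ≤ 1 + σ x + σ y ∧ 1 + σ x + σ y ≤ 3 := by
    intro x hx y hy
    constructor <;> linarith [hB.pos x hx, hB.pos y hy, hB.le_one x hx, hB.le_one y hy]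
  have hex : ∀ k : ℕ, ∃ x ∈ closure Ω, ∃ y ∈ closure Ω, ∀ x' ∈ closure Ω, ∀ y' ∈ closure Ω,
      u₁ x' + u₂ y' - (1 + σ x' + σ y') * (((k : ℝ) + 1) * (‖x' - y'‖ ^ 2) ^ n)
        ≤ u₁ x + u₂ y - (1 + σ x + σ y) * (((k : ℝ) + 1) * (‖x - y‖ ^ 2) ^ n) := by
    intro k
    obtain ⟨w, hw, hmax⟩ := exists_pair_max hP.usc₁ hP.usc₂ hB.continuousOn
      (g := fun s => ((k : ℝ) + 1) * s ^ n) (by fun_prop) (hcpt.prod hcpt)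
      ⟨(x₀, x₀), hx₀, hx₀⟩ le_rfl
    exact ⟨w.1, hw.1, w.2, hw.2, fun x' hx' y' hy' => hmax (x', y') ⟨hx', hy'⟩⟩
  choose x hx y hy hmax using hex
  have hval : ∀ k : ℕ, (1 + σ (x k) + σ (y k)) * (((k : ℝ) + 1) * (‖x k - y k‖ ^ 2) ^ n)
      ≤ u₁ (x k) + u₂ (y k) := by
    intro k
    have := hmax k x₀ hx₀ x₀ hx₀
    rw [hx₀e, sub_self, norm_zero, zero_pow two_ne_zero, zero_pow hn0] at this
    linarith
  by_cases hcase : ∃ k, x k = y k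
  · obtain ⟨k, hk⟩ := hcase
    have hmx := hmax k
    have hv := hval k
    rw [← hk, sub_self, norm_zero, zero_pow two_ne_zero, zero_pow hn0, mul_zero, mul_zero] at hv hmx
    have hz0 : u₁ (x k) + u₂ (x k) = 0 := le_antisymm (hdiag _ (hx k)) hv
    have hK : (0 : ℝ) ≤ 3 * (k + 1) := by positivity
    refine ⟨x k, hx k, hz0, add_nonneg ?_ ?_⟩
    · refine diagonal_ineq hP.ell hP.hα hP.isOpen hP.bdd hP.hb hP.hc₁ hP.usc₁ hP.jet₁ hm hB hn hnm
        hnα (hx k) hK fun x' hx' => ?_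
      have h1 := hmx x' hx' (x k) (hx k)
      have h2 : (1 + σ x' + σ (x k)) * (((k : ℝ) + 1) * (‖x' - x k‖ ^ 2) ^ n)
          ≤ 3 * (((k : ℝ) + 1) * (‖x' - x k‖ ^ 2) ^ n) := by
        gcongr
        exact (hW x' hx' _ (hx k)).2
      linarith
    · refine diagonal_ineq hP.ell.dual hP.hα hP.isOpen hP.bdd hP.hb hP.hc₂ hP.usc₂ hP.jet₂ hm hB hn
        hnm hnα (hx k) hK fun x' hx' => ?_
      have h1 := hmx (x k) (hx k) x' hx'
      have h2 : (1 + σ (x k) + σ x') * (((k : ℝ) + 1) * (‖x k - x'‖ ^ 2) ^ n)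
          ≤ 3 * (((k : ℝ) + 1) * (‖x' - x k‖ ^ 2) ^ n) := by
        rw [norm_sub_rev (x k)]
        gcongr
        exact (hW _ (hx k) x' hx').2
      linarith
  push Not at hcase
  have hr : ∀ k, 0 < ‖x k - y k‖ := fun k => norm_pos_iff.2 (sub_ne_zero.2 (hcase k))
  set G : ℕ → ℝ := fun k => ((k : ℝ) + 1) * (n * (‖x k - y k‖ ^ 2) ^ (n - 1)) with hG
  have hGpos : ∀ k, 0 < G k := fun k => by have := hr k; positivity
  set p : ℕ → EN N := fun k => penGrad σ dσ (((k : ℝ) + 1) * (‖x k - y k‖ ^ 2) ^ n) (G k) (x k) (y k)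
    with hp
  set q : ℕ → EN N := fun k => penGrad σ dσ (((k : ℝ) + 1) * (‖x k - y k‖ ^ 2) ^ n) (G k) (y k) (x k)
    with hq
  have hprof : ∀ k : ℕ, IsProfile (fun s => ((k : ℝ) + 1) * s ^ n) (G k)
      (((k : ℝ) + 1) * (n * ((n - 1 : ℕ) * (‖x k - y k‖ ^ 2) ^ (n - 1 - 1)))) m ‖x k - y k‖ :=
    fun k => isProfile_pow hn hnm (by positivity) (hr k)
  have hpen : ∀ k : ℕ, ((k : ℝ) + 1) * (‖x k - y k‖ ^ 2) ^ n ≤ u₁ (x k) + u₂ (y k) := by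
    intro k
    refine le_trans ?_ (hval k)
    have h0 : 0 ≤ ((k : ℝ) + 1) * (‖x k - y k‖ ^ 2) ^ n := by positivity
    exact le_mul_of_one_le_left h0 (hW _ (hx k) _ (hy k)).1
  have hsum0 : ∀ k, 0 ≤ u₁ (x k) + u₂ (y k) := fun k => le_trans (by positivity) (hpen k)
  have hGr : ∀ k, G k * ‖x k - y k‖ ≤ n * L := by
    intro k
    have h1 := (hpen k).trans (hLip _ (hx k) _ (hy k))
    have e1 : (‖x k - y k‖ ^ 2) ^ n = ‖x k - y k‖ ^ 2 * (‖x k - y k‖ ^ 2) ^ (n - 1) := by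
      rw [← pow_succ', Nat.sub_add_cancel (by omega)]
    rw [e1] at h1
    have h2 : (((k : ℝ) + 1) * (‖x k - y k‖ ^ 2) ^ (n - 1) * ‖x k - y k‖) * ‖x k - y k‖
        ≤ L * ‖x k - y k‖ := by
      refine le_trans (le_of_eq ?_) h1
      ring
    have h3 := le_of_mul_le_mul_right h2 (hr k)
    calc G k * ‖x k - y k‖ = n * (((k : ℝ) + 1) * (‖x k - y k‖ ^ 2) ^ (n - 1) * ‖x k - y k‖) := by
          simp only [hG]; ring
      _ ≤ n * L := by gcongr
  -- bounds for the gradients at short distance, uniform in `k`, provide compactness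
  have hsmall_of : ∀ k, 16 * C * ‖x k - y k‖ ≤ 1 → ‖p k‖ ≤ 7 * (n * L) ∧ ‖q k‖ ≤ 7 * (n * L) ∧
      G k * ‖x k - y k‖ ≤ ‖q k‖ ∧ 0 < ‖q k‖ := by
    intro k hk
    have n1 := penGrad_norm hB (hx k) (hy k) (hprof k) hk
    have hsw : ‖y k - x k‖ = ‖x k - y k‖ := norm_sub_rev _ _
    have n2 := penGrad_norm hB (hy k) (hx k) (hsw.symm ▸ hprof k) (by rw [hsw]; exact hk)
    rw [hsw] at n2
    have h0 := hGr k
    have h1 := mul_pos (hGpos k) (hr k)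
    refine ⟨n1.2.trans (by linarith), n2.2.trans (by linarith), n2.1, h1.trans_le n2.1⟩
  -- the distances tend to zero
  have hrt : Tendsto (fun k => ‖x k - y k‖) atTop (𝓝 0) := by
    have h1 : Tendsto (fun k => ‖x k - y k‖ ^ (2 * n)) atTop (𝓝 0) := by
      have h2 : Tendsto (fun k : ℕ => 2 * R * (1 / ((k : ℝ) + 1))) atTop (𝓝 0) := by
        simpa using tendsto_one_div_add_atTop_nhds_zero_nat.const_mul (2 * R)
      refine squeeze_zero (fun k => by positivity) (fun k => ?_) h2
      have h3 := hpen k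
      rw [mul_one_div, le_div_iff₀ (by positivity), pow_mul, mul_comm]
      linarith [hu₁R _ (hx k), hu₂R _ (hy k)]
    have h2 := h1.rpow_const (p := ((2 * n : ℕ) : ℝ)⁻¹) (Or.inr (by positivity))
    rw [Real.zero_rpow (by positivity)] at h2
    refine h2.congr fun k => ?_
    exact Real.pow_rpow_inv_natCast (norm_nonneg _) (by omega)
  have hCrt : Tendsto (fun k => 16 * C * ‖x k - y k‖) atTop (𝓝 0) := by
    simpa using hrt.const_mul (16 * C)
  obtain ⟨k₀, hk₀⟩ := eventually_atTop.1 ((hCrt.eventually_le_const one_pos).and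
    (hrt.eventually_le_const hr₀))
  -- extraction of a convergent subsequence
  have hcc : IsCompact ((closure Ω ×ˢ Icc (-R) R) ×ˢ closedBall (0 : EN N) (7 * (n * L))) :=
    (hcpt.prod isCompact_Icc).prod (isCompact_closedBall _ _)
  obtain ⟨⟨⟨z, U⟩, P⟩, ⟨⟨hz, -⟩, -⟩, φ, hφ, hlim⟩ := hcc.tendsto_subseq
    (x := fun k => ((x (k + k₀), u₁ (x (k + k₀))), p (k + k₀))) (fun k => by
      refine ⟨⟨hx _, ?_, hu₁R _ (hx _)⟩, ?_⟩
      · have h1 := hsum0 (k + k₀)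
        have h2 := hu₂R _ (hy (k + k₀))
        simp only
        linarith
      · rw [mem_closedBall, dist_zero_right]
        exact (hsmall_of _ (hk₀ _ (by omega)).1).1)
  set ψ : ℕ → ℕ := fun k => φ k + k₀ with hψ
  have hψk : ∀ k, k₀ ≤ ψ k := fun k => by simp [hψ]
  have hψt : Tendsto ψ atTop atTop :=
    tendsto_atTop_mono (fun k => Nat.le_add_right _ _) hφ.tendsto_atTop
  have hxt : Tendsto (fun k => x (ψ k)) atTop (𝓝 z) :=
    (continuous_fst.comp continuous_fst).continuousAt.tendsto.comp hlim
  have hut : Tendsto (fun k => u₁ (x (ψ k))) atTop (𝓝 U) :=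
    (continuous_snd.comp continuous_fst).continuousAt.tendsto.comp hlim
  have hpt : Tendsto (fun k => p (ψ k)) atTop (𝓝 P) :=
    continuous_snd.continuousAt.tendsto.comp hlim
  have hrt' : Tendsto (fun k => ‖x (ψ k) - y (ψ k)‖) atTop (𝓝 0) := hrt.comp hψt
  have hyt : Tendsto (fun k => y (ψ k)) atTop (𝓝 z) := by
    have := hxt.sub (tendsto_zero_iff_norm_tendsto_zero.2 hrt')
    simpa using this
  have hvt : Tendsto (fun k => u₂ (y (ψ k))) atTop (𝓝 (-U)) := by
    have h1 : Tendsto (fun k => u₁ (x (ψ k)) + u₂ (y (ψ k))) atTop (𝓝 0) := by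
      refine squeeze_zero (fun k => hsum0 _) (fun k => hLip _ (hx _) _ (hy _)) ?_
      simpa using hrt'.const_mul L
    have := h1.sub hut
    simpa using this
  have hqt : Tendsto (fun k => q (ψ k)) atTop (𝓝 (-P)) := by
    have h1 : Tendsto (fun k => p (ψ k) + q (ψ k)) atTop (𝓝 0) := by
      rw [tendsto_zero_iff_norm_tendsto_zero]
      have h2 : Tendsto (fun k => 8 * C * ‖x (ψ k) - y (ψ k)‖ * (n * L)) atTop (𝓝 0) := by
        simpa using (hrt'.const_mul (8 * C)).mul_const (n * L)
      refine squeeze_zero (fun k => norm_nonneg _) (fun k => ?_) h2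
      refine (penGrad_add hB (hx _) (hy _) (hprof (ψ k))).trans ?_
      have := hGr (ψ k)
      exact mul_le_mul_of_nonneg_left this (by have := norm_nonneg (x (ψ k) - y (ψ k)); positivity)
    have := h1.sub hpt
    simpa using this
  have hU1 : U ≤ u₁ z := usc_ge_lim hP.usc₁ hz (fun k => hx (ψ k)) hxt hut
  have hU2 : -U ≤ u₂ z := usc_ge_lim hP.usc₂ hz (fun k => hy (ψ k)) hyt hvt
  have hdz := hdiag z hz
  have eU1 : u₁ z = U := by linarith
  have eU2 : u₂ z = -U := by linarith
  refine ⟨z, hz, by linarith, ?_⟩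
  rw [eU1, eU2]
  -- passage to the limit in the basic inequality
  have hineq : ∀ k, 0 ≤ Cs * (7 * (n * L)) ^ (α + 1) * ‖x (ψ k) - y (ψ k)‖ ^ (β - 1)
      + ⟪b (x (ψ k)), ‖p (ψ k)‖ ^ α • p (ψ k)⟫ + ⟪b (y (ψ k)), ‖q (ψ k)‖ ^ α • q (ψ k)⟫
      + c₁ (x (ψ k)) (u₁ (x (ψ k))) + c₂ (y (ψ k)) (u₂ (y (ψ k))) := by
    intro k'
    obtain ⟨hk1, hk2⟩ := hk₀ (ψ k') (hψk k')
    generalize ψ k' = k at hk1 hk2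
    obtain ⟨-, b2, b3, b4⟩ := hsmall_of k hk1
    obtain ⟨t, ht0, -, hfin⟩ := hkey (x k) (hx k) (y k) (hy k) (hcase k) hk2 _ _ _ (hprof k)
      (Eventually.of_forall fun w hwx hwy => hmax k _ hwx _ hwy)
    have hfin' : 0 ≤ ‖q k‖ ^ α * (-(a / 2) * t + Cs * ‖x k - y k‖ ^ β * G k)
        + ⟪b (x k), p k⟫ * ‖p k‖ ^ α + ⟪b (y k), q k⟫ * ‖q k‖ ^ α
        + c₁ (x k) (u₁ (x k)) + c₂ (y k) (u₂ (y k)) := hfin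
    have hqα : 0 < ‖q k‖ ^ α := Real.rpow_pos_of_pos b4 α
    have ha := hP.ell.a_pos
    have i1 : ‖q k‖ ^ α * (-(a / 2) * t + Cs * ‖x k - y k‖ ^ β * G k)
        ≤ Cs * (7 * (n * L)) ^ (α + 1) * ‖x k - y k‖ ^ (β - 1) := by
      have hrk := hr k
      have e1 : ‖x k - y k‖ ^ β = ‖x k - y k‖ ^ (β - 1) * ‖x k - y k‖ := by
        rw [← Real.rpow_add_one hrk.ne', sub_add_cancel]
      have hat : 0 ≤ a / 2 * t := by positivity
      calc _ ≤ ‖q k‖ ^ α * (Cs * ‖x k - y k‖ ^ β * G k) := by gcongr; linarith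
        _ = Cs * ‖x k - y k‖ ^ (β - 1) * (‖q k‖ ^ α * (G k * ‖x k - y k‖)) := by rw [e1]; ring
        _ ≤ Cs * ‖x k - y k‖ ^ (β - 1) * (‖q k‖ ^ α * ‖q k‖) := by gcongr
        _ = Cs * ‖x k - y k‖ ^ (β - 1) * ‖q k‖ ^ (α + 1) := by rw [Real.rpow_add_one b4.ne']
        _ ≤ Cs * ‖x k - y k‖ ^ (β - 1) * (7 * (n * L)) ^ (α + 1) := by gcongr
        _ = _ := by ring
    rw [inner_smul_right, inner_smul_right]
    linarith
  have hcl : ∀ {f : ℕ → EN N}, (∀ k, f k ∈ closure Ω) → Tendsto f atTop (𝓝 z) →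
      Tendsto f atTop (𝓝[closure Ω] z) := fun hf h =>
    tendsto_nhdsWithin_iff.2 ⟨h, Eventually.of_forall hf⟩
  have hbx : Tendsto (fun k => b (x (ψ k))) atTop (𝓝 (b z)) :=
    (hP.hb z hz).tendsto.comp (hcl (fun k => hx _) hxt)
  have hby : Tendsto (fun k => b (y (ψ k))) atTop (𝓝 (b z)) :=
    (hP.hb z hz).tendsto.comp (hcl (fun k => hy _) hyt)
  have hpp := ((continuous_norm_rpow_smul (E := EN N) hP.hα).tendsto P).comp hpt
  have hqq := ((continuous_norm_rpow_smul (E := EN N) hP.hα).tendsto (-P)).comp hqt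
  have hc1 : Tendsto (fun k => c₁ (x (ψ k)) (u₁ (x (ψ k)))) atTop (𝓝 (c₁ z U)) :=
    (hP.hc₁ (z, U) ⟨hz, mem_univ _⟩).tendsto.comp (tendsto_nhdsWithin_iff.2
      ⟨hxt.prodMk_nhds hut, Eventually.of_forall fun k => ⟨hx _, mem_univ _⟩⟩)
  have hc2 : Tendsto (fun k => c₂ (y (ψ k)) (u₂ (y (ψ k)))) atTop (𝓝 (c₂ z (-U))) :=
    (hP.hc₂ (z, -U) ⟨hz, mem_univ _⟩).tendsto.comp (tendsto_nhdsWithin_iff.2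
      ⟨hyt.prodMk_nhds hvt, Eventually.of_forall fun k => ⟨hy _, mem_univ _⟩⟩)
  have hrβ : Tendsto (fun k => ‖x (ψ k) - y (ψ k)‖ ^ (β - 1)) atTop (𝓝 0) := by
    have := hrt'.rpow_const (p := β - 1) (Or.inr (by linarith))
    rwa [Real.zero_rpow (by linarith)] at this
  have htot := ((((hrβ.const_mul (Cs * (7 * (n * L)) ^ (α + 1))).add (hbx.inner hpp)).add
    (hby.inner hqq)).add hc1).add hc2
  have hge := ge_of_tendsto htot (Eventually.of_forall hineq)
  rw [norm_neg, smul_neg, inner_neg_right] at hge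
  linarith

end Doubling

/-! ### Touching and conclusion -/

section Conclusion

variable {N : ℕ} {Ω : Set (EN N)} {α : ℝ}

/-- If `φ` has a local maximum relative to `closure Ω` at a boundary point, then its derivative in
the direction of the exterior normal is nonnegative. -/
lemma inner_gradient_nonneg_of_frontier {nv : EN N → EN N} {ρ φ : EN N → ℝ}
    (hρ : IsC2DefiningFun Ω nv ρ) (hφ : Differentiable ℝ φ) {x : EN N} (hx : x ∈ frontier Ω)
    (hmax : ∀ᶠ y in 𝓝[closure Ω] x, φ y ≤ φ x) : 0 ≤ ⟪gradient φ x, nv x⟫ := by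
  obtain ⟨hc2, hΩ, hfr, hgr⟩ := hρ
  obtain ⟨hg0, hnv⟩ := hgr x hx
  have hρx : ρ x = 0 := by rw [hfr] at hx; exact hx
  have hd : Differentiable ℝ ρ := hc2.differentiable (by norm_num)
  set e := gradient ρ x with he
  have hline : HasDerivAt (fun t : ℝ => x - t • e) (-e) 0 := by
    simpa using ((hasDerivAt_id (0 : ℝ)).smul_const e).const_sub x
  have hder : ∀ f : EN N → ℝ, Differentiable ℝ f →
      HasDerivAt (fun t : ℝ => f (x - t • e)) (-⟪gradient f x, e⟫) 0 := by
    intro f hf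
    have h1 : HasFDerivAt f (fderiv ℝ f x) (x - (0 : ℝ) • e) := by
      simpa using (hf x).hasFDerivAt
    have h2 := h1.comp_hasDerivAt (0 : ℝ) hline
    have h3 : fderiv ℝ f x (-e) = -⟪gradient f x, e⟫ := by
      rw [map_neg, gradient, InnerProductSpace.toDual_symm_apply]
    rw [h3] at h2
    exact h2
  have hneg : ∀ᶠ t in 𝓝[>] (0 : ℝ), ρ (x - t • e) < 0 := by
    have h1 := hder ρ hd
    rw [← he, real_inner_self_eq_norm_sq] at h1
    have hlt : -‖e‖ ^ 2 < 0 := by have := norm_pos_iff.2 hg0; rw [neg_lt_zero]; positivity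
    have h2 := (hasDerivWithinAt_iff_tendsto_slope' (by simp)).1
      (h1.hasDerivWithinAt (s := Ioi (0 : ℝ)))
    filter_upwards [h2.eventually_lt_const hlt, self_mem_nhdsWithin] with t ht ht0
    rw [slope_def_field] at ht
    simp only [zero_smul, sub_zero, hρx] at ht
    by_contra hcon
    push Not at hcon
    exact absurd ht (not_lt.2 (div_nonneg hcon (le_of_lt ht0)))
  have htend : Tendsto (fun t : ℝ => x - t • e) (𝓝[>] 0) (𝓝[closure Ω] x) := by
    refine tendsto_nhdsWithin_iff.2 ⟨?_, hneg.mono fun t ht => subset_closure ?_⟩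
    · have := hline.continuousAt.tendsto
      simp only [zero_smul, sub_zero] at this
      exact this.mono_left nhdsWithin_le_nhds
    · rw [hΩ]; exact ht
  have hle : -⟪gradient φ x, e⟫ ≤ 0 := by
    have h2 := (hasDerivWithinAt_iff_tendsto_slope' (by simp)).1
      ((hder φ hφ).hasDerivWithinAt (s := Ioi (0 : ℝ)))
    refine le_of_tendsto h2 ?_
    filter_upwards [htend.eventually hmax, self_mem_nhdsWithin] with t ht ht0
    rw [slope_def_field]
    simp only [zero_smul, sub_zero]
    exact div_nonpos_of_nonpos_of_nonneg (by linarith) (le_of_lt ht0)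
  rw [hnv, inner_smul_right]
  have : 0 ≤ ‖e‖⁻¹ := by positivity
  exact mul_nonneg this (by linarith)

/-- The constant `1` is a supersolution for very negative `lam`. -/
lemma lamBarSet_nonempty {nv : EN N → EN N} (hΩ : IsC2Domain Ω nv) (F : EN N → EN N → Mat N → ℝ)
    (b : EN N → EN N) {c : EN N → ℝ} (hcc : ContinuousOn c (closure Ω)) :
    (lamBarSet Ω nv F b c α).Nonempty := by
  obtain ⟨hop, hconn, hbd, ρ, hρ⟩ := hΩ
  have hcpt : IsCompact (closure Ω) := Metric.isCompact_of_isClosed_isBounded isClosed_closure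
    hbd.closure
  obtain ⟨K, hK⟩ := hcpt.bddAbove_image hcc
  have hcK : ∀ x ∈ closure Ω, c x - K ≤ 0 := fun x hx => by
    have := hK (mem_image_of_mem c hx)
    linarith
  have hk : ∀ x ∈ closure Ω, ∀ k : ℝ, (∀ᶠ y in 𝓝[closure Ω] x, (1 : ℝ) = k) → k = 1 := by
    intro x hx k hev
    exact (hev.self_of_nhdsWithin hx).symm
  refine ⟨-K, fun _ => 1, lowerSemicontinuousOn_const, fun _ _ => one_pos, ⟨1, fun _ _ => le_rfl⟩,
    ?_, ?_, ?_, ?_⟩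
  · intro x hx φ hφ hmin hg
    have h1 : ∀ᶠ y in 𝓝 x, φ y ≤ φ x := by
      have : 𝓝[closure Ω] x = 𝓝 x :=
        nhdsWithin_eq_nhds.2 (mem_of_superset (hop.mem_nhds hx) subset_closure)
      have h2 : ∀ᶠ y in 𝓝[closure Ω] x, 1 - φ x ≤ 1 - φ y := hmin
      rw [this] at h2
      exact h2.mono fun y hy => by linarith
    have h2 : fderiv ℝ φ x = 0 := IsLocalMax.fderiv_eq_zero (f := φ) h1
    exact absurd (by rw [gradient, h2, map_zero]) hg
  · intro x hx k hev
    rw [hk x (subset_closure hx) k hev]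
    have := hcK x (subset_closure hx)
    simp only [abs_one, Real.one_rpow]
    linarith
  · intro x hx φ hφ hmin hg
    refine le_max_of_le_right ?_
    have h2 : ∀ᶠ y in 𝓝[closure Ω] x, 1 - φ x ≤ 1 - φ y := hmin
    exact inner_gradient_nonneg_of_frontier hρ (hφ.differentiable (by norm_num)) hx
      (h2.mono fun y hy => by linarith)
  · intro x hx k hev
    refine le_max_of_le_right ?_
    simp [BNeu]

lemma usc_neg_mul {s : Set (EN N)} {v : EN N → ℝ} (hv : LowerSemicontinuousOn v s) {τ : ℝ}
    (hτ : 0 < τ) : UpperSemicontinuousOn (fun x => -(τ * v x)) s := by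
  intro x hx r hr
  have h1 : -r / τ < v x := by rw [div_lt_iff₀ hτ]; linarith
  filter_upwards [hv x hx _ h1] with z hz
  have h2 := (div_lt_iff₀ hτ).1 hz
  linarith

/-- An upper semicontinuous function positive at some point can be touched from above by a
positive multiple of a bounded positive lower semicontinuous function. -/
lemma exists_touching_multiple {s : Set (EN N)} (hs : IsCompact s) {u v : EN N → ℝ}
    (hu : UpperSemicontinuousOn u s) (hv : LowerSemicontinuousOn v s) (hv0 : ∀ x ∈ s, 0 < v x)
    {M : ℝ} (hM : ∀ x ∈ s, v x ≤ M) {x₁ : EN N} (hx₁ : x₁ ∈ s) (hux₁ : 0 < u x₁) :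
    ∃ τ : ℝ, 0 < τ ∧ (∀ x ∈ s, u x + -(τ * v x) ≤ 0) ∧ ∃ x₀ ∈ s, u x₀ + -(τ * v x₀) = 0 := by
  have hne : s.Nonempty := ⟨x₁, hx₁⟩
  have hM0 : 0 < M := (hv0 x₁ hx₁).trans_le (hM x₁ hx₁)
  obtain ⟨y, hy, hymin⟩ := hv.exists_isMinOn hne hs
  obtain ⟨w, hw, hwmax⟩ := hu.exists_isMaxOn hne hs
  have hvy := hv0 y hy
  have huw : 0 < u w := hux₁.trans_le (hwmax hx₁)
  set S : Set ℝ := {t | 0 ≤ t ∧ ∀ x ∈ s, u x ≤ t * v x} with hS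
  have hSne : S.Nonempty := by
    refine ⟨u w / v y, by positivity, fun x hx => ?_⟩
    calc u x ≤ u w := hwmax hx
      _ = u w / v y * v y := by field_simp
      _ ≤ u w / v y * v x := by
        have := hymin hx
        have h0 : 0 ≤ u w / v y := by positivity
        exact mul_le_mul_of_nonneg_left this h0
  have hSb : BddBelow S := ⟨0, fun t ht => ht.1⟩
  have hτx : ∀ x ∈ s, u x ≤ sInf S * v x := by
    intro x hx
    rw [← div_le_iff₀ (hv0 x hx)]
    exact le_csInf hSne fun t ht => (div_le_iff₀ (hv0 x hx)).2 (ht.2 x hx)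
  have hτ : 0 < sInf S := by
    have := hτx x₁ hx₁
    exact pos_of_mul_pos_left (hux₁.trans_le this) (hv0 x₁ hx₁).le
  set τ := sInf S with hτdef
  have husc : UpperSemicontinuousOn (fun x => u x + -(τ * v x)) s :=
    hu.add (usc_neg_mul hv hτ)
  obtain ⟨x₀, hx₀, hmax⟩ := husc.exists_isMaxOn hne hs
  refine ⟨τ, hτ, fun x hx => by linarith [hτx x hx], x₀, hx₀, ?_⟩
  refine le_antisymm (by linarith [hτx x₀ hx₀]) ?_
  by_contra hcon
  push Not at hcon
  set δ := min τ (-(u x₀ + -(τ * v x₀)) / M) with hδ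
  have hδ0 : 0 < δ := lt_min hτ (div_pos (by linarith) hM0)
  have hδM : δ * M ≤ -(u x₀ + -(τ * v x₀)) := by
    rw [← le_div_iff₀ hM0]; exact min_le_right _ _
  have hmem : τ - δ ∈ S := by
    refine ⟨sub_nonneg.2 (min_le_left _ _), fun x hx => ?_⟩
    have h1 : u x + -(τ * v x) ≤ u x₀ + -(τ * v x₀) := hmax hx
    have h2 := mul_le_mul_of_nonneg_left (hM x hx) hδ0.le
    linarith
  have := csInf_le hSb hmem
  linarith

end Conclusion

/-- Theorem `maxpneum`: the maximum principle holds for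
`G(x,u,Du,D²u) + λ|u|^α u` with the Neumann boundary condition, for every `λ < λ̄`. -/
theorem stmt7 {N : ℕ} (Ω : Set (EN N)) (nv : EN N → EN N) (hΩ : IsC2Domain Ω nv)
    (α a A C₁ θ C₂ ν : ℝ) (hα : -1 < α)
    (F : EN N → EN N → Mat N → ℝ)
    (hF1 : CondF1 Ω α F) (hF2 : CondF2 Ω α a A F)
    (hF3 : CondF3 Ω α C₁ θ F) (hF4 : CondF4 Ω α C₂ ν F)
    (b : EN N → EN N) (c : EN N → ℝ)
    (hbc : ContinuousOn b (closure Ω)) (hcc : ContinuousOn c (closure Ω))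
    (lam : ℝ) (hlam : lam < sSup (lamBarSet Ω nv F b c α))
    (u : EN N → ℝ) (husc : UpperSemicontinuousOn u (closure Ω))
    (hsub : IsSubSol Ω F b α (fun x r => (c x + lam) * |r| ^ α * r) (fun _ => 0) (BNeu nv) u) :
    ∀ x ∈ closure Ω, u x ≤ 0 := by
  intro x₁ hx₁
  by_contra hux₁
  push Not at hux₁
  obtain ⟨lam', hlam', hlt⟩ := exists_lt_of_lt_csSup (lamBarSet_nonempty hΩ F b hcc) hlam
  obtain ⟨v, hvlsc, hv0, ⟨M, hM⟩, hsup⟩ := hlam'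
  obtain ⟨hop, hconn, hbd, ρ, hρ⟩ := hΩ
  have hcpt : IsCompact (closure Ω) := Metric.isCompact_of_isClosed_isBounded isClosed_closure
    hbd.closure
  obtain ⟨τ, hτ, hle, x₀, hx₀, hx₀e⟩ :=
    exists_touching_multiple hcpt husc hvlsc hv0 hM hx₁ hux₁
  have hzero : ∀ l : ℝ, ContinuousOn (fun z : EN N × ℝ => (c z.1 + l) * |z.2| ^ α * z.2)
      (closure Ω ×ˢ univ) := by
    intro l
    have h1 : ContinuousOn (fun z : EN N × ℝ => c z.1 + l) (closure Ω ×ˢ univ) :=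
      (hcc.comp continuousOn_fst fun z hz => hz.1).add continuousOn_const
    have h2 : Continuous fun z : EN N × ℝ => ‖z.2‖ ^ α • z.2 :=
      (continuous_norm_rpow_smul (E := ℝ) hα).comp continuous_snd
    refine (h1.mul h2.continuousOn).congr fun z _ => ?_
    simp only [Pi.mul_apply, smul_eq_mul, Real.norm_eq_abs, mul_assoc]
  have hP : PairData Ω ρ α a A C₁ θ C₂ ν (fun x p T => F x p (matOf T)) b
      (fun x r => (c x + lam) * |r| ^ α * r) (fun x r => (c x + lam') * |r| ^ α * r) u
      (fun x => -(τ * v x)) :=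
    { ell := ellOp_of_conds hF1 hF2 hF3 hF4
      hα := hα
      isOpen := hop
      bdd := hbd
      hρ := by
        have : Continuous (fderiv ℝ ρ) := hρ.1.continuous_fderiv (by norm_num)
        exact (InnerProductSpace.toDual ℝ (EN N)).symm.continuous.comp this
      hb := hbc
      hc₁ := hzero lam
      hc₂ := hzero lam'
      usc₁ := husc
      usc₂ := usc_neg_mul hvlsc hτ
      jet₁ := jetSub_of_isSubSol hop hρ hsub
      jet₂ := jetSub_of_isSuperSol hop hρ hF1 hsup hτ }
  -- a degree large enough for the penalty to be admissible in the degenerate case `x = y`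
  obtain ⟨k, hk⟩ := exists_nat_gt (1 / (α + 1))
  have hα1 : 0 < α + 1 := by linarith
  have hkα : 1 < k * (α + 1) := by rwa [div_lt_iff₀ hα1] at hk
  set n : ℕ := k + 2 with hn
  have hn1 : (1 : ℝ) ≤ n := by exact_mod_cast (by omega : 1 ≤ k + 2)
  have hnα : 1 < (2 * (n : ℝ) - 1) * (α + 1) := by
    refine hkα.trans_le (mul_le_mul_of_nonneg_right ?_ hα1.le)
    have : (0 : ℝ) ≤ k := by positivity
    rw [hn]; push_cast; linarith
  obtain ⟨σ, dσ, C, hB⟩ := exists_barrier hbd hρ n (by positivity)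
  obtain ⟨z, hz, hzU, hfin⟩ := doubling hP hn1 hB (n := n) (by omega) le_rfl hnα hle hx₀ hx₀e
  have hvz := hv0 z hz
  have hU : u z = τ * v z := by linarith
  have hpos : 0 < τ * v z := by positivity
  simp only [hU, abs_neg, abs_of_pos hpos] at hfin
  have hpw : 0 < (τ * v z) ^ α * (τ * v z) := by positivity
  have : 0 < (lam' - lam) * ((τ * v z) ^ α * (τ * v z)) := mul_pos (by linarith) hpw
  linarith
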